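/- There exists a family of total Boolean functions f (one for each input size, with input size growing to infinity) such that Q(f) ≥ adeg(f)^{4−o(1)}, i.e., the bounded-error quantum query complexity of f is at least the (4−o(1))-th power of its approximate polynomial degree. -/

import Mathlib

open scoped BigOperators ENNReal

namespace QC

/-! ### Inputs and partial functions -/

/-- An input assigns to each index `i` a symbol from the alphabet `Fin (α i)`. -/
abbrev Input (ι : Type) (α : ι → ℕ) := ∀ i : ι, Fin (α i)

/-- A (possibly partial) Boolean-valued query function; `none` means the input
is outside the promise/domain. -/
abbrev PartialFn (ι : Type) (α : ι → ℕ) := Input ι α → Option Bool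

/-- A total function has every input in its domain. -/
def TotalFn {ι : Type} {α : ι → ℕ} (f : PartialFn ι α) : Prop := ∀ x, f x ≠ none

/-- Classical truth value of a proposition, as a `Bool`. -/
noncomputable def ofProp (P : Prop) : Bool := @decide P (Classical.propDecidable P)

/-! ### Decision trees and classical query complexity -/

/-- Decision trees over index set `ι` with alphabets `α` and leaf labels `L`. -/
inductive DTree (ι : Type) (α : ι → ℕ) (L : Type) : Type
  | leaf : L → DTree ι α L
  | node : (i : ι) → (Fin (α i) → DTree ι α L) → DTree ι α L

namespace DTree

variable {ι : Type} {α : ι → ℕ} {L : Type}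

/-- Evaluate a decision tree on an input. -/
def eval : DTree ι α L → Input ι α → L
  | leaf b, _ => b
  | node i child, x => eval (child (x i)) x

/-- The number of queries the tree makes on a given input. -/
def cost : DTree ι α L → Input ι α → ℕ
  | leaf _, _ => 0
  | node i child, x => cost (child (x i)) x + 1

/-- The depth (worst-case number of queries) of a decision tree. -/
def depth : DTree ι α L → ℕ
  | leaf _ => 0
  | node _ child => (Finset.univ.sup fun a => depth (child a)) + 1

end DTree

variable {ι : Type} {α : ι → ℕ}

/-- Deterministic query complexity `D(f)`. -/
noncomputable def Dq (f : PartialFn ι α) : ℕ :=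
  sInf {d | ∃ T : DTree ι α (Option Bool), T.depth ≤ d ∧
    ∀ x b, f x = some b → T.eval x = some b}

/-- Bounded-error randomized query complexity `R(f)` (worst-case queries,
success probability at least 2/3 on every domain input). -/
noncomputable def Rq (f : PartialFn ι α) : ℕ :=
  sInf {d | ∃ μ : PMF (DTree ι α (Option Bool)),
    (∀ T ∈ μ.support, T.depth ≤ d) ∧
    ∀ x b, f x = some b → 2/3 ≤ μ.toOuterMeasure {T | T.eval x = some b}}

/-- Zero-error randomized query complexity `R₀(f)` (worst-case queries): the
algorithm never errs, and outputs `none` ("don't know") with probability at most 1/2. -/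
noncomputable def R0q (f : PartialFn ι α) : ℕ :=
  sInf {d | ∃ μ : PMF (DTree ι α (Option Bool)),
    (∀ T ∈ μ.support, T.depth ≤ d) ∧
    (∀ T ∈ μ.support, ∀ x b, f x = some b → T.eval x = some b ∨ T.eval x = none) ∧
    ∀ x b, f x = some b → μ.toOuterMeasure {T | T.eval x = none} ≤ 1/2}

/-- Zero-error randomized query complexity, measured by the worst-case *expected*
number of queries over domain inputs (value in `ℝ≥0∞`). -/
noncomputable def R0expq (f : PartialFn ι α) : ℝ≥0∞ :=
  sInf {c | ∃ μ : PMF (DTree ι α (Option Bool)),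
    (∀ T ∈ μ.support, ∀ x b, f x = some b → T.eval x = some b ∨ T.eval x = none) ∧
    (∀ x b, f x = some b → μ.toOuterMeasure {T | T.eval x = none} ≤ 1/2) ∧
    (∀ x b, f x = some b → ∑' T, μ T * (T.cost x : ℝ≥0∞) ≤ c)}

/-- One-sided-error randomized query complexity `R₁(f)`: accept every 1-input with
probability at least 2/3, and never accept a 0-input. -/
noncomputable def R1q (f : PartialFn ι α) : ℕ :=
  sInf {d | ∃ μ : PMF (DTree ι α (Option Bool)),
    (∀ T ∈ μ.support, T.depth ≤ d) ∧
    (∀ x, f x = some true → 2/3 ≤ μ.toOuterMeasure {T | T.eval x = some true}) ∧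
    (∀ x, f x = some false → ∀ T ∈ μ.support, T.eval x ≠ some true)}

/-! ### Quantum query complexity -/

/-- The index set of the state space of a quantum query algorithm:
a query register `Σ i, Fin (α i)` together with a workspace register `Fin W`. -/
abbrev QIdx (ι : Type) (α : ι → ℕ) (W : ℕ) := (Σ i : ι, Fin (α i)) × Fin W

variable [Fintype ι] [DecidableEq ι]

/-- The standard query oracle for input `x`: the permutation matrix sending the basis
vector `|i,a⟩|w⟩` to `|i, a + x i⟩|w⟩` (addition modulo `α i`). -/
noncomputable def oracleMatrix (W : ℕ) (x : Input ι α) :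
    Matrix (QIdx ι α W) (QIdx ι α W) ℂ :=
  Matrix.of fun j j' =>
    if j.2 = j'.2 ∧ j.1 = ⟨j'.1.1, j'.1.2 + x j'.1.1⟩ then 1 else 0

/-- The product `U_T · O · U_{T-1} · O ⋯ O · U_0` of unitaries interleaved with oracle
calls, defining a `T`-query quantum algorithm. -/
noncomputable def qProd {τ : Type} [Fintype τ] (U : ℕ → Matrix τ τ ℂ) (Ox : Matrix τ τ ℂ) :
    ℕ → Matrix τ τ ℂ
  | 0 => U 0
  | t + 1 => U (t + 1) * Ox * qProd U Ox t

/-- A quantum query algorithm: a number `T` of queries, a workspace size `W`,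
unitaries `U 0, …, U T`, a unit initial state, and a measurement assigning to each
basis state an output in `Option Bool` (`none` = "don't know"). -/
structure QAlg (ι : Type) [Fintype ι] [DecidableEq ι] (α : ι → ℕ) where
  T : ℕ
  W : ℕ
  U : ℕ → Matrix (QIdx ι α W) (QIdx ι α W) ℂ
  unitary : ∀ t, U t ∈ Matrix.unitaryGroup (QIdx ι α W) ℂ
  init : QIdx ι α W → ℂ
  init_norm : ∑ j, ‖init j‖ ^ 2 = 1
  out : QIdx ι α W → Option Bool

/-- The final state of a quantum algorithm on input `x`. -/
noncomputable def QAlg.finalState (A : QAlg ι α) (x : Input ι α) : QIdx ι α A.W → ℂ :=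
  (qProd A.U (oracleMatrix A.W x) A.T).mulVec A.init

/-- The probability that the algorithm outputs `v` on input `x`. -/
noncomputable def QAlg.outProb (A : QAlg ι α) (x : Input ι α) (v : Option Bool) : ℝ :=
  ∑ j, if A.out j = v then ‖A.finalState x j‖ ^ 2 else 0

/-- Bounded-error quantum query complexity `Q(f)`. -/
noncomputable def Qq (f : PartialFn ι α) : ℕ :=
  sInf {d | ∃ A : QAlg ι α, A.T ≤ d ∧
    ∀ x b, f x = some b → (2 : ℝ)/3 ≤ A.outProb x (some b)}

/-- Exact quantum query complexity `Q_E(f)`. -/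
noncomputable def QEq (f : PartialFn ι α) : ℕ :=
  sInf {d | ∃ A : QAlg ι α, A.T ≤ d ∧
    ∀ x b, f x = some b → A.outProb x (some b) = 1}

/-- One-sided-error quantum query complexity `Q₁(f)`. -/
noncomputable def Q1q (f : PartialFn ι α) : ℕ :=
  sInf {d | ∃ A : QAlg ι α, A.T ≤ d ∧
    (∀ x, f x = some true → (2 : ℝ)/3 ≤ A.outProb x (some true)) ∧
    (∀ x, f x = some false → A.outProb x (some true) = 0)}

/-- Zero-error quantum query complexity `Q₀(f)`: never wrong, outputs `none`
with probability at most 1/2. -/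
noncomputable def Q0q (f : PartialFn ι α) : ℕ :=
  sInf {d | ∃ A : QAlg ι α, A.T ≤ d ∧
    ∀ x b, f x = some b → A.outProb x (some !b) = 0 ∧ A.outProb x none ≤ 1/2}

/-! ### Certificate complexity -/

/-- A partial assignment `ρ` is consistent with an input `x`. -/
def Consistent (ρ : ∀ i : ι, Option (Fin (α i))) (x : Input ι α) : Prop :=
  ∀ i v, ρ i = some v → x i = v

/-- The number of fixed positions of a partial assignment. -/
noncomputable def certSize (ρ : ∀ i : ι, Option (Fin (α i))) : ℕ :=
  Nat.card {i // (ρ i).isSome}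

/-- The certificate complexity of `f` at input `x`: the least size of a partial
assignment consistent with `x` forcing the value `f x` on all domain inputs. -/
noncomputable def CxAt (f : PartialFn ι α) (x : Input ι α) : ℕ :=
  sInf {s | ∃ ρ, Consistent ρ x ∧ (∀ y, Consistent ρ y → f y = none ∨ f y = f x) ∧
    certSize ρ ≤ s}

/-- Certificate complexity `C(f)`. -/
noncomputable def Cq (f : PartialFn ι α) : ℕ :=
  sSup {s | ∃ x, f x ≠ none ∧ s = CxAt f x}

/-- One-certificate complexity `C¹(f)`. -/
noncomputable def C1q (f : PartialFn ι α) : ℕ :=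
  sSup {s | ∃ x, f x = some true ∧ s = CxAt f x}

/-! ### Polynomial degree -/

/-- Exact polynomial degree `deg(f)`: least degree of a real polynomial agreeing
with `f` (as a 0/1 function of the numerical values of the input symbols) on its domain. -/
noncomputable def degq (f : PartialFn ι α) : ℕ :=
  sInf {d | ∃ p : MvPolynomial ι ℝ, p.totalDegree ≤ d ∧
    ∀ x b, f x = some b →
      MvPolynomial.eval (fun i => ((x i : ℕ) : ℝ)) p = if b then 1 else 0}

/-- Approximate polynomial degree `adeg(f)`: least degree of a real polynomial
approximating `f` pointwise to error 1/3 on its domain. -/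
noncomputable def adegq (f : PartialFn ι α) : ℕ :=
  sInf {d | ∃ p : MvPolynomial ι ℝ, p.totalDegree ≤ d ∧
    ∀ x b, f x = some b →
      |MvPolynomial.eval (fun i => ((x i : ℕ) : ℝ)) p - if b then 1 else 0| ≤ 1/3}

end QC
/-! ### Certifying functions and cheat sheets -/

namespace QC

variable {ι : Type} {α : ι → ℕ}

/-- `φ` is a certifying function for the partial function `f`: it accepts `(x, y)`
only when `x` is in the domain of `f` and the first bit of `y` equals `f x`; every
domain input has some accepted certificate `y`; and the all-zeros `y` is never accepted. -/
def IsCertifying {k : ℕ} (hk : 0 < k) (f : PartialFn ι α)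
    (φ : Input ι α → (Fin k → Fin 2) → Bool) : Prop :=
  (∀ x y, f x = none → φ x y = false) ∧
  (∀ x y b, f x = some b → y ⟨0, hk⟩ ≠ (if b then 1 else 0) → φ x y = false) ∧
  (∀ x b, f x = some b → ∃ y, φ x y = true) ∧
  (∀ x, φ x (fun _ => 0) = false)

/-- The index set of the input to a certifying function, viewed as a query function:
the original input together with `k` certificate bits. -/
abbrev CertIdx (ι : Type) (k : ℕ) := ι ⊕ Fin k

/-- Alphabets for `CertIdx`. -/
def certAlphabet (α : ι → ℕ) (k : ℕ) : CertIdx ι k → ℕ := Sum.elim α fun _ => 2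

/-- A certifying function viewed as a total query function on input ⊕ certificate bits. -/
def certFn {k : ℕ} (φ : Input ι α → (Fin k → Fin 2) → Bool) :
    PartialFn (CertIdx ι k) (certAlphabet α k) :=
  fun z => some (φ (fun i => z (Sum.inl i)) (fun q => z (Sum.inr q)))

/-- The index set of the input to the cheat sheet version of a function: `c` copies of
the original input, followed by `2^c` cells each holding `c` certificate strings of `k` bits. -/
abbrev CSIdx (ι : Type) (c k : ℕ) := (Fin c × ι) ⊕ (Fin (2 ^ c) × Fin c × Fin k)

/-- Alphabets for `CSIdx`. -/
def csAlphabet (α : ι → ℕ) (c k : ℕ) : CSIdx ι c k → ℕ :=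
  Sum.elim (fun p => α p.2) fun _ => 2

/-- The `i`-th copy of the original input inside a cheat sheet input. -/
def csX {c k : ℕ} (z : Input (CSIdx ι c k) (csAlphabet α c k)) (i : Fin c) : Input ι α :=
  fun p => z (Sum.inl (i, p))

/-- The `i`-th certificate string in the `ℓ`-th cheat sheet cell. -/
def csY {c k : ℕ} (z : Input (CSIdx ι c k) (csAlphabet α c k)) (ℓ : Fin (2 ^ c))
    (i : Fin c) : Fin k → Fin 2 :=
  fun q => z (Sum.inr (ℓ, i, q))

/-- The number in `[2^c]` whose binary representation is the bit string `b`. -/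
def binToFin (c : ℕ) (b : Fin c → Bool) : Fin (2 ^ c) :=
  ⟨(∑ i, if b i then 2 ^ (i : ℕ) else 0) % 2 ^ c, Nat.mod_lt _ (by positivity)⟩

/-- The defining condition of the cheat sheet function: all `c` copies lie in the
domain of `f`, and the cell addressed by their `f`-values holds certificates
accepted by `φ` for each copy. -/
def CSCond {c k : ℕ} (f : PartialFn ι α) (φ : Input ι α → (Fin k → Fin 2) → Bool)
    (z : Input (CSIdx ι c k) (csAlphabet α c k)) : Prop :=
  ∃ bvec : Fin c → Bool, (∀ i, f (csX z i) = some (bvec i)) ∧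
    ∀ i, φ (csX z i) (csY z (binToFin c bvec) i) = true

/-- The cheat sheet version of `f` with respect to the certifying function `φ`,
with `c` copies of `f`. It is a total function. -/
noncomputable def cheatSheet (c : ℕ) {k : ℕ} (f : PartialFn ι α)
    (φ : Input ι α → (Fin k → Fin 2) → Bool) :
    PartialFn (CSIdx ι c k) (csAlphabet α c k) :=
  fun z => some (ofProp (CSCond f φ z))

/-! ### OR / AND compositions -/

/-- The `OR` function on `m` bits (alphabet `Fin 2`). -/
def orFn (m : ℕ) (z : Fin m → Fin 2) : Fin 2 := if ∃ j, z j = 1 then 1 else 0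

/-- The `AND` function on `m` bits (alphabet `Fin 2`). -/
def andFn (m : ℕ) (z : Fin m → Fin 2) : Fin 2 := if ∀ j, z j = 1 then 1 else 0

/-- The composition `f ∘ OR_m`. -/
def composeOr {n : ℕ} (f : PartialFn (Fin n) fun _ => 2) (m : ℕ) :
    PartialFn (Fin n × Fin m) (fun _ => 2) :=
  fun z => f fun i => orFn m fun j => z (i, j)

/-- The composition `f ∘ AND_m ∘ OR_m`. -/
def composeAndOr {n : ℕ} (f : PartialFn (Fin n) fun _ => 2) (m : ℕ) :
    PartialFn (Fin n × Fin m × Fin m) (fun _ => 2) :=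
  fun z => f fun i => andFn m fun j => orFn m fun l => z (i, j, l)

/-! ### k-SUM, Block k-sum, BKK and its recursive composition -/

/-- The `k`-SUM function on `n` numbers from `[q]`: is there a set of `k` of the
input numbers summing to `0` modulo `q`? -/
noncomputable def kSUMfn (n q k : ℕ) : PartialFn (Fin n) (fun _ => q) :=
  fun x => some (ofProp (∃ S : Finset (Fin n), S.card = k ∧
    (∑ i ∈ S, (x i : ℕ)) % q = 0))

/-- Number of ones in a block of bits. -/
def onesCount {B : ℕ} (z : Fin B → Fin 2) : ℕ := (Finset.univ.filter fun j => z j = 1).card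

/-- The number encoded in binary by a block of bits. -/
def blockVal {B : ℕ} (z : Fin B → Fin 2) : ℕ := ∑ j, if z j = 1 then 2 ^ (j : ℕ) else 0

/-- A block is balanced if it has an equal number of 0s and 1s. -/
def isBalanced {B : ℕ} (z : Fin B → Fin 2) : Prop := 2 * onesCount z = B

/-- Block `k`-sum on `nb` blocks of `B` bits each: value 1 iff there are `k` balanced
blocks whose encoded numbers sum to 0 (mod `2^B`) and every other block has at least
as many 1s as 0s. -/
noncomputable def blockKSumBool (nb B k : ℕ) (z : Fin nb × Fin B → Fin 2) : Bool :=
  ofProp (∃ S : Finset (Fin nb), S.card = k ∧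
    (∀ i ∈ S, isBalanced fun j => z (i, j)) ∧
    (∑ i ∈ S, blockVal fun j => z (i, j)) % 2 ^ B = 0 ∧
    ∀ i ∉ S, B ≤ 2 * onesCount fun j => z (i, j))

/-- The Boolean version of `k`-SUM on `m` numbers of `w` bits each (mod `2^w`). -/
noncomputable def kSumBool (m w k : ℕ) (z : Fin m × Fin w → Fin 2) : Bool :=
  ofProp (∃ S : Finset (Fin m), S.card = k ∧
    (∑ i ∈ S, blockVal fun j => z (i, j)) % 2 ^ w = 0)

/-- Block size of the outer Block `k`-sum in `BKK` on (roughly) `n` outer bits. -/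
def bkkB (n k : ℕ) : ℕ := 10 * k * Nat.log 2 n
/-- Number of blocks of the outer Block `k`-sum in `BKK`. -/
def bkkNB (n k : ℕ) : ℕ := n / bkkB n k
/-- Bits per number of the inner Boolean `k`-SUM in `BKK`. -/
def bkkW (n k : ℕ) : ℕ := k * Nat.log 2 n
/-- Number of numbers of the inner Boolean `k`-SUM in `BKK`. -/
def bkkM (n k : ℕ) : ℕ := n / bkkW n k

/-- The index set of the inputs of `BKK_{n²,k}` (one inner `k`-SUM input bit for
each outer Block `k`-sum input bit; roughly `n²` bits in total). -/
abbrev BKKIdx (n k : ℕ) := (Fin (bkkNB n k) × Fin (bkkB n k)) × (Fin (bkkM n k) × Fin (bkkW n k))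

/-- `BKK_{n²,k}`: Block `k`-sum composed with the Boolean version of `k`-SUM. -/
noncomputable def bkkBool (n k : ℕ) (z : BKKIdx n k → Fin 2) : Bool :=
  blockKSumBool (bkkNB n k) (bkkB n k) k fun ob =>
    if kSumBool (bkkM n k) (bkkW n k) k (fun p => z (ob, p)) then 1 else 0

/-- `BKK_{n²,k}` as a total query function. -/
noncomputable def BKKfn (n k : ℕ) : PartialFn (BKKIdx n k) (fun _ => 2) :=
  fun z => some (bkkBool n k z)

/-- The `d`-fold self-composition of a total Boolean function `g`: a depth-`d` tree
each of whose internal nodes is a copy of `g`; input bits are indexed by root-to-leaf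
paths `Fin d → I`. -/
noncomputable def iterFn {I : Type} (g : (I → Fin 2) → Bool) :
    (d : ℕ) → ((Fin d → I) → Fin 2) → Bool
  | 0, z => decide (z (fun i => i.elim0) = 1)
  | d + 1, z => g fun a => if iterFn g d (fun v => z (Fin.cons a v)) then 1 else 0

/-- The recursion depth used for `RecBKK`: `d = (4/25)·log n / log log n`. -/
def recD (n : ℕ) : ℕ := 4 * Nat.log 2 n / (25 * Nat.log 2 (Nat.log 2 n))

/-- The index set of the inputs of `RecBKK`. -/
abbrev RecIdx (n : ℕ) := Fin (recD n) → BKKIdx n (Nat.log 2 n)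

/-- `RecBKK`: the `recD n`-fold self-composition of `BKK` with `k = log n`. -/
noncomputable def RecBKKfn (n : ℕ) : PartialFn (RecIdx n) (fun _ => 2) :=
  fun z => some (iterFn (bkkBool n (Nat.log 2 n)) (recD n) z)

/-- The nominal input size `N = n^{2d}` of `RecBKK`. -/
def recN (n : ℕ) : ℕ := n ^ (2 * recD n)

end QC

/-!
Let `F` be the `4 * κ`-fold composition with itself of the negated block `k`-sum function with
`k = 2 * κ` blocks of `n = x ^ (k + 1)` words of `O(log x)` bits each. The adversary bound of one
level is about `x ^ k`, and it is multiplicative under composition, which gives `x ^ (8 * κ ^ 2)`.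
On the other hand each value of `F` has a certificate that is checked by about
`n ^ (2 * κ) = x ^ (4 * κ ^ 2 + 2 * κ)` tests of polynomial degree about `n`: up to logarithmic
factors two consecutive levels only cost a factor `n`, because one of the two values of a level is
certified by a single word from each block.

The cheat sheet function of `F` takes many inputs of `F` together with a table of cells, and asks
whether the cell addressed by the values of these inputs holds certificates for all of them. It
still needs `x ^ (8 * κ ^ 2)` quantum queries up to a constant, since without the values of the
inputs the right cell cannot be found. A sum of amplified Chebyshev polynomials over the cells,
however, approximates it in degree about the square root of the number of tests of one cell times
their degree, which is `x ^ (2 * κ ^ 2 + O(κ))`. The ratio of the exponents tends to `4` with `κ`.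
-/

namespace QC

/-! ### Operator norm bounds -/

/-- The real matrix `A` has `ℓ²` operator norm at most `b`. The bound is stated through the bilinear
form, which for `0 ≤ b` is equivalent by scaling `p` against `q`. -/
def OpNormLE {R C : Type*} [Fintype R] [Fintype C] (A : Matrix R C ℝ) (b : ℝ) : Prop :=
  ∀ (p : R → ℝ) (q : C → ℝ),
    2 * ∑ r, ∑ c, A r c * (p r * q c) ≤ b * (∑ r, p r ^ 2 + ∑ c, q c ^ 2)

lemma isCompact_setOf_sum_sq_eq_one (R : Type*) [Fintype R] :
    IsCompact {p : R → ℝ | ∑ r, p r ^ 2 = 1} := by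
  convert (isCompact_sphere (0 : EuclideanSpace ℝ R) 1).image (PiLp.continuous_ofLp 2 fun _ => ℝ)
  ext p
  simp [(WithLp.toLp_surjective 2).exists, EuclideanSpace.norm_eq]

namespace OpNormLE

variable {R C : Type*} [Fintype R] [Fintype C] {A : Matrix R C ℝ} {b : ℝ}

lemma mono {b' : ℝ} (h : OpNormLE A b) (hb : b ≤ b') : OpNormLE A b' := fun p q =>
  (h p q).trans (mul_le_mul_of_nonneg_right hb (by positivity))

protected lemma zero (hb : 0 ≤ b) : OpNormLE (0 : Matrix R C ℝ) b := fun p q => by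
  simp only [Matrix.zero_apply, zero_mul, Finset.sum_const_zero, mul_zero]
  positivity

lemma neg (h : OpNormLE A b) : OpNormLE (-A) b := fun p q => by
  simpa using h (-p) q

lemma smul (h : OpNormLE A b) {s : ℝ} (hs : 0 ≤ s) : OpNormLE (s • A) (s * b) := fun p q => by
  have := mul_le_mul_of_nonneg_left (h p q) hs
  simp only [Matrix.smul_apply, smul_eq_mul, mul_assoc, ← Finset.mul_sum] at this ⊢
  linarith

lemma transpose (h : OpNormLE A b) : OpNormLE A.transpose b := fun p q => by
  rw [Finset.sum_comm, add_comm (∑ r, p r ^ 2)]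
  simpa only [Matrix.transpose_apply, mul_comm (p _)] using h q p

lemma sum_inner_le {σ : Type*} [Fintype σ] (h : OpNormLE A b) (p : R → σ → ℝ) (q : C → σ → ℝ) :
    2 * ∑ r, ∑ c, A r c * ∑ s, p r s * q c s ≤
      b * (∑ r, ∑ s, p r s ^ 2 + ∑ c, ∑ s, q c s ^ 2) := by
  have hform : ∑ r, ∑ c, A r c * ∑ s, p r s * q c s = ∑ s, ∑ r, ∑ c, A r c * (p r s * q c s) := by
    simp_rw [Finset.mul_sum]
    rw [Finset.sum_comm (s := (Finset.univ : Finset σ))]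
    exact Finset.sum_congr rfl fun r _ => Finset.sum_comm
  rw [hform, Finset.sum_comm (γ := R), Finset.sum_comm (γ := C), Finset.mul_sum,
    ← Finset.sum_add_distrib, Finset.mul_sum]
  exact Finset.sum_le_sum fun s _ => h (p · s) (q · s)

lemma of_unit_vectors (hb : 0 ≤ b) (h : ∀ (p : R → ℝ) (q : C → ℝ), ∑ r, p r ^ 2 = 1 →
    ∑ c, q c ^ 2 = 1 → ∑ r, ∑ c, A r c * (p r * q c) ≤ b) : OpNormLE A b := by
  intro p q
  rcases (Finset.sum_nonneg fun r _ => sq_nonneg (p r)).eq_or_lt' with hp | hp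
  · obtain rfl : p = 0 := funext fun r => by
      simpa using (Finset.sum_eq_zero_iff_of_nonneg fun r _ => sq_nonneg (p r)).1 hp r
        (Finset.mem_univ r)
    simpa using mul_nonneg hb (Finset.sum_nonneg fun c _ => sq_nonneg (q c))
  rcases (Finset.sum_nonneg fun c _ => sq_nonneg (q c)).eq_or_lt' with hq | hq
  · obtain rfl : q = 0 := funext fun c => by
      simpa using (Finset.sum_eq_zero_iff_of_nonneg fun c _ => sq_nonneg (q c)).1 hq c
        (Finset.mem_univ c)
    simpa using mul_nonneg hb (Finset.sum_nonneg fun r _ => sq_nonneg (p r))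
  set s := √(∑ r, p r ^ 2)
  set t := √(∑ c, q c ^ 2)
  have hs_pos : 0 < s := Real.sqrt_pos.2 hp
  have ht_pos : 0 < t := Real.sqrt_pos.2 hq
  have hs_sq : ∑ r, p r ^ 2 = s ^ 2 := (Real.sq_sqrt hp.le).symm
  have ht_sq : ∑ c, q c ^ 2 = t ^ 2 := (Real.sq_sqrt hq.le).symm
  have hunit := h (s⁻¹ • p) (t⁻¹ • q)
    (by simp [mul_pow, ← Finset.mul_sum, hs_sq, hs_pos.ne'])
    (by simp [mul_pow, ← Finset.mul_sum, ht_sq, ht_pos.ne'])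
  have hform : ∑ r, ∑ c, A r c * ((s⁻¹ • p) r * (t⁻¹ • q) c) =
      (s * t)⁻¹ * ∑ r, ∑ c, A r c * (p r * q c) := by
    simp only [Pi.smul_apply, smul_eq_mul, Finset.mul_sum, mul_inv]
    exact Finset.sum_congr rfl fun r _ => Finset.sum_congr rfl fun c _ => by ring
  rw [hform, inv_mul_le_iff₀ (by positivity)] at hunit
  rw [hs_sq, ht_sq]
  nlinarith [mul_nonneg hb (sq_nonneg (s - t))]

lemma exists_attained (Γ : Matrix R C ℝ) {p₀ : R → ℝ} {q₀ : C → ℝ} (hp₀ : ∑ r, p₀ r ^ 2 = 1)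
    (hq₀ : ∑ c, q₀ c ^ 2 = 1) (h₀ : 0 ≤ ∑ r, ∑ c, Γ r c * (p₀ r * q₀ c)) :
    ∃ (p : R → ℝ) (q : C → ℝ), ∑ r, p r ^ 2 = 1 ∧ ∑ c, q c ^ 2 = 1 ∧
      ∑ r, ∑ c, Γ r c * (p₀ r * q₀ c) ≤ ∑ r, ∑ c, Γ r c * (p r * q c) ∧
      OpNormLE Γ (∑ r, ∑ c, Γ r c * (p r * q c)) := by
  obtain ⟨⟨p, q⟩, ⟨hp, hq⟩, hmax⟩ := ((isCompact_setOf_sum_sq_eq_one R).prod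
    (isCompact_setOf_sum_sq_eq_one C)).exists_isMaxOn ⟨(p₀, q₀), hp₀, hq₀⟩
    (f := fun z => ∑ r, ∑ c, Γ r c * (z.1 r * z.2 c)) (by fun_prop)
  have h₀_le := hmax (show (p₀, q₀) ∈ _ from ⟨hp₀, hq₀⟩)
  exact ⟨p, q, hp, hq, h₀_le, of_unit_vectors (h₀.trans h₀_le) fun p' q' hp' hq' =>
    hmax (show (p', q') ∈ _ from ⟨hp', hq'⟩)⟩

lemma of_sum_sq_mulVec_le (hb : 0 < b)
    (h : ∀ v : C → ℝ, ∑ r, (∑ c, A r c * v c) ^ 2 ≤ b ^ 2 * ∑ c, v c ^ 2) : OpNormLE A b := by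
  intro p q
  have hrow : ∀ r, 2 * ∑ c, A r c * (p r * q c) ≤ b * p r ^ 2 + b⁻¹ * (∑ c, A r c * q c) ^ 2 := by
    intro r
    have hsq : 0 ≤ b⁻¹ * (b * p r - ∑ c, A r c * q c) ^ 2 := by positivity
    have hexpand : b⁻¹ * (b * p r - ∑ c, A r c * q c) ^ 2 =
        b * p r ^ 2 + b⁻¹ * (∑ c, A r c * q c) ^ 2 - 2 * (p r * ∑ c, A r c * q c) := by
      field_simp
      ring
    simp only [mul_left_comm _ (p r), ← Finset.mul_sum]
    linarith
  calc 2 * ∑ r, ∑ c, A r c * (p r * q c)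
      ≤ ∑ r, (b * p r ^ 2 + b⁻¹ * (∑ c, A r c * q c) ^ 2) := by
        rw [Finset.mul_sum]
        exact Finset.sum_le_sum fun r _ => hrow r
    _ ≤ b * ∑ r, p r ^ 2 + b⁻¹ * (b ^ 2 * ∑ c, q c ^ 2) := by
        rw [Finset.sum_add_distrib, ← Finset.mul_sum, ← Finset.mul_sum]
        gcongr
        exact h q
    _ = b * (∑ r, p r ^ 2 + ∑ c, q c ^ 2) := by
        field_simp

lemma submatrix (h : OpNormLE A b) {R' C' : Type*} [Fintype R'] [Fintype C'] {f : R' → R}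
    {g : C' → C} (hf : Function.Injective f) (hg : Function.Injective g) :
    OpNormLE (A.submatrix f g) b := by
  intro p q
  have hp : ∀ r, r ∉ Set.range f → Function.extend f p 0 r = 0 := fun r hr =>
    Function.extend_apply' _ _ _ fun ⟨a, ha⟩ => hr ⟨a, ha⟩
  have hq : ∀ c, c ∉ Set.range g → Function.extend g q 0 c = 0 := fun c hc =>
    Function.extend_apply' _ _ _ fun ⟨a, ha⟩ => hc ⟨a, ha⟩
  have hp_sq : ∑ r, p r ^ 2 = ∑ r, Function.extend f p 0 r ^ 2 :=
    Fintype.sum_of_injective f hf _ _ (fun r hr => by simp [hp r hr])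
      (fun r => by rw [hf.extend_apply])
  have hq_sq : ∑ c, q c ^ 2 = ∑ c, Function.extend g q 0 c ^ 2 :=
    Fintype.sum_of_injective g hg _ _ (fun c hc => by simp [hq c hc])
      (fun c => by rw [hg.extend_apply])
  have hform : ∑ r, ∑ c, A.submatrix f g r c * (p r * q c) =
      ∑ r, ∑ c, A r c * (Function.extend f p 0 r * Function.extend g q 0 c) := by
    refine Fintype.sum_of_injective f hf _ _ (fun r hr => by simp [hp r hr]) fun r => ?_
    refine Fintype.sum_of_injective g hg _ _ (fun c hc => by simp [hq c hc]) fun c => ?_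
    rw [hf.extend_apply, hg.extend_apply, Matrix.submatrix_apply]
  rw [hp_sq, hq_sq, hform]
  exact h _ _

lemma restrict_rows (h : OpNormLE A b) (hb : 0 ≤ b) (s : R → Bool) :
    OpNormLE (Matrix.of fun r c => if s r then A r c else 0) b := by
  intro p q
  have hform : ∑ r, ∑ c, (if s r then A r c else 0) * (p r * q c) =
      ∑ r, ∑ c, A r c * ((if s r then p r else 0) * q c) :=
    Finset.sum_congr rfl fun r _ => Finset.sum_congr rfl fun c _ => by split_ifs <;> simp
  have hsq : ∑ r, (if s r then p r else 0) ^ 2 ≤ ∑ r, p r ^ 2 :=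
    Finset.sum_le_sum fun r _ => by
      split_ifs
      · exact le_rfl
      · simpa using sq_nonneg (p r)
  simp only [Matrix.of_apply, hform]
  exact (h _ q).trans (by gcongr)

lemma bicolor (h : OpNormLE A b) (α : R → Bool) (β : C → Bool) :
    OpNormLE (Matrix.of fun r c => if α r = β c then 0 else A r c) b := by
  intro p q
  have htf := h (fun r => if α r then p r else 0) (fun c => if β c then 0 else q c)
  have hft := h (fun r => if α r then 0 else p r) (fun c => if β c then q c else 0)
  have hp : ∑ r, (if α r then p r else 0) ^ 2 + ∑ r, (if α r then 0 else p r) ^ 2 =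
      ∑ r, p r ^ 2 := by
    rw [← Finset.sum_add_distrib]
    exact Finset.sum_congr rfl fun r _ => by cases α r <;> simp
  have hq : ∑ c, (if β c then 0 else q c) ^ 2 + ∑ c, (if β c then q c else 0) ^ 2 =
      ∑ c, q c ^ 2 := by
    rw [← Finset.sum_add_distrib]
    exact Finset.sum_congr rfl fun c _ => by cases β c <;> simp
  have hform : ∑ r, ∑ c, A r c * ((if α r then p r else 0) * (if β c then 0 else q c)) +
      ∑ r, ∑ c, A r c * ((if α r then 0 else p r) * (if β c then q c else 0)) =
      ∑ r, ∑ c, (if α r = β c then 0 else A r c) * (p r * q c) := by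
    simp only [← Finset.sum_add_distrib]
    refine Finset.sum_congr rfl fun r _ => Finset.sum_congr rfl fun c _ => ?_
    cases α r <;> cases β c <;> simp
  simp only [Matrix.of_apply]
  rw [← hp, ← hq, ← hform]
  linarith

end OpNormLE

/-! ### The adversary lower bound -/

/-- The part of the matrix `K` supported on the pairs of inputs `X r`, `Y c` that differ at
position `i`. -/
def diffPart {I R C : Type*} {β : I → Type*} [∀ i, DecidableEq (β i)] (X : R → ∀ i, β i)
    (Y : C → ∀ i, β i) (K : Matrix R C ℝ) (i : I) : Matrix R C ℝ :=
  Matrix.of fun r c => if X r i = Y c i then 0 else K r c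

/-- `K` is an adversary matrix between the inputs `X` and the inputs `Y`, normalised to have
operator norm `1`, attained at the unit vectors `u` and `v`; each of its difference patterns has
norm at most `μ`. In the usual normalisation the adversary value it certifies is `1 / μ`. -/
structure IsAdversary {I R C : Type*} [Fintype R] [Fintype C] {β : I → Type*}
    [∀ i, DecidableEq (β i)] (X : R → ∀ i, β i) (Y : C → ∀ i, β i) (K : Matrix R C ℝ)
    (u : R → ℝ) (v : C → ℝ) (μ : ℝ) : Prop where
  opNormLE : OpNormLE K 1
  sum_sq_left : ∑ r, u r ^ 2 = 1
  sum_sq_right : ∑ c, v c ^ 2 = 1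
  attained : ∑ r, ∑ c, K r c * (u r * v c) = 1
  diffPart_le : ∀ i, OpNormLE (diffPart X Y K i) μ

/-- The real part of the standard Hermitian inner product. -/
def reInner {τ : Type*} [Fintype τ] (a b : τ → ℂ) : ℝ := (star a ⬝ᵥ b).re

/-- The progress measure of the adversary method, for families of states `p`, `q` into which the
weights of the adversary vectors have been absorbed. -/
def progress {R C τ : Type*} [Fintype R] [Fintype C] [Fintype τ] (K : Matrix R C ℝ)
    (p : R → τ → ℂ) (q : C → τ → ℂ) : ℝ := ∑ r, ∑ c, K r c * reInner (p r) (q c)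

section InnerProduct

variable {R C τ : Type*} [Fintype R] [Fintype C] [Fintype τ]

lemma reInner_eq_sum (a b : τ → ℂ) :
    reInner a b = ∑ j, ((a j).re * (b j).re + (a j).im * (b j).im) := by
  simp [reInner, dotProduct]

lemma reInner_self (a : τ → ℂ) : reInner a a = ∑ j, ‖a j‖ ^ 2 := by
  simp [reInner_eq_sum, Complex.sq_norm, Complex.normSq_apply]

lemma reInner_smul_smul (s t : ℝ) (a b : τ → ℂ) :
    reInner (s • a) (t • b) = s * t * reInner a b := by
  simp only [reInner_eq_sum, Pi.smul_apply, Complex.smul_re, Complex.smul_im, smul_eq_mul,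
    Finset.mul_sum]
  exact Finset.sum_congr rfl fun j _ => by ring

lemma reInner_mulVec_of_mem_unitaryGroup [DecidableEq τ] {U : Matrix τ τ ℂ}
    (hU : U ∈ Matrix.unitaryGroup τ ℂ) (a b : τ → ℂ) :
    reInner (U.mulVec a) (U.mulVec b) = reInner a b := by
  rw [reInner, Matrix.star_mulVec, ← Matrix.dotProduct_mulVec, Matrix.mulVec_mulVec,
    ← Matrix.star_eq_conjTranspose, Matrix.mem_unitaryGroup_iff'.1 hU, Matrix.one_mulVec, reInner]

lemma OpNormLE.progress_le {K : Matrix R C ℝ} {b : ℝ} (h : OpNormLE K b) (p : R → τ → ℂ)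
    (q : C → τ → ℂ) :
    2 * progress K p q ≤ b * (∑ r, reInner (p r) (p r) + ∑ c, reInner (q c) (q c)) := by
  have hre := h.sum_inner_le (fun r j => (p r j).re) (fun c j => (q c j).re)
  have him := h.sum_inner_le (fun r j => (p r j).im) (fun c j => (q c j).im)
  simp only [progress, reInner_eq_sum, Finset.sum_add_distrib, mul_add, ← pow_two] at *
  linarith

end InnerProduct

section Oracle

variable {ι : Type} [DecidableEq ι] {α : ι → ℕ} {W : ℕ}

/-- The permutation of the basis states performed by the query oracle. -/
def oraclePerm (W : ℕ) (x : Input ι α) : Equiv.Perm (QIdx ι α W) :=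
  (Equiv.sigmaCongrRight fun i =>
    haveI : NeZero (α i) := ⟨(x i).pos.ne'⟩
    Equiv.addRight (x i)).prodCongr (Equiv.refl _)

lemma oracleMatrix_eq_permMatrix (x : Input ι α) :
    oracleMatrix W x = (oraclePerm W x)⁻¹.permMatrix ℂ := by
  ext j j'
  have : (oraclePerm W x)⁻¹ j = j' ↔
      j.2 = j'.2 ∧ j.1 = ⟨j'.1.1, j'.1.2 + x j'.1.1⟩ := by
    rw [Equiv.Perm.inv_eq_iff_eq, Prod.ext_iff, and_comm]
    rfl
  simp [oracleMatrix, Equiv.Perm.permMatrix, PEquiv.toMatrix_apply, ← this, eq_comm]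

variable [Fintype ι]

lemma oracleMatrix_mulVec_oraclePerm (x : Input ι α) (a : QIdx ι α W → ℂ) (j : QIdx ι α W) :
    (oracleMatrix W x).mulVec a (oraclePerm W x j) = a j := by
  simp [oracleMatrix_eq_permMatrix, Matrix.permMatrix_mulVec]

/-- The component of a state in which position `i` is queried. -/
def queryPart (i : ι) (a : QIdx ι α W → ℂ) : QIdx ι α W → ℂ := fun j => if j.1.1 = i then a j else 0

lemma reInner_eq_sum_queryPart (a b : QIdx ι α W → ℂ) :
    reInner a b = ∑ i, reInner (queryPart i a) (queryPart i b) := by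
  simp only [reInner_eq_sum]
  rw [Finset.sum_comm]
  refine Finset.sum_congr rfl fun j _ => ?_
  rw [Fintype.sum_eq_single j.1.1 fun i hi => by simp [queryPart, hi.symm]]
  simp [queryPart]

lemma reInner_queryPart_oracleMatrix {x y : Input ι α} {i : ι} (h : x i = y i)
    (a b : QIdx ι α W → ℂ) :
    reInner (queryPart i ((oracleMatrix W x).mulVec a))
      (queryPart i ((oracleMatrix W y).mulVec b)) = reInner (queryPart i a) (queryPart i b) := by
  simp only [reInner_eq_sum]
  refine (Fintype.sum_equiv (oraclePerm W x) _ _ fun j => ?_).symm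
  by_cases hj : j.1.1 = i
  · have hperm : oraclePerm W x j = oraclePerm W y j := by
      subst hj
      change ((⟨j.1.1, j.1.2 + x j.1.1⟩, j.2) : QIdx ι α W) = (⟨j.1.1, j.1.2 + y j.1.1⟩, j.2)
      rw [h]
    have hquery : (oraclePerm W x j).1.1 = i := hj
    simp only [queryPart, hj, hquery, if_true, oracleMatrix_mulVec_oraclePerm]
    rw [hperm, oracleMatrix_mulVec_oraclePerm]
  · have hquery : (oraclePerm W x j).1.1 ≠ i := hj
    simp [queryPart, hj, hquery]

lemma reInner_oracleMatrix (x : Input ι α) (a b : QIdx ι α W → ℂ) :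
    reInner ((oracleMatrix W x).mulVec a) ((oracleMatrix W x).mulVec b) = reInner a b := by
  simp only [reInner_eq_sum_queryPart _ b, reInner_eq_sum_queryPart _ ((oracleMatrix W x).mulVec b),
    reInner_queryPart_oracleMatrix rfl]

end Oracle

section Progress

variable {ι : Type} [DecidableEq ι] [Fintype ι] {α : ι → ℕ} {W : ℕ} {R C τ : Type*} [Fintype R]
  [Fintype C] [Fintype τ] {X : R → Input ι α} {Y : C → Input ι α} {K : Matrix R C ℝ} {μ : ℝ}

lemma sum_progress_queryPart_le {Δ : ι → Matrix R C ℝ} (hΔ : ∀ i, OpNormLE (Δ i) μ)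
    (p : R → QIdx ι α W → ℂ) (q : C → QIdx ι α W → ℂ) :
    2 * ∑ i, progress (Δ i) (fun r => queryPart i (p r)) (fun c => queryPart i (q c)) ≤
      μ * (∑ r, reInner (p r) (p r) + ∑ c, reInner (q c) (q c)) := by
  simp only [reInner_eq_sum_queryPart (p _), reInner_eq_sum_queryPart (q _)]
  rw [Finset.sum_comm (γ := R), Finset.sum_comm (γ := C), ← Finset.sum_add_distrib, Finset.mul_sum,
    Finset.mul_sum]
  exact Finset.sum_le_sum fun i _ => (hΔ i).progress_le _ _

/-- The oracle preserves the inner products of the parts querying a position where the two inputs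
agree, so only the difference patterns contribute to the change of progress. -/
lemma progress_sub_progress_oracleMatrix (p : R → QIdx ι α W → ℂ) (q : C → QIdx ι α W → ℂ) :
    progress K p q - progress K (fun r => (oracleMatrix W (X r)).mulVec (p r))
        (fun c => (oracleMatrix W (Y c)).mulVec (q c)) =
      ∑ i, progress (diffPart X Y K i) (fun r => queryPart i (p r)) (fun c => queryPart i (q c)) +
      ∑ i, progress (-diffPart X Y K i)
        (fun r => queryPart i ((oracleMatrix W (X r)).mulVec (p r)))
        (fun c => queryPart i ((oracleMatrix W (Y c)).mulVec (q c))) := by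
  simp only [progress, ← Finset.sum_sub_distrib, ← Finset.sum_add_distrib]
  rw [Finset.sum_comm (s := (Finset.univ : Finset ι))]
  refine Finset.sum_congr rfl fun r _ => ?_
  rw [Finset.sum_comm (s := (Finset.univ : Finset ι))]
  refine Finset.sum_congr rfl fun c _ => ?_
  rw [reInner_eq_sum_queryPart (p r),
    reInner_eq_sum_queryPart ((oracleMatrix W (X r)).mulVec (p r)), Finset.mul_sum,
    Finset.mul_sum, ← Finset.sum_sub_distrib]
  refine Finset.sum_congr rfl fun i _ => ?_
  by_cases h : X r i = Y c i
  · simp [diffPart, h, reInner_queryPart_oracleMatrix h]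
  · simp only [diffPart, Matrix.neg_apply, Matrix.of_apply, h, if_false]
    ring

lemma progress_le_progress_oracleMatrix_add (hμ : ∀ i, OpNormLE (diffPart X Y K i) μ)
    {p : R → QIdx ι α W → ℂ} {q : C → QIdx ι α W → ℂ} (hp : ∑ r, reInner (p r) (p r) = 1)
    (hq : ∑ c, reInner (q c) (q c) = 1) :
    progress K p q ≤ progress K (fun r => (oracleMatrix W (X r)).mulVec (p r))
      (fun c => (oracleMatrix W (Y c)).mulVec (q c)) + 2 * μ := by
  have hbefore := sum_progress_queryPart_le hμ p q
  have hafter := sum_progress_queryPart_le (fun i => (hμ i).neg)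
    (fun r => (oracleMatrix W (X r)).mulVec (p r)) (fun c => (oracleMatrix W (Y c)).mulVec (q c))
  simp only [reInner_oracleMatrix, hp, hq] at hbefore hafter
  linarith [progress_sub_progress_oracleMatrix (X := X) (Y := Y) (K := K) p q]

lemma sum_reInner_ite_mul {z : R → τ → ℂ} (hz : ∑ r, reInner (z r) (z r) = 1) (s : τ → Prop)
    [DecidablePred s] (g h : ℝ) :
    ∑ r, reInner (fun j => ((if s j then g else h : ℝ) : ℂ) * z r j)
        (fun j => ((if s j then g else h : ℝ) : ℂ) * z r j) =
      h ^ 2 + (g ^ 2 - h ^ 2) * ∑ r, ∑ j, if s j then ‖z r j‖ ^ 2 else 0 := by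
  simp only [reInner_self] at hz ⊢
  trans h ^ 2 * ∑ r, ∑ j, ‖z r j‖ ^ 2 + (g ^ 2 - h ^ 2) * ∑ r, ∑ j, if s j then ‖z r j‖ ^ 2 else 0
  · simp only [Finset.mul_sum, ← Finset.sum_add_distrib, norm_mul, mul_pow, Complex.norm_real,
      Real.norm_eq_abs, sq_abs]
    refine Finset.sum_congr rfl fun r _ => Finset.sum_congr rfl fun j _ => ?_
    split_ifs <;> ring
  · rw [hz, mul_one]

/-- Rescaling the accepted part of the states by `5/6` against `6/5` on the rest leaves the progress
unchanged, but makes both families shorter than unit length. -/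
lemma progress_le_of_distinguishes (hK : OpNormLE K 1) {p : R → τ → ℂ} {q : C → τ → ℂ}
    (hp : ∑ r, reInner (p r) (p r) = 1) (hq : ∑ c, reInner (q c) (q c) = 1) (s : τ → Prop)
    [DecidablePred s] (hps : 2 / 3 ≤ ∑ r, ∑ j, if s j then ‖p r j‖ ^ 2 else 0)
    (hqs : ∑ c, ∑ j, (if s j then ‖q c j‖ ^ 2 else 0) ≤ 1 / 3) :
    progress K p q ≤ 19 / 20 := by
  have hprogress : progress K p q =
      progress K (fun r j => ((if s j then 5 / 6 else 6 / 5 : ℝ) : ℂ) * p r j)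
        (fun c j => ((if s j then 6 / 5 else 5 / 6 : ℝ) : ℂ) * q c j) := by
    simp only [progress, reInner_eq_sum, Complex.re_ofReal_mul, Complex.im_ofReal_mul]
    refine Finset.sum_congr rfl fun r _ => Finset.sum_congr rfl fun c _ => ?_
    congr 1
    refine Finset.sum_congr rfl fun j _ => ?_
    split_ifs <;> ring
  have hbound := hK.progress_le (fun r j => ((if s j then 5 / 6 else 6 / 5 : ℝ) : ℂ) * p r j)
    (fun c j => ((if s j then 6 / 5 else 5 / 6 : ℝ) : ℂ) * q c j)
  rw [← hprogress, sum_reInner_ite_mul hp, sum_reInner_ite_mul hq] at hbound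
  linarith

end Progress

section Algorithm

variable {ι : Type} [DecidableEq ι] [Fintype ι] {α : ι → ℕ} {R C : Type*} [Fintype R] [Fintype C]
  {X : R → Input ι α} {Y : C → Input ι α} {K : Matrix R C ℝ} {u : R → ℝ} {v : C → ℝ} {μ : ℝ}

/-- The state of a quantum algorithm right after its `t`-th query and the following unitary. -/
noncomputable def QAlg.state (B : QAlg ι α) (t : ℕ) (x : Input ι α) : QIdx ι α B.W → ℂ :=
  (qProd B.U (oracleMatrix B.W x) t).mulVec B.init

lemma QAlg.state_succ (B : QAlg ι α) (t : ℕ) (x : Input ι α) :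
    B.state (t + 1) x = (B.U (t + 1)).mulVec ((oracleMatrix B.W x).mulVec (B.state t x)) := by
  simp [state, qProd, Matrix.mulVec_mulVec, Matrix.mul_assoc]

lemma QAlg.reInner_state_zero (B : QAlg ι α) (x y : Input ι α) :
    reInner (B.state 0 x) (B.state 0 y) = 1 := by
  simp only [state, qProd]
  rw [reInner_mulVec_of_mem_unitaryGroup (B.unitary 0), reInner_self, B.init_norm]

lemma QAlg.reInner_state_self (B : QAlg ι α) (t : ℕ) (x : Input ι α) :
    reInner (B.state t x) (B.state t x) = 1 := by
  induction t with
  | zero => exact B.reInner_state_zero x x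
  | succ t ih =>
    rw [state_succ, reInner_mulVec_of_mem_unitaryGroup (B.unitary _), reInner_oracleMatrix, ih]

lemma QAlg.outProb_some_true_add_outProb_some_false_le (B : QAlg ι α) (x : Input ι α) :
    B.outProb x (some true) + B.outProb x (some false) ≤ 1 := by
  rw [← B.reInner_state_self B.T x, reInner_self]
  simp only [QAlg.outProb, ← Finset.sum_add_distrib]
  refine Finset.sum_le_sum fun j _ => ?_
  change _ ≤ ‖B.finalState x j‖ ^ 2
  rcases B.out j with _ | _ | _ <;> simp

/-- The state of `B` on each input of a family, weighted by the adversary vector `w`. -/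
noncomputable def QAlg.weightedState (B : QAlg ι α) (w : R → ℝ) (X : R → Input ι α) (t : ℕ)
    (r : R) : QIdx ι α B.W → ℂ := w r • B.state t (X r)

lemma QAlg.sum_reInner_weightedState (B : QAlg ι α) (hu : ∑ r, u r ^ 2 = 1) (X : R → Input ι α)
    (t : ℕ) : ∑ r, reInner (B.weightedState u X t r) (B.weightedState u X t r) = 1 := by
  simp [weightedState, reInner_smul_smul, B.reInner_state_self, ← pow_two, hu]

lemma QAlg.sum_accepted_weightedState (B : QAlg ι α) (u : R → ℝ) (X : R → Input ι α) :
    ∑ r, ∑ j, (if B.out j = some true then ‖B.weightedState u X B.T r j‖ ^ 2 else 0) =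
      ∑ r, u r ^ 2 * B.outProb (X r) (some true) := by
  simp only [outProb, Finset.mul_sum]
  refine Finset.sum_congr rfl fun r _ => Finset.sum_congr rfl fun j _ => ?_
  simp [weightedState, state, finalState, mul_pow]

lemma IsAdversary.one_le_progress_add (h : IsAdversary X Y K u v μ) (B : QAlg ι α) (t : ℕ) :
    1 ≤ progress K (B.weightedState u X t) (B.weightedState v Y t) + 2 * μ * t := by
  induction t with
  | zero =>
    simp [progress, QAlg.weightedState, reInner_smul_smul, B.reInner_state_zero, h.attained]
  | succ t ih =>
    have hquery := progress_le_progress_oracleMatrix_add h.diffPart_le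
      (B.sum_reInner_weightedState h.sum_sq_left X t)
      (B.sum_reInner_weightedState h.sum_sq_right Y t)
    have hunitary : progress K (B.weightedState u X (t + 1)) (B.weightedState v Y (t + 1)) =
        progress K (fun r => (oracleMatrix B.W (X r)).mulVec (B.weightedState u X t r))
          (fun c => (oracleMatrix B.W (Y c)).mulVec (B.weightedState v Y t c)) := by
      simp only [progress, QAlg.weightedState, QAlg.state_succ, Matrix.mulVec_smul,
        reInner_smul_smul, reInner_mulVec_of_mem_unitaryGroup (B.unitary _)]
    rw [hunitary]
    push_cast
    linarith

theorem IsAdversary.one_le_mul_queries (h : IsAdversary X Y K u v μ) {f : PartialFn ι α}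
    (hX : ∀ r, f (X r) = some true) (hY : ∀ c, f (Y c) = some false) (B : QAlg ι α)
    (hB : ∀ x b, f x = some b → (2 : ℝ) / 3 ≤ B.outProb x (some b)) : 1 ≤ 40 * μ * B.T := by
  have hrow : 2 / 3 ≤ ∑ r, u r ^ 2 * B.outProb (X r) (some true) :=
    calc (2 / 3 : ℝ) = ∑ r, u r ^ 2 * (2 / 3) := by
          rw [← Finset.sum_mul, h.sum_sq_left, one_mul]
      _ ≤ _ := by gcongr with r; exact hB _ _ (hX r)
  have hcol : ∑ c, v c ^ 2 * B.outProb (Y c) (some true) ≤ 1 / 3 :=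
    calc _ ≤ ∑ c, v c ^ 2 * (1 / 3 : ℝ) := by
          gcongr with c
          linarith [hB _ _ (hY c), B.outProb_some_true_add_outProb_some_false_le (Y c)]
      _ = 1 / 3 := by rw [← Finset.sum_mul, h.sum_sq_right, one_mul]
  rw [← B.sum_accepted_weightedState] at hrow hcol
  have hfinal := progress_le_of_distinguishes h.opNormLE
    (B.sum_reInner_weightedState h.sum_sq_left X B.T)
    (B.sum_reInner_weightedState h.sum_sq_right Y B.T) _ hrow hcol
  linarith [h.one_le_progress_add B B.T]

end Algorithm

/-! ### Reading the whole input

Since `Qq` is an infimum of natural numbers, a lower bound on it also needs some algorithm. -/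

section Reader

open Equiv.Perm (permMatrix)

lemma inv_permMatrix_mem_unitaryGroup {τ : Type*} [Fintype τ] [DecidableEq τ]
    (σ : Equiv.Perm τ) : σ⁻¹.permMatrix ℂ ∈ Matrix.unitaryGroup τ ℂ := by
  rw [Matrix.mem_unitaryGroup_iff', Matrix.star_eq_conjTranspose, Matrix.conjTranspose_permMatrix,
    ← Matrix.permMatrix_mul]
  simp

lemma inv_permMatrix_mulVec_single {τ : Type*} [Fintype τ] [DecidableEq τ] (σ : Equiv.Perm τ)
    (s : τ) : (σ⁻¹.permMatrix ℂ).mulVec (Pi.single s 1) = Pi.single (σ s) 1 := by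
  ext j
  simp only [Matrix.permMatrix_mulVec, Function.comp_apply, Pi.single_apply,
    Equiv.Perm.inv_eq_iff_eq]

variable {ι : Type} [DecidableEq ι] {α : ι → ℕ} {W : ℕ} (e : Fin W ≃ Input ι α)

/-- Exchange the query answer with the memory cell of the queried position; the workspace is read
as a whole input through `e`. -/
def exchangeAnswer : Equiv.Perm (QIdx ι α W) :=
  Function.Involutive.toPerm
    (fun j => (⟨j.1.1, e j.2 j.1.1⟩, e.symm (Function.update (e j.2) j.1.1 j.1.2)))
    (fun j => by simp)

lemma exchangeAnswer_apply (j : QIdx ι α W) : exchangeAnswer e j =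
    (⟨j.1.1, e j.2 j.1.1⟩, e.symm (Function.update (e j.2) j.1.1 j.1.2)) :=
  rfl

variable {N : ℕ} [NeZero N] [∀ i, NeZero (α i)] (pos : Fin N ≃ ι)

/-- Store the answer to the query of position `t`, then point the query register at position
`t + 1`. -/
def readStep (t : ℕ) : Equiv.Perm (QIdx ι α W) :=
  (Equiv.swap (⟨pos (Fin.ofNat N t), 0⟩ : Σ i, Fin (α i))
    ⟨pos (Fin.ofNat N (t + 1)), 0⟩).prodCongr (Equiv.refl _) * exchangeAnswer e

/-- The basis state reached after `t` queries: the first `t` positions are in memory. -/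
def readState (x : Input ι α) (t : ℕ) : QIdx ι α W :=
  (⟨pos (Fin.ofNat N t), 0⟩, e.symm fun i => if (pos.symm i : ℕ) < t then x i else 0)

lemma readStep_oraclePerm_readState (x : Input ι α) {t : ℕ} (ht : t < N) :
    readStep e pos t (oraclePerm W x (readState e pos x t)) = readState e pos x (t + 1) := by
  set i := pos (Fin.ofNat N t) with hi
  have hi_val : (pos.symm i : ℕ) = t := by simp [hi, Nat.mod_eq_of_lt ht]
  have hmem : Function.update (fun j => if (pos.symm j : ℕ) < t then x j else 0) i (x i) =
      fun j => if (pos.symm j : ℕ) < t + 1 then x j else 0 := by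
    funext j
    rcases eq_or_ne j i with rfl | hj
    · simp [hi_val]
    · have : (pos.symm j : ℕ) ≠ t := fun h =>
        hj (pos.symm.injective (Fin.ext (h.trans hi_val.symm)))
      simp only [Function.update_of_ne hj, Nat.lt_succ_iff_lt_or_eq, this, or_false]
  have horacle : oraclePerm W x (readState e pos x t) =
      (⟨i, x i⟩, e.symm fun j => if (pos.symm j : ℕ) < t then x j else 0) := by
    change ((⟨i, 0 + x i⟩, _) : QIdx ι α W) = _
    rw [zero_add]
    rfl
  have hexchange : exchangeAnswer e (oraclePerm W x (readState e pos x t)) =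
      (⟨i, 0⟩, e.symm fun j => if (pos.symm j : ℕ) < t + 1 then x j else 0) := by
    rw [horacle, exchangeAnswer_apply]
    simp only [Equiv.apply_symm_apply, hmem, hi_val, lt_irrefl, if_false]
  rw [readStep, Equiv.Perm.mul_apply, hexchange, hi]
  exact Prod.ext (Equiv.swap_apply_left _ _) rfl

/-- The unitary applied before the first query (for `t = 0`) or after the `t`-th one. -/
noncomputable def readUnitary : ℕ → Matrix (QIdx ι α W) (QIdx ι α W) ℂ
  | 0 => 1
  | t + 1 => (readStep e pos t)⁻¹.permMatrix ℂ

variable [Fintype ι]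

lemma qProd_readUnitary_mulVec (x : Input ι α) {t : ℕ} (ht : t ≤ N) :
    (qProd (readUnitary e pos) (oracleMatrix W x) t).mulVec
        (Pi.single (readState e pos (fun _ => 0) 0) 1) = Pi.single (readState e pos x t) 1 := by
  induction t with
  | zero =>
    rw [qProd, readUnitary, Matrix.one_mulVec]
    simp [readState]
  | succ t ih =>
    rw [qProd, Matrix.mul_assoc, ← Matrix.mulVec_mulVec, ← Matrix.mulVec_mulVec, ih (by omega),
      oracleMatrix_eq_permMatrix, inv_permMatrix_mulVec_single, readUnitary,
      inv_permMatrix_mulVec_single, readStep_oraclePerm_readState e pos x (by omega)]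

/-- The algorithm that reads the whole input and then evaluates `f` on it. -/
noncomputable def readerAlg (f : PartialFn ι α) : QAlg ι α where
  T := N
  W := W
  U := readUnitary e pos
  unitary := by
    rintro (_ | t)
    · exact one_mem _
    · exact inv_permMatrix_mem_unitaryGroup _
  init := Pi.single (readState e pos (fun _ => 0) 0) 1
  init_norm := by simp [Pi.single_apply, apply_ite]
  out j := f (e j.2)

lemma outProb_readerAlg (f : PartialFn ι α) {x : Input ι α} {b : Bool} (hx : f x = some b) :
    (readerAlg e pos f).outProb x (some b) = 1 := by
  have hmem : e (readState e pos x N).2 = x := by simp [readState]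
  have hprob : (readerAlg e pos f).outProb x (some b) =
      ∑ j : QIdx ι α W, if f (e j.2) = some b then
        ‖(qProd (readUnitary e pos) (oracleMatrix W x) N).mulVec
          (Pi.single (readState e pos (fun _ => 0) 0) 1) j‖ ^ 2 else 0 := rfl
  rw [hprob, qProd_readUnitary_mulVec e pos x le_rfl,
    Fintype.sum_eq_single (readState e pos x N) fun j hj => by simp [Pi.single_eq_of_ne hj]]
  simp [hmem, hx]

end Reader

variable {ι : Type} [Fintype ι] [DecidableEq ι] {α : ι → ℕ}

lemma exists_qAlg_two_thirds_le_outProb [Nonempty ι] [∀ i, NeZero (α i)] (f : PartialFn ι α) :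
    ∃ A : QAlg ι α, ∀ x b, f x = some b → (2 : ℝ) / 3 ≤ A.outProb x (some b) :=
  haveI : NeZero (Fintype.card ι) := ⟨Fintype.card_ne_zero⟩
  ⟨readerAlg (Fintype.equivFin _).symm (Fintype.equivFin ι).symm f, fun x b hx => by
    rw [outProb_readerAlg _ _ f hx]
    norm_num⟩

theorem IsAdversary.one_le_mul_qq {R C : Type*} [Fintype R] [Fintype C] {X : R → Input ι α}
    {Y : C → Input ι α} {K : Matrix R C ℝ} {u : R → ℝ} {v : C → ℝ} {μ : ℝ}
    (h : IsAdversary X Y K u v μ) {f : PartialFn ι α} (hX : ∀ r, f (X r) = some true)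
    (hY : ∀ c, f (Y c) = some false) : 1 ≤ 40 * μ * Qq f := by
  obtain ⟨r⟩ : Nonempty R := by
    by_contra hR
    simpa [not_nonempty_iff.1 hR] using h.sum_sq_left
  obtain ⟨c⟩ : Nonempty C := by
    by_contra hC
    simpa [not_nonempty_iff.1 hC] using h.sum_sq_right
  obtain ⟨i, -⟩ : ∃ i, X r i ≠ Y c i := Function.ne_iff.1 fun hrc => by
    simpa [← hrc, hX r] using hY c
  have : Nonempty ι := ⟨i⟩
  have : ∀ i, NeZero (α i) := fun i => ⟨(X r i).pos.ne'⟩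
  have hμ : 0 ≤ μ := by simpa [h.sum_sq_left] using h.diffPart_le i u 0
  obtain ⟨A, hA⟩ := exists_qAlg_two_thirds_le_outProb f
  obtain ⟨B, hBT, hB⟩ := Nat.sInf_mem
    (s := {d | ∃ A : QAlg ι α, A.T ≤ d ∧ ∀ x b, f x = some b → (2 : ℝ) / 3 ≤ A.outProb x (some b)})
    ⟨A.T, A, le_rfl, hA⟩
  refine (h.one_le_mul_queries hX hY B hB).trans ?_
  gcongr
  exact hBT

/-! ### Composition of adversary matrices -/

section BlockMatrix

variable {A : Bool → Type*} [∀ b, DecidableEq (A b)]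

/-- The symmetric matrix `(1, K; Kᵀ, 1)`, which is positive semidefinite exactly when `K` has
operator norm at most `1`. The colour of an index says to which side of `K` it belongs. -/
def blockMatrix (K : Matrix (A true) (A false) ℝ) : Matrix (Σ b, A b) (Σ b, A b) ℝ :=
  Matrix.of fun
    | ⟨true, a⟩, ⟨true, a'⟩ => if a = a' then 1 else 0
    | ⟨true, a⟩, ⟨false, a'⟩ => K a a'
    | ⟨false, a⟩, ⟨true, a'⟩ => K a' a
    | ⟨false, a⟩, ⟨false, a'⟩ => if a = a' then 1 else 0

variable {K : Matrix (A true) (A false) ℝ}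

lemma blockMatrix_same_color (b : Bool) (a a' : A b) :
    blockMatrix K ⟨b, a⟩ ⟨b, a'⟩ = if a = a' then 1 else 0 := by
  cases b <;> rfl

lemma blockMatrix_smul (s : ℝ) {a a' : Σ b, A b} (h : a.1 ≠ a'.1) :
    blockMatrix (s • K) a a' = s * blockMatrix K a a' := by
  rcases a with ⟨_ | _, a⟩ <;> rcases a' with ⟨_ | _, a'⟩ <;> first | rfl | exact (h rfl).elim

variable {I : Type*} (X : ∀ b, A b → I → Bool)

lemma blockMatrix_diffPart (i : I) {a a' : Σ b, A b} (h : a.1 ≠ a'.1) :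
    blockMatrix (diffPart (X true) (X false) K i) a a' =
      if X a.1 a.2 i = X a'.1 a'.2 i then 0 else blockMatrix K a a' := by
  rcases a with ⟨_ | _, a⟩ <;> rcases a' with ⟨_ | _, a'⟩
  · exact (h rfl).elim
  · simp [blockMatrix, diffPart, eq_comm]
  · simp [blockMatrix, diffPart]
  · exact (h rfl).elim

lemma ite_blockMatrix_of_same_color (i : I) {a a' : Σ b, A b} (h : a.1 = a'.1) :
    (if X a.1 a.2 i = X a'.1 a'.2 i then 0 else blockMatrix K a a') = 0 := by
  obtain ⟨b, a⟩ := a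
  obtain ⟨b', a'⟩ := a'
  obtain rfl : b = b' := h
  rw [blockMatrix_same_color]
  rcases eq_or_ne a a' with rfl | ha <;> simp_all

variable [∀ b, Fintype (A b)]

lemma OpNormLE.posSemidef_blockMatrix (h : OpNormLE K 1) : (blockMatrix K).PosSemidef := by
  refine Matrix.PosSemidef.of_dotProduct_mulVec_nonneg ?_ fun z => ?_
  · ext ⟨b, a⟩ ⟨b', a'⟩
    cases b <;> cases b' <;> simp [blockMatrix, eq_comm]
  have hquad : star z ⬝ᵥ (blockMatrix K).mulVec z =
      ∑ a, z ⟨true, a⟩ ^ 2 + ∑ a, z ⟨false, a⟩ ^ 2 +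
        2 * ∑ a, ∑ a', K a a' * (z ⟨true, a⟩ * z ⟨false, a'⟩) := by
    have hft : ∑ a, z ⟨false, a⟩ * ∑ a', K a' a * z ⟨true, a'⟩ =
        ∑ a, ∑ a', K a a' * (z ⟨true, a⟩ * z ⟨false, a'⟩) := by
      simp only [Finset.mul_sum]
      rw [Finset.sum_comm]
      exact Finset.sum_congr rfl fun a _ => Finset.sum_congr rfl fun a' _ => by ring
    have htf : ∑ a, z ⟨true, a⟩ * ∑ a', K a a' * z ⟨false, a'⟩ =
        ∑ a, ∑ a', K a a' * (z ⟨true, a⟩ * z ⟨false, a'⟩) := by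
      simp only [Finset.mul_sum]
      exact Finset.sum_congr rfl fun a _ => Finset.sum_congr rfl fun a' _ => by ring
    simp only [dotProduct, Matrix.mulVec, Fintype.sum_sigma, Fintype.sum_bool, blockMatrix,
      Matrix.of_apply, Pi.star_apply, star_trivial, ite_mul, one_mul, zero_mul, Finset.sum_ite_eq,
      Finset.mem_univ, if_true, mul_add, Finset.sum_add_distrib, htf, hft, ← pow_two]
    ring
  have hneg : ∑ a, ∑ a', K a a' * (-z ⟨true, a⟩ * z ⟨false, a'⟩) =
      -∑ a, ∑ a', K a a' * (z ⟨true, a⟩ * z ⟨false, a'⟩) := by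
    simp only [← Finset.sum_neg_distrib, neg_mul, mul_neg]
  have hle := h (fun a => -z ⟨true, a⟩) (fun a => z ⟨false, a⟩)
  simp only [hneg, neg_sq] at hle
  rw [hquad]
  linarith

lemma OpNormLE.exists_gram (h : OpNormLE K 1) :
    ∃ (m : ℕ) (φ : (Σ b, A b) → Fin m → ℝ),
      ∀ a a', ∑ s, φ a s * φ a' s = blockMatrix K a a' := by
  obtain ⟨m, v, hv⟩ := Matrix.posSemidef_iff_eq_sum_vecMulVec.1 h.posSemidef_blockMatrix
  refine ⟨m, fun a s => v s a, fun a a' => ?_⟩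
  simp [hv, Matrix.sum_apply, Matrix.vecMulVec_apply]

end BlockMatrix

section Compose

variable {A : Bool → Type*} {J R C : Type*} [Fintype J]

/-- The composition of a vector `u` with a vector of either colour. -/
def composeVec (X : R → J → Bool) (u : R → ℝ) (w : ∀ b, A b → ℝ) (r : Σ r, ∀ j, A (X r j)) : ℝ :=
  u r.1 * ∏ j, w (X r.1 j) (r.2 j)

lemma sum_composeVec_sq [Fintype R] [∀ b, Fintype (A b)] [DecidableEq J] (X : R → J → Bool)
    (u : R → ℝ) {w : ∀ b, A b → ℝ} (hw : ∀ b, ∑ a, w b a ^ 2 = 1) :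
    ∑ r, composeVec X u w r ^ 2 = ∑ r, u r ^ 2 := by
  rw [Fintype.sum_sigma]
  refine Finset.sum_congr rfl fun r _ => ?_
  simp only [composeVec, mul_pow, ← Finset.mul_sum, ← Finset.prod_pow]
  rw [← Fintype.piFinset_univ, ← Finset.prod_univ_sum (fun _ => Finset.univ)
    fun j a => w (X r j) a ^ 2]
  simp [hw]

variable [∀ b, DecidableEq (A b)]

/-- The composition of the matrix `B` with one matrix for every position `j`. An index `r` of `B`
is refined by one index of colour `X r j` for every `j`. -/
def composeMatrix (B : Matrix R C ℝ) (X : R → J → Bool) (Y : C → J → Bool)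
    (K : J → Matrix (A true) (A false) ℝ) :
    Matrix (Σ r, ∀ j, A (X r j)) (Σ c, ∀ j, A (Y c j)) ℝ :=
  Matrix.of fun r c => B r.1 c.1 * ∏ j, blockMatrix (K j) ⟨X r.1 j, r.2 j⟩ ⟨Y c.1 j, c.2 j⟩

variable [DecidableEq J]

lemma composeMatrix_update_diffPart {I : Type*} (Z : ∀ b, A b → I → Bool)
    (L : Matrix (A true) (A false) ℝ) (X : R → J → Bool) (Y : C → J → Bool) (K : Matrix R C ℝ)
    (s : ℝ) (j : J) (i : I) :
    composeMatrix (diffPart X Y K j) X Y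
        (Function.update (fun _ => L) j (s • diffPart (Z true) (Z false) L i)) =
      s • diffPart (fun (r : Σ r, ∀ j, A (X r j)) ji => Z (X r.1 ji.1) (r.2 ji.1) ji.2)
        (fun (c : Σ c, ∀ j, A (Y c j)) ji => Z (Y c.1 ji.1) (c.2 ji.1) ji.2)
        (composeMatrix K X Y fun _ => L) (j, i) := by
  ext r c
  have hrest : ∏ k ∈ Finset.univ.erase j, blockMatrix
        (Function.update (fun _ => L) j (s • diffPart (Z true) (Z false) L i) k)
        ⟨X r.1 k, r.2 k⟩ ⟨Y c.1 k, c.2 k⟩ =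
      ∏ k ∈ Finset.univ.erase j, blockMatrix L ⟨X r.1 k, r.2 k⟩ ⟨Y c.1 k, c.2 k⟩ :=
    Finset.prod_congr rfl fun k hk => by
      rw [Function.update_of_ne (Finset.ne_of_mem_erase hk)]
  simp only [composeMatrix, Matrix.of_apply, Matrix.smul_apply, smul_eq_mul]
  rw [← Finset.mul_prod_erase _ _ (Finset.mem_univ j), hrest, Function.update_self]
  simp only [diffPart, Matrix.of_apply]
  rw [← Finset.mul_prod_erase Finset.univ (fun k => blockMatrix L ⟨X r.1 k, r.2 k⟩
    ⟨Y c.1 k, c.2 k⟩) (Finset.mem_univ j)]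
  by_cases hcolor : X r.1 j = Y c.1 j
  · have := ite_blockMatrix_of_same_color (K := L) Z i (a := ⟨X r.1 j, r.2 j⟩)
      (a' := ⟨Y c.1 j, c.2 j⟩) hcolor
    rw [if_pos hcolor, zero_mul]
    split_ifs at this ⊢ with hZ
    · rw [mul_zero]
    · rw [this, zero_mul, mul_zero, mul_zero]
  · have := blockMatrix_diffPart (K := L) Z i (a := ⟨X r.1 j, r.2 j⟩)
      (a' := ⟨Y c.1 j, c.2 j⟩) hcolor
    rw [if_neg hcolor, blockMatrix_smul s hcolor]
    simp only [diffPart] at this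
    rw [this]
    split_ifs
    · ring
    · ring

variable [∀ b, Fintype (A b)]

lemma sum_gram_prod_mul_gram_prod {K : J → Matrix (A true) (A false) ℝ} {m : J → ℕ}
    {φ : ∀ j, (Σ b, A b) → Fin (m j) → ℝ}
    (hφ : ∀ j a a', ∑ s, φ j a s * φ j a' s = blockMatrix (K j) a a') (b b' : J → Bool)
    (p : (∀ j, A (b j)) → ℝ) (q : (∀ j, A (b' j)) → ℝ) :
    ∑ s : ∀ j, Fin (m j), (∑ ξ, p ξ * ∏ j, φ j ⟨b j, ξ j⟩ (s j)) *
        (∑ η, q η * ∏ j, φ j ⟨b' j, η j⟩ (s j)) =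
      ∑ ξ, ∑ η, p ξ * q η * ∏ j, blockMatrix (K j) ⟨b j, ξ j⟩ ⟨b' j, η j⟩ := by
  simp only [Finset.sum_mul_sum]
  rw [Finset.sum_comm]
  refine Finset.sum_congr rfl fun ξ _ => ?_
  rw [Finset.sum_comm]
  refine Finset.sum_congr rfl fun η _ => ?_
  simp only [← hφ]
  rw [Finset.prod_univ_sum, Fintype.piFinset_univ, Finset.mul_sum]
  refine Finset.sum_congr rfl fun s _ => ?_
  rw [Finset.prod_mul_distrib]
  ring

variable [Fintype R] [Fintype C]

/-- The entries of the block matrices are inner products of Gram vectors, so the products of such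
entries are inner products of tensor products of Gram vectors, which are orthonormal for a fixed
string of colours. -/
lemma OpNormLE.composeMatrix {B : Matrix R C ℝ} {β : ℝ} (hB : OpNormLE B β) (X : R → J → Bool)
    (Y : C → J → Bool) {K : J → Matrix (A true) (A false) ℝ} (hK : ∀ j, OpNormLE (K j) 1) :
    OpNormLE (composeMatrix B X Y K) β := by
  choose m φ hφ using fun j => (hK j).exists_gram
  have hnorm : ∀ (b : J → Bool) (p : (∀ j, A (b j)) → ℝ),
      ∑ s : ∀ j, Fin (m j), (∑ ξ, p ξ * ∏ j, φ j ⟨b j, ξ j⟩ (s j)) ^ 2 = ∑ ξ, p ξ ^ 2 := by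
    intro b p
    simp only [pow_two, sum_gram_prod_mul_gram_prod hφ]
    refine Finset.sum_congr rfl fun ξ _ => ?_
    rw [Fintype.sum_eq_single ξ fun η hη => ?_]
    · simp [blockMatrix_same_color]
    · obtain ⟨j, hj⟩ := Function.ne_iff.1 hη
      rw [Finset.prod_eq_zero (Finset.mem_univ j), mul_zero]
      rw [blockMatrix_same_color, if_neg hj.symm]
  intro p q
  have h := hB.sum_inner_le
    (fun r (s : ∀ j, Fin (m j)) => ∑ ξ, p ⟨r, ξ⟩ * ∏ j, φ j ⟨X r j, ξ j⟩ (s j))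
    (fun c (s : ∀ j, Fin (m j)) => ∑ η, q ⟨c, η⟩ * ∏ j, φ j ⟨Y c j, η j⟩ (s j))
  simp only [hnorm, sum_gram_prod_mul_gram_prod hφ] at h
  simp only [Fintype.sum_sigma]
  refine le_trans (le_of_eq ?_) h
  congr 1
  refine Finset.sum_congr rfl fun r _ => ?_
  rw [Finset.sum_comm]
  refine Finset.sum_congr rfl fun c _ => ?_
  simp only [Finset.mul_sum, QC.composeMatrix, Matrix.of_apply]
  exact Finset.sum_congr rfl fun ξ _ => Finset.sum_congr rfl fun η _ => by ring

end Compose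

section IsAdversaryCompose

variable {A : Bool → Type*} [∀ b, Fintype (A b)] {I : Type*} {Z : ∀ b, A b → I → Bool}
  {L : Matrix (A true) (A false) ℝ} {w : ∀ b, A b → ℝ} {μ' : ℝ}

lemma IsAdversary.sum_sq (hL : IsAdversary (Z true) (Z false) L (w true) (w false) μ') (b : Bool) :
    ∑ a, w b a ^ 2 = 1 := by
  cases b
  · exact hL.sum_sq_right
  · exact hL.sum_sq_left

variable [∀ b, DecidableEq (A b)]

lemma IsAdversary.sum_blockMatrix
    (hL : IsAdversary (Z true) (Z false) L (w true) (w false) μ') (b b' : Bool) :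
    ∑ a, ∑ a', blockMatrix L ⟨b, a⟩ ⟨b', a'⟩ * (w b a * w b' a') = 1 := by
  rcases eq_or_ne b b' with rfl | hb
  · simp [blockMatrix_same_color, ← pow_two, hL.sum_sq b]
  rw [← hL.attained]
  cases b <;> cases b'
  · exact (hb rfl).elim
  · rw [Finset.sum_comm]
    simp [blockMatrix, mul_comm]
  · rfl
  · exact (hb rfl).elim

variable {J R C : Type*} [Fintype J] [DecidableEq J] [Fintype R] [Fintype C]
  {X : R → J → Bool} {Y : C → J → Bool} {K : Matrix R C ℝ}

lemma IsAdversary.sum_composeMatrix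
    (hL : IsAdversary (Z true) (Z false) L (w true) (w false) μ') (u : R → ℝ) (v : C → ℝ) :
    ∑ r, ∑ c, composeMatrix K X Y (fun _ => L) r c * (composeVec X u w r * composeVec Y v w c) =
      ∑ r, ∑ c, K r c * (u r * v c) := by
  rw [Fintype.sum_sigma]
  refine Finset.sum_congr rfl fun r _ => ?_
  simp only [Fintype.sum_sigma]
  rw [Finset.sum_comm]
  refine Finset.sum_congr rfl fun c _ => ?_
  have hone : ∑ ξ : ∀ j, A (X r j), ∑ η : ∀ j, A (Y c j),
      ∏ j, (blockMatrix L ⟨X r j, ξ j⟩ ⟨Y c j, η j⟩ * (w (X r j) (ξ j) * w (Y c j) (η j))) = 1 := by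
    rw [← Finset.prod_const_one (s := (Finset.univ : Finset J)),
      Finset.prod_congr rfl fun j _ => (hL.sum_blockMatrix (X r j) (Y c j)).symm]
    simp only [Finset.prod_univ_sum, Fintype.piFinset_univ]
  rw [← mul_one (K r c * _), ← hone]
  simp only [Finset.mul_sum, composeMatrix, composeVec, Matrix.of_apply, Finset.prod_mul_distrib]
  exact Finset.sum_congr rfl fun ξ _ => Finset.sum_congr rfl fun η _ => by ring

theorem IsAdversary.compose {u : R → ℝ} {v : C → ℝ} {μ : ℝ} (hK : IsAdversary X Y K u v μ)
    (hL : IsAdversary (Z true) (Z false) L (w true) (w false) μ') (hμ' : 0 < μ') :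
    IsAdversary (fun (r : Σ r, ∀ j, A (X r j)) (ji : J × I) => Z (X r.1 ji.1) (r.2 ji.1) ji.2)
      (fun (c : Σ c, ∀ j, A (Y c j)) (ji : J × I) => Z (Y c.1 ji.1) (c.2 ji.1) ji.2)
      (composeMatrix K X Y fun _ => L) (composeVec X u w) (composeVec Y v w) (μ * μ') where
  opNormLE := hK.opNormLE.composeMatrix X Y fun _ => hL.opNormLE
  sum_sq_left := by rw [sum_composeVec_sq X u hL.sum_sq, hK.sum_sq_left]
  sum_sq_right := by rw [sum_composeVec_sq Y v hL.sum_sq, hK.sum_sq_right]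
  attained := by rw [hL.sum_composeMatrix, hK.attained]
  diffPart_le := by
    rintro ⟨j, i⟩
    have hnorm : ∀ k, OpNormLE
        (Function.update (fun _ => L) j (μ'⁻¹ • diffPart (Z true) (Z false) L i) k) 1 := by
      intro k
      rcases eq_or_ne k j with rfl | hk
      · rw [Function.update_self, ← inv_mul_cancel₀ hμ'.ne']
        exact (hL.diffPart_le i).smul (inv_nonneg.2 hμ'.le)
      · rw [Function.update_of_ne hk]
        exact hL.opNormLE
    have := ((hK.diffPart_le j).composeMatrix X Y hnorm).smul hμ'.le
    rwa [composeMatrix_update_diffPart, smul_smul, mul_inv_cancel₀ hμ'.ne', one_smul,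
      mul_comm μ'] at this

end IsAdversaryCompose

/-- The Boolean function `F` has a (normalised) adversary matrix of value at least `L` between its
`1`-inputs and its `0`-inputs. -/
def HasAdversary {I : Type*} (F : (I → Bool) → Bool) (L : ℝ) : Prop :=
  ∃ (A : Bool → Type) (_ : ∀ b, Fintype (A b)) (X : ∀ b, A b → I → Bool)
    (K : Matrix (A true) (A false) ℝ) (w : ∀ b, A b → ℝ),
    IsAdversary (X true) (X false) K (w true) (w false) (1 / L) ∧ ∀ b a, F (X b a) = b

/-- Block composition of Boolean functions. -/
def blockCompose {J I : Type*} (G : (J → Bool) → Bool) (F : (I → Bool) → Bool)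
    (z : J × I → Bool) : Bool :=
  G fun j => F fun i => z (j, i)

theorem HasAdversary.blockCompose {J : Type} {I : Type*} [Finite J] {G : (J → Bool) → Bool}
    {F : (I → Bool) → Bool} {L L' : ℝ} (hG : HasAdversary G L) (hF : HasAdversary F L')
    (hL' : 0 < L') : HasAdversary (blockCompose G F) (L * L') := by
  classical
  have := Fintype.ofFinite J
  obtain ⟨A, _, X, K, w, hK, hX⟩ := hG
  obtain ⟨A', _, X', K', w', hK', hX'⟩ := hF
  refine ⟨fun b => Σ a, ∀ j, A' (X b a j), fun b => inferInstance,
    fun b a ji => X' (X b a.1 ji.1) (a.2 ji.1) ji.2, composeMatrix K (X true) (X false) fun _ => K',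
    fun b => composeVec (X b) (w b) w', ?_, fun b a => ?_⟩
  · simpa only [one_div_mul_one_div] using hK.compose hK' (one_div_pos.2 hL')
  · simp only [QC.blockCompose, hX', hX]

lemma HasAdversary.mono {I : Type*} {F : (I → Bool) → Bool} {L L' : ℝ} (h : HasAdversary F L)
    (hL' : 0 < L') (hL : L' ≤ L) : HasAdversary F L' := by
  obtain ⟨A, _, X, K, w, hK, hX⟩ := h
  exact ⟨A, _, X, K, w, { hK with
    diffPart_le := fun i => (hK.diffPart_le i).mono (one_div_le_one_div_of_le hL' hL) }, hX⟩

lemma hasAdversary_eval : HasAdversary (fun z : Unit → Bool => z ()) 1 := by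
  have hone : OpNormLE (fun _ _ => 1 : Matrix Unit Unit ℝ) 1 := fun p q => by
    simpa [mul_assoc] using two_mul_le_add_sq (p ()) (q ())
  have hadv : IsAdversary (fun _ _ : Unit => true) (fun _ _ : Unit => false) (fun _ _ => 1)
      (fun _ => 1) (fun _ => 1) (1 / 1) := by
    refine ⟨hone, by simp, by simp, by simp, fun _ => ?_⟩
    rw [one_div_one]
    exact hone
  exact ⟨fun _ => Unit, fun _ => inferInstance, fun b _ _ => b, fun _ _ => 1, fun _ _ => 1, hadv,
    fun _ _ => rfl⟩

lemma diffPart_smul {I R C : Type*} (X : R → I → Bool) (Y : C → I → Bool) (s : ℝ)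
    (K : Matrix R C ℝ) (i : I) : diffPart X Y (s • K) i = s • diffPart X Y K i := by
  ext r c
  simp [diffPart]

lemma HasAdversary.of_matrix {I : Type*} {R C : Type} [Fintype R] [Fintype C]
    {F : (I → Bool) → Bool} {X : R → I → Bool} {Y : C → I → Bool} (hX : ∀ r, F (X r) = true)
    (hY : ∀ c, F (Y c) = false) (Γ : Matrix R C ℝ) {p₀ : R → ℝ} {q₀ : C → ℝ}
    (hp₀ : ∑ r, p₀ r ^ 2 = 1) (hq₀ : ∑ c, q₀ c ^ 2 = 1) {l μ : ℝ} (hl : 0 < l) (hμ₀ : 0 ≤ μ)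
    (hΓ : l ≤ ∑ r, ∑ c, Γ r c * (p₀ r * q₀ c)) (hμ : ∀ i, OpNormLE (diffPart X Y Γ i) μ) :
    HasAdversary F (l / μ) := by
  obtain ⟨p, q, hp, hq, hge, hΓ_norm⟩ := OpNormLE.exists_attained Γ hp₀ hq₀ (hl.le.trans hΓ)
  set s := ∑ r, ∑ c, Γ r c * (p r * q c)
  have hs_pos : 0 < s := hl.trans_le (hΓ.trans hge)
  refine ⟨Bool.rec C R, Bool.rec ‹_› ‹_›, @Bool.rec (fun b => Bool.rec C R b → I → Bool) Y X,
    s⁻¹ • Γ, @Bool.rec (fun b => Bool.rec C R b → ℝ) q p, ⟨?_, hp, hq, ?_, fun i => ?_⟩, ?_⟩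
  · simpa only [inv_mul_cancel₀ hs_pos.ne'] using hΓ_norm.smul (inv_nonneg.2 hs_pos.le)
  · change ∑ r, ∑ c, s⁻¹ * Γ r c * (p r * q c) = 1
    simp only [mul_assoc, ← Finset.mul_sum]
    exact inv_mul_cancel₀ hs_pos.ne'
  · rw [diffPart_smul]
    refine ((hμ i).smul (inv_nonneg.2 hs_pos.le)).mono ?_
    rw [one_div_div, inv_mul_eq_div]
    exact div_le_div_of_nonneg_left hμ₀ hl (hΓ.trans hge)
  · rintro (_ | _)
    exacts [hY, hX]

/-! ### Projections onto functions of a given set of coordinates -/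

lemma sum_ite_sub_inv_card {Λ : Type*} [Fintype Λ] [DecidableEq Λ] [Nonempty Λ] (b : Λ) :
    ∑ a : Λ, ((if a = b then 1 else 0) - 1 / (Fintype.card Λ : ℝ)) = 0 := by
  rw [Finset.sum_sub_distrib]
  simp

section ProjKernel

variable {V Λ : Type*} [Fintype V] [DecidableEq V] [Fintype Λ] [DecidableEq Λ]

/-- The matrix of the orthogonal projection, on the functions of `x : V → Λ`, onto those that depend
on the coordinates in `T` only and have mean zero in each of them. -/
noncomputable def projKernel (T : Finset V) : Matrix (V → Λ) (V → Λ) ℝ :=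
  Matrix.of fun x y => ∏ i, if i ∈ T then (if x i = y i then 1 else 0) - 1 / (Fintype.card Λ : ℝ)
    else 1 / (Fintype.card Λ : ℝ)

lemma projKernel_transpose (T : Finset V) :
    (projKernel T : Matrix (V → Λ) (V → Λ) ℝ).transpose = projKernel T := by
  ext x y
  simp only [projKernel, Matrix.transpose_apply, Matrix.of_apply, eq_comm]

lemma sum_projKernel : ∑ T, (projKernel T : Matrix (V → Λ) (V → Λ) ℝ) = 1 := by
  ext x y
  have hfactor : ∀ T, (projKernel T : Matrix (V → Λ) (V → Λ) ℝ) x y =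
      (∏ i ∈ T, ((if x i = y i then 1 else 0) - 1 / (Fintype.card Λ : ℝ))) *
        ∏ i ∈ Tᶜ, 1 / (Fintype.card Λ : ℝ) := fun T => by
    simp [projKernel, Finset.prod_ite, Finset.filter_notMem_eq_sdiff, Finset.compl_eq_univ_sdiff]
  rw [Matrix.sum_apply, Finset.sum_congr rfl fun T _ => hfactor T, ← Fintype.prod_add,
    Matrix.one_apply]
  simp only [sub_add_cancel, Finset.prod_ite_zero, Finset.mem_univ, forall_true_left, funext_iff,
    Finset.prod_const_one]

lemma projKernel_insert {T : Finset V} {i : V} (hi : i ∉ T) {x y : V → Λ} (hxy : x i ≠ y i) :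
    projKernel (insert i T) x y = -projKernel T x y := by
  simp only [projKernel, Matrix.of_apply]
  rw [← Finset.mul_prod_erase _ _ (Finset.mem_univ i),
    ← Finset.mul_prod_erase (Finset.univ : Finset V) (fun i => if i ∈ T then _ else _)
      (Finset.mem_univ i), if_pos (Finset.mem_insert_self i T), if_neg hi, if_neg hxy, zero_sub,
    neg_mul]
  congr 2
  refine Finset.prod_congr rfl fun j hj => ?_
  simp only [Finset.mem_insert, Finset.ne_of_mem_erase hj, false_or]

lemma projKernel_add_single [AddCommGroup Λ] {T : Finset V} {i : V} (hi : i ∉ T) (x y : V → Λ)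
    (c : Λ) : projKernel T (x + Pi.single i c) y = projKernel T x y := by
  refine Finset.prod_congr rfl fun j _ => ?_
  by_cases hj : j ∈ T
  · simp [hj, ne_of_mem_of_not_mem hj hi]
  · simp [hj]

variable [Nonempty Λ]

lemma projKernel_mul (T T' : Finset V) : (projKernel T * projKernel T' : Matrix (V → Λ) (V → Λ) ℝ) =
    if T = T' then projKernel T else 0 := by
  ext y y'
  have hfactor : (projKernel T * projKernel T' : Matrix (V → Λ) (V → Λ) ℝ) y y' =
      ∏ i, ∑ a : Λ, (if i ∈ T then (if y i = a then 1 else 0) - 1 / (Fintype.card Λ : ℝ)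
          else 1 / (Fintype.card Λ : ℝ)) *
        (if i ∈ T' then (if a = y' i then 1 else 0) - 1 / (Fintype.card Λ : ℝ)
          else 1 / (Fintype.card Λ : ℝ)) := by
    rw [Finset.prod_univ_sum, Fintype.piFinset_univ, Matrix.mul_apply]
    simp only [projKernel, Matrix.of_apply, Finset.prod_mul_distrib]
  rw [hfactor]
  split_ifs with hT
  · subst hT
    refine Finset.prod_congr rfl fun i _ => ?_
    by_cases hi : i ∈ T
    · simp only [hi, if_true, sub_mul, ite_mul, one_mul, zero_mul]
      rw [Finset.sum_sub_distrib, ← Finset.mul_sum, sum_ite_sub_inv_card, mul_zero, sub_zero,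
        Finset.sum_ite_eq, if_pos (Finset.mem_univ _)]
    · simp [hi]
  · obtain ⟨i, hi⟩ : ∃ i, ¬(i ∈ T ↔ i ∈ T') := by
      by_contra! h
      exact hT (Finset.ext h)
    refine Finset.prod_eq_zero (Finset.mem_univ i) ?_
    by_cases hiT : i ∈ T <;> by_cases hiT' : i ∈ T' <;>
      simp only [hiT, hiT', iff_true, not_true, iff_false, not_false_iff, if_true, if_false,
        ← Finset.mul_sum, ← Finset.sum_mul, eq_comm (a := y i), sum_ite_sub_inv_card, zero_mul,
        mul_zero] at hi ⊢

lemma sum_projKernel_apply (T : Finset V) (y : V → Λ) :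
    ∑ x, projKernel T x y = if T = ∅ then 1 else 0 := by
  simp only [projKernel, Matrix.of_apply]
  rw [← Fintype.piFinset_univ, ← Finset.prod_univ_sum (fun _ => Finset.univ) fun i a =>
    if i ∈ T then (if a = y i then 1 else 0) - 1 / (Fintype.card Λ : ℝ)
      else 1 / (Fintype.card Λ : ℝ)]
  split_ifs with h
  · simp [h]
  · obtain ⟨i, hi⟩ := Finset.nonempty_iff_ne_empty.2 h
    refine Finset.prod_eq_zero (Finset.mem_univ i) ?_
    simp only [hi, if_true, sum_ite_sub_inv_card]

lemma sum_projKernel_mulVec_mul_of_ne {T T' : Finset V} (h : T ≠ T') (v : (V → Λ) → ℝ) :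
    ∑ x, (projKernel T).mulVec v x * (projKernel T').mulVec v x = 0 := by
  change (projKernel T).mulVec v ⬝ᵥ (projKernel T').mulVec v = 0
  rw [Matrix.dotProduct_mulVec, Matrix.vecMul_mulVec, projKernel_transpose, projKernel_mul,
    if_neg h, Matrix.vecMul_zero, zero_dotProduct]

lemma sum_sq_sum_projKernel_mulVec (c : Finset V → ℝ) (v : (V → Λ) → ℝ) :
    ∑ x, (∑ T, c T * (projKernel T).mulVec v x) ^ 2 =
      ∑ T, c T ^ 2 * ∑ x, (projKernel T).mulVec v x ^ 2 := by
  simp only [pow_two, Finset.sum_mul_sum]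
  rw [Finset.sum_comm]
  refine Finset.sum_congr rfl fun T _ => ?_
  rw [Finset.sum_comm, Fintype.sum_eq_single T fun T' hT' => ?_]
  · rw [Finset.mul_sum]
    exact Finset.sum_congr rfl fun x _ => by ring
  · rw [← mul_zero (c T * c T'), ← sum_projKernel_mulVec_mul_of_ne hT'.symm v, Finset.mul_sum]
    exact Finset.sum_congr rfl fun x _ => by ring

lemma sum_sum_projKernel_mulVec_sq (v : (V → Λ) → ℝ) :
    ∑ T, ∑ x, (projKernel T).mulVec v x ^ 2 = ∑ x, v x ^ 2 := by
  have hsum : ∀ x, ∑ T, (projKernel T).mulVec v x = v x := fun x => by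
    rw [← Finset.sum_apply, ← Matrix.sum_mulVec, sum_projKernel, Matrix.one_mulVec]
  simpa [hsum] using (sum_sq_sum_projKernel_mulVec (fun _ => 1) v).symm

end ProjKernel

section ConstrainedProj

variable {V Λ : Type*} [Fintype V] [DecidableEq V] [Fintype Λ] [DecidableEq Λ] [AddCommGroup Λ]

/-- Translating coordinate `i` permutes the level sets of `s` and preserves `g`, so each level set
carries the same share of the sum of `g`. -/
lemma card_mul_sum_level {i : V} {s : (V → Λ) → Λ}
    (hs : ∀ x c, s (x + Pi.single i c) = s x + c)
    {g : (V → Λ) → ℝ} (hg : ∀ x c, g (x + Pi.single i c) = g x) :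
    (Fintype.card Λ : ℝ) * ∑ x, (if s x = 0 then g x else 0) = ∑ x, g x := by
  have hlevel : ∀ c, ∑ x, (if s x = c then g x else 0) = ∑ x, (if s x = 0 then g x else 0) := by
    intro c
    rw [← Equiv.sum_comp (Equiv.addRight (Pi.single i c : V → Λ))]
    simp [hs, hg]
  have hpartition : ∑ x, g x = ∑ c, ∑ x, (if s x = c then g x else 0) := by
    rw [Finset.sum_comm]
    simp
  rw [hpartition, Finset.sum_congr rfl fun c _ => hlevel c]
  simp

/-- The matrix with a row `(z, x)` for every `x` satisfying the constraint `s z x = 0`, and the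
coefficient `a z T` on the projection onto `T`. -/
noncomputable def constrainedProj {Z : Type*} (s : Z → (V → Λ) → Λ) (a : Z → Finset V → ℝ) :
    Matrix (Z × (V → Λ)) (V → Λ) ℝ :=
  Matrix.of fun r y =>
    if s r.1 r.2 = 0 then √(Fintype.card Λ) * ∑ T, a r.1 T * projKernel T r.2 y else 0

variable [Nonempty Λ] {κ : Type*}

lemma sum_constrainedProj {Z : Type*} [Fintype Z] {s : Z → (V → Λ) → Λ} {a : Z → Finset V → ℝ}
    (pos : Z → κ → V) (hs : ∀ z t x c, s z (x + Pi.single (pos z t) c) = s z x + c)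
    (ha : ∀ z T, ∃ t, a z T ≠ 0 → pos z t ∉ T) (ha₀ : ∀ z, a z ∅ = 1) (y : V → Λ) :
    √(Fintype.card Λ) * ∑ r, constrainedProj s a r y = Fintype.card Z := by
  have hT : ∀ z T, (Fintype.card Λ : ℝ) *
      (a z T * ∑ x, if s z x = 0 then projKernel T x y else 0) = if T = ∅ then 1 else 0 := by
    intro z T
    obtain ⟨t, ht⟩ := ha z T
    rcases eq_or_ne (a z T) 0 with h0 | h0
    · have : T ≠ ∅ := by
        rintro rfl
        exact one_ne_zero ((ha₀ z).symm.trans h0)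
      simp [h0, this]
    · rw [mul_left_comm, card_mul_sum_level (hs z t) fun x c =>
        projKernel_add_single (ht h0) _ _ _, sum_projKernel_apply]
      split_ifs with hT
      · rw [hT, ha₀, one_mul]
      · rw [mul_zero]
  have hz : ∀ z, √(Fintype.card Λ) * ∑ x, constrainedProj s a (z, x) y = 1 := by
    intro z
    calc √(Fintype.card Λ) * ∑ x, constrainedProj s a (z, x) y
        = ∑ x, if s z x = 0 then Fintype.card Λ * ∑ T, a z T * projKernel T x y else 0 := by
          rw [Finset.mul_sum]
          refine Finset.sum_congr rfl fun x _ => ?_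
          simp only [constrainedProj, Matrix.of_apply, mul_ite, mul_zero, ← mul_assoc,
            Real.mul_self_sqrt (Nat.cast_nonneg _)]
      _ = ∑ T, (Fintype.card Λ : ℝ) *
            (a z T * ∑ x, if s z x = 0 then projKernel T x y else 0) := by
          simp only [Finset.mul_sum]
          rw [Finset.sum_comm]
          refine Finset.sum_congr rfl fun x _ => ?_
          split_ifs <;> simp
      _ = 1 := by simp [hT]
  rw [Fintype.sum_prod_type, Finset.mul_sum]
  simp [hz]

variable [Fintype κ]

/-- A coefficient `a T` is charged to a coordinate `pos t ∉ T`: the projections charged to `t` do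
not see the coordinate `pos t`, so the constraint costs them exactly a factor `card Λ`. -/
lemma sum_constrained_sq_le {s : (V → Λ) → Λ} {a : Finset V → ℝ} (pos : κ → V)
    (hs : ∀ t x c, s (x + Pi.single (pos t) c) = s x + c) (ha : ∀ T, ∃ t, a T ≠ 0 → pos t ∉ T)
    (v : (V → Λ) → ℝ) :
    Fintype.card Λ * ∑ x, (if s x = 0 then (∑ T, a T * (projKernel T).mulVec v x) ^ 2 else 0) ≤
      Fintype.card κ * ∑ T, a T ^ 2 * ∑ x, (projKernel T).mulVec v x ^ 2 := by
  classical
  choose τ hτ using ha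
  set g : κ → (V → Λ) → ℝ := fun t x =>
    ∑ T, (if τ T = t then a T else 0) * (projKernel T).mulVec v x with hg
  have hg_sum : ∀ x, ∑ t, g t x = ∑ T, a T * (projKernel T).mulVec v x := fun x => by
    simp only [hg]
    rw [Finset.sum_comm]
    simp
  have hg_single : ∀ t x c, g t (x + Pi.single (pos t) c) = g t x := by
    intro t x c
    refine Finset.sum_congr rfl fun T _ => ?_
    split_ifs with hT
    · rcases eq_or_ne (a T) 0 with h0 | h0
      · simp only [h0, zero_mul]
      · simp only [Matrix.mulVec, dotProduct, projKernel_add_single (hT ▸ hτ T h0)]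
    · simp only [zero_mul]
  have hcauchy : ∀ x, (if s x = 0 then (∑ t, g t x) ^ 2 else 0) ≤
      Fintype.card κ * ∑ t, (if s x = 0 then g t x ^ 2 else 0) := by
    intro x
    split_ifs
    · exact sq_sum_le_card_mul_sum_sq
    · simp
  simp only [← hg_sum]
  calc Fintype.card Λ * ∑ x, (if s x = 0 then (∑ t, g t x) ^ 2 else 0)
      ≤ Fintype.card Λ * ∑ x, Fintype.card κ * ∑ t, (if s x = 0 then g t x ^ 2 else 0) := by
        gcongr with x
        exact hcauchy x
    _ = Fintype.card κ * ∑ t, Fintype.card Λ * ∑ x, (if s x = 0 then g t x ^ 2 else 0) := by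
        rw [← Finset.mul_sum, mul_left_comm, Finset.sum_comm, ← Finset.mul_sum]
    _ = Fintype.card κ * ∑ t, ∑ T, (if τ T = t then a T else 0) ^ 2 *
          ∑ x, (projKernel T).mulVec v x ^ 2 := by
        congr 1
        refine Finset.sum_congr rfl fun t _ => ?_
        rw [card_mul_sum_level (hs t) fun x c => by rw [hg_single], sum_sq_sum_projKernel_mulVec]
    _ = Fintype.card κ * ∑ T, a T ^ 2 * ∑ x, (projKernel T).mulVec v x ^ 2 := by
        rw [Finset.sum_comm]
        simp [ite_pow]

lemma sum_sq_constrainedProj_mulVec_le {Z : Type*} [Fintype Z] {s : Z → (V → Λ) → Λ}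
    {a : Z → Finset V → ℝ} (pos : Z → κ → V)
    (hs : ∀ z t x c, s z (x + Pi.single (pos z t) c) = s z x + c)
    (ha : ∀ z T, ∃ t, a z T ≠ 0 → pos z t ∉ T) {D : ℝ} (hD : ∀ T, ∑ z, a z T ^ 2 ≤ D)
    (v : (V → Λ) → ℝ) :
    ∑ r, (∑ y, constrainedProj s a r y * v y) ^ 2 ≤ Fintype.card κ * D * ∑ y, v y ^ 2 := by
  have hrow : ∀ z x, (∑ y, constrainedProj s a (z, x) y * v y) ^ 2 =
      Fintype.card Λ *
        if s z x = 0 then (∑ T, a z T * (projKernel T).mulVec v x) ^ 2 else 0 := by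
    intro z x
    simp only [constrainedProj, Matrix.of_apply]
    split_ifs with h
    · simp only [mul_assoc, ← Finset.mul_sum, mul_pow, Real.sq_sqrt (Nat.cast_nonneg _),
        Matrix.mulVec, dotProduct, Finset.sum_mul]
      rw [Finset.sum_comm]
      simp only [← Finset.mul_sum]
    · simp
  calc ∑ r, (∑ y, constrainedProj s a r y * v y) ^ 2
      ≤ ∑ z, Fintype.card κ * ∑ T, a z T ^ 2 * ∑ x, (projKernel T).mulVec v x ^ 2 := by
        rw [Fintype.sum_prod_type]
        refine Finset.sum_le_sum fun z _ => ?_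
        simp only [hrow, ← Finset.mul_sum]
        exact sum_constrained_sq_le (pos z) (hs z) (ha z) v
    _ = Fintype.card κ * ∑ T, (∑ z, a z T ^ 2) * ∑ x, (projKernel T).mulVec v x ^ 2 := by
        rw [← Finset.mul_sum, Finset.sum_comm]
        simp only [Finset.sum_mul]
    _ ≤ Fintype.card κ * ∑ T, D * ∑ x, (projKernel T).mulVec v x ^ 2 := by
        gcongr with T
        exact hD T
    _ = Fintype.card κ * D * ∑ y, v y ^ 2 := by
        rw [← Finset.mul_sum, sum_sum_projKernel_mulVec_sq, mul_assoc]

end ConstrainedProj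

/-! ### Adversaries for families of linear constraints -/

section LevelSets

variable {V Λ Z : Type*} [Fintype V] [DecidableEq V] [Fintype Λ] [DecidableEq Λ] [AddCommGroup Λ]
  [Fintype Z] {s : Z → (V → Λ) → Λ} {pos : Z → V}

lemma card_mul_card_level (hs : ∀ z x c, s z (x + Pi.single (pos z) c) = s z x + c) :
    (Fintype.card Λ : ℝ) * Fintype.card {r : Z × (V → Λ) // s r.1 r.2 = 0} =
      Fintype.card Z * Fintype.card (V → Λ) := by
  have hlevel : ∀ z, (Fintype.card Λ : ℝ) * ∑ x, (if s z x = 0 then 1 else 0) =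
      Fintype.card (V → Λ) := fun z => by
    rw [card_mul_sum_level (hs z) fun _ _ => rfl]
    simp
  rw [Fintype.card_subtype, ← Finset.sum_boole, Fintype.sum_prod_type, Finset.mul_sum,
    Finset.sum_congr rfl fun z _ => hlevel z]
  simp

lemma card_le_two_mul_card_forall_ne_zero
    (hs : ∀ z x c, s z (x + Pi.single (pos z) c) = s z x + c)
    (hZ : 2 * Fintype.card Z ≤ Fintype.card Λ) :
    (Fintype.card (V → Λ) : ℝ) ≤ 2 * Fintype.card {y : V → Λ // ∀ z, s z y ≠ 0} := by
  have hunion : Fintype.card (V → Λ) ≤ Fintype.card {y : V → Λ // ∀ z, s z y ≠ 0} +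
      Fintype.card {r : Z × (V → Λ) // s r.1 r.2 = 0} := by
    rw [Fintype.card_subtype, Fintype.card_subtype, ← Finset.card_univ,
      ← Finset.card_filter_add_card_filter_not (fun y : V → Λ => ∀ z, s z y ≠ 0)]
    gcongr
    refine Finset.card_le_card_of_surjOn Prod.snd fun y hy => ?_
    simpa using hy
  have hZ' : (2 * Fintype.card Z : ℝ) ≤ Fintype.card Λ := mod_cast hZ
  have hΛ : (0 : ℝ) < Fintype.card Λ := mod_cast Fintype.card_pos
  have hsmall : (2 : ℝ) * Fintype.card {r : Z × (V → Λ) // s r.1 r.2 = 0} ≤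
      Fintype.card (V → Λ) := by
    refine le_of_mul_le_mul_left ?_ hΛ
    rw [mul_left_comm, card_mul_card_level hs, ← mul_assoc]
    gcongr
  have hunion' : (Fintype.card (V → Λ) : ℝ) ≤ Fintype.card {y : V → Λ // ∀ z, s z y ≠ 0} +
      Fintype.card {r : Z × (V → Λ) // s r.1 r.2 = 0} := mod_cast hunion
  linarith

end LevelSets

section DiffCoef

variable {V Λ Z : Type*} [DecidableEq V] {a : Z → Finset V → ℝ}

/-- The coefficients that represent `constrainedProj s a` on the pairs of inputs that differ at the
position `i`: there the projections onto `T` and onto `insert i T` have opposite entries. -/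
def diffCoef (a : Z → Finset V → ℝ) (i : V) (z : Z) (T : Finset V) : ℝ :=
  if i ∈ T then 0 else a z T - a z (insert i T)

lemma exists_notMem_of_diffCoef_ne_zero {κ : Type*} {pos : Z → κ → V}
    (ha : ∀ z T, ∃ t, a z T ≠ 0 → pos z t ∉ T) (i : V) (z : Z) (T : Finset V) :
    ∃ t, diffCoef a i z T ≠ 0 → pos z t ∉ T := by
  rcases eq_or_ne (a z T) 0 with h0 | h0
  · obtain ⟨t, ht⟩ := ha z (insert i T)
    refine ⟨t, fun hne hT => ht (fun h0' => hne ?_) (Finset.mem_insert_of_mem hT)⟩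
    simp [diffCoef, h0, h0']
  · obtain ⟨t, ht⟩ := ha z T
    exact ⟨t, fun _ => ht h0⟩

variable [Fintype V] [Fintype Λ] [DecidableEq Λ]

lemma sum_mul_projKernel_of_ne (c : Finset V → ℝ) {i : V} {x y : V → Λ} (h : x i ≠ y i) :
    ∑ T, c T * projKernel T x y =
      ∑ T, (if i ∈ T then 0 else c T - c (insert i T)) * projKernel T x y := by
  have hinsert : ∑ T with i ∈ T, c T * projKernel T x y =
      ∑ T with i ∉ T, c (insert i T) * projKernel (insert i T) x y := by
    refine Finset.sum_bij' (fun T _ => T.erase i) (fun T _ => insert i T) ?_ ?_ ?_ ?_ ?_ <;>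
      simp +contextual [Finset.insert_erase]
  rw [← Finset.sum_filter_add_sum_filter_not _ (i ∈ ·), hinsert, ← Finset.sum_add_distrib,
    Finset.sum_filter]
  refine Finset.sum_congr rfl fun T _ => ?_
  split_ifs with hi
  · rw [zero_mul]
  · rw [projKernel_insert hi h]
    ring

lemma constrainedProj_eq_of_ne [AddCommGroup Λ] (s : Z → (V → Λ) → Λ) (a : Z → Finset V → ℝ)
    {i : V} {r : Z × (V → Λ)} {y : V → Λ} (h : r.2 i ≠ y i) :
    constrainedProj s a r y = constrainedProj s (diffCoef a i) r y := by
  simp only [constrainedProj, Matrix.of_apply, diffCoef, sum_mul_projKernel_of_ne (a r.1) h]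

end DiffCoef

lemma sum_constrainedProj_level {V Λ Z κ : Type*} [Fintype V] [DecidableEq V] [Fintype Λ]
    [DecidableEq Λ] [AddCommGroup Λ] [Nonempty Λ] [Fintype Z] {s : Z → (V → Λ) → Λ}
    {a : Z → Finset V → ℝ} {pos : Z → κ → V}
    (hs : ∀ z t x c, s z (x + Pi.single (pos z t) c) = s z x + c)
    (ha : ∀ z T, ∃ t, a z T ≠ 0 → pos z t ∉ T) (ha₀ : ∀ z, a z ∅ = 1) (y : V → Λ) :
    ∑ r : {r : Z × (V → Λ) // s r.1 r.2 = 0}, constrainedProj s a r.1 y =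
      Fintype.card Z / √(Fintype.card Λ) := by
  have hΛ : (0 : ℝ) < Fintype.card Λ := mod_cast Fintype.card_pos
  rw [eq_div_iff (Real.sqrt_pos.2 hΛ).ne', mul_comm, ← sum_constrainedProj pos hs ha ha₀ y]
  congr 1
  refine Fintype.sum_of_injective Subtype.val Subtype.val_injective _ _ (fun r hr => ?_)
    fun _ => rfl
  rw [constrainedProj, Matrix.of_apply, if_neg fun h => hr ⟨⟨r, h⟩, rfl⟩]

lemma sum_one_div_sqrt_card_sq (R : Type*) [Fintype R] [Nonempty R] :
    ∑ _r : R, (1 / √(Fintype.card R : ℝ)) ^ 2 = 1 := by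
  simp

/-- The dual-rail encoding: every bit of every word is spelled as a pair of complementary bits. -/
def dualRail {V : Type*} {w : ℕ} (x : V → Fin w → ZMod 2) (e : V × Fin w × ZMod 2) : Bool :=
  decide (x e.1 e.2.1 = e.2.2)

section OfConstraints

variable {V Z κ : Type} [DecidableEq V] [Fintype Z] [Fintype κ]
  {w : ℕ} {s : Z → (V → Fin w → ZMod 2) → Fin w → ZMod 2} {a : Z → Finset V → ℝ}
  {pos : Z → κ → V}

lemma opNormLE_diffPart_constrainedProj [Fintype V]
    (hs : ∀ z t x c, s z (x + Pi.single (pos z t) c) = s z x + c)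
    (ha : ∀ z T, ∃ t, a z T ≠ 0 → pos z t ∉ T) {D : ℝ} (hD₀ : 0 < Fintype.card κ * D)
    {e : V × Fin w × ZMod 2} (hD : ∀ T, ∑ z, diffCoef a e.1 z T ^ 2 ≤ D)
    {R C : Type*} [Fintype R] [Fintype C] {f : R → V → Fin w → ZMod 2}
    {g : C → Z × (V → Fin w → ZMod 2)} (hf : f.Injective) (hg : g.Injective) :
    OpNormLE (diffPart (fun r => dualRail (f r)) (fun c => dualRail (g c).2)
      (Matrix.of fun r c => constrainedProj s a (g c) (f r)) e) √(Fintype.card κ * D) := by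
  have hproj : OpNormLE (constrainedProj s (diffCoef a e.1)) √(Fintype.card κ * D) := by
    refine OpNormLE.of_sum_sq_mulVec_le (Real.sqrt_pos.2 hD₀) fun v => ?_
    rw [Real.sq_sqrt hD₀.le]
    exact sum_sq_constrainedProj_mulVec_le pos hs
      (exists_notMem_of_diffCoef_ne_zero ha e.1) hD v
  convert (hproj.transpose.bicolor (dualRail · e) (dualRail ·.2 e)).submatrix hf hg using 1
  ext r c
  simp only [diffPart, Matrix.of_apply, Matrix.submatrix_apply, Matrix.transpose_apply]
  split_ifs with h
  · rfl
  · refine constrainedProj_eq_of_ne s a fun h' => h ?_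
    simp only [dualRail, h']

lemma sqrt_half_le_of_mul_eq {y z q c N : ℝ} (hy₀ : 0 < y) (hz₀ : 0 < z) (hq₀ : 0 < q)
    (hc₀ : 0 < c) (hN₀ : 0 < N) (hy : N ≤ 2 * y) (hc : q * c = z * N) :
    √(z / 2) ≤ y * (z / √q) * (1 / √y * (1 / √c)) := by
  have hsq : (y * (z / √q) * (1 / √y * (1 / √c))) ^ 2 = y * z / N := by
    simp only [mul_pow, div_pow, Real.sq_sqrt, hq₀.le, hy₀.le, hc₀.le]
    field_simp
    exact hc.symm
  refine Real.sqrt_le_iff.2 ⟨by positivity, ?_⟩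
  rw [hsq, div_le_div_iff₀ two_pos hN₀]
  nlinarith

/-- The rows of the adversary matrix are the inputs that violate all the constraints, its columns
the inputs with a distinguished satisfied constraint. -/
theorem HasAdversary.of_constraints [Finite V] [Nonempty Z]
    {F : (V × Fin w × ZMod 2 → Bool) → Bool}
    (hF : ∀ x, F (dualRail x) = true ↔ ∀ z, s z x ≠ 0)
    (hs : ∀ z t x c, s z (x + Pi.single (pos z t) c) = s z x + c)
    (ha : ∀ z T, ∃ t, a z T ≠ 0 → pos z t ∉ T) (ha₀ : ∀ z, a z ∅ = 1) {D : ℝ} (hD₀ : 0 < D)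
    (hD : ∀ i T, ∑ z, diffCoef a i z T ^ 2 ≤ D) (hw : 2 * Fintype.card Z ≤ 2 ^ w) :
    HasAdversary F (√(Fintype.card Z / 2) / √(Fintype.card κ * D)) := by
  have := Fintype.ofFinite V
  set Y := {y : V → Fin w → ZMod 2 // ∀ z, s z y ≠ 0}
  set Q := {r : Z × (V → Fin w → ZMod 2) // s r.1 r.2 = 0}
  set q : ℝ := (Fintype.card (Fin w → ZMod 2) : ℝ) with hq
  set N : ℝ := (Fintype.card (V → Fin w → ZMod 2) : ℝ) with hN
  obtain ⟨t, -⟩ := ha (Classical.arbitrary Z) ∅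
  have hκ : (0 : ℝ) < Fintype.card κ := mod_cast Fintype.card_pos_iff.2 ⟨t⟩
  have hZ : (0 : ℝ) < Fintype.card Z := mod_cast Fintype.card_pos
  have hq₀ : 0 < q := by rw [hq]; exact mod_cast Fintype.card_pos
  have hN₀ : 0 < N := by rw [hN]; exact mod_cast Fintype.card_pos
  have hQ : q * Fintype.card Q = Fintype.card Z * N :=
    card_mul_card_level (pos := fun z => pos z t) fun z => hs z t
  have hY : N ≤ 2 * Fintype.card Y :=
    card_le_two_mul_card_forall_ne_zero (pos := fun z => pos z t) (fun z => hs z t)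
      (by simpa [ZMod.card] using hw)
  have hY₀ : (0 : ℝ) < Fintype.card Y := by linarith
  have hQ₀ : (0 : ℝ) < Fintype.card Q := pos_of_mul_pos_right (hQ ▸ mul_pos hZ hN₀) hq₀.le
  have : Nonempty Y := Fintype.card_pos_iff.1 (mod_cast hY₀)
  have : Nonempty Q := Fintype.card_pos_iff.1 (mod_cast hQ₀)
  refine HasAdversary.of_matrix (R := Y) (C := Q) (X := fun y => dualRail y.1)
    (Y := fun r => dualRail r.1.2) (fun y => (hF _).2 y.2)
    (fun r => Bool.eq_false_iff.2 fun h => (hF _).1 h r.1.1 r.2)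
    (Matrix.of fun y r => constrainedProj s a r.1 y.1) (sum_one_div_sqrt_card_sq Y)
    (sum_one_div_sqrt_card_sq Q) (by positivity) (by positivity) ?_ fun e =>
    opNormLE_diffPart_constrainedProj hs ha (mul_pos hκ hD₀) (hD e.1) Subtype.val_injective
      Subtype.val_injective
  have hform : ∑ y : Y, ∑ r : Q, constrainedProj s a r.1 y.1 *
      (1 / √(Fintype.card Y) * (1 / √(Fintype.card Q))) =
      Fintype.card Y * (Fintype.card Z / √q) *
        (1 / √(Fintype.card Y) * (1 / √(Fintype.card Q))) := by
    simp only [← Finset.sum_mul, Q, sum_constrainedProj_level hs ha ha₀]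
    simp [q]
  simp only [Matrix.of_apply, hform]
  exact sqrt_half_le_of_mul_eq hY₀ hZ hq₀ hQ₀ hN₀ hY hQ

end OfConstraints

/-! ### The block `k`-sum function -/

/-- The positions of the dual-rail encoding of `k` blocks of `n` words of `w` bits. -/
abbrev KSumIdx (k n w : ℕ) : Type := (Fin k × Fin n) × Fin w × ZMod 2

/-- One word can be chosen from each block so that the words sum to zero. -/
def KSum {k n w : ℕ} (z : KSumIdx k n w → Bool) : Prop :=
  ∃ (σ : Fin k → Fin n) (a : Fin k → Fin w → ZMod 2), ∑ t, a t = 0 ∧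
    ∀ t b, z ((t, σ t), b, a t b) = true

/-- The negated block `k`-sum function. -/
noncomputable def noKSum (k n w : ℕ) (z : KSumIdx k n w → Bool) : Bool := ofProp (¬KSum z)

lemma ofProp_eq_true_iff {P : Prop} : ofProp P = true ↔ P :=
  @decide_eq_true_iff P (Classical.propDecidable P)

lemma ofProp_eq_false_iff {P : Prop} : ofProp P = false ↔ ¬P := by
  rw [← Bool.not_eq_true, ofProp_eq_true_iff]

lemma kSum_dualRail {k n w : ℕ} (x : Fin k × Fin n → Fin w → ZMod 2) :
    KSum (dualRail x) ↔ ∃ σ : Fin k → Fin n, ∑ t, x (t, σ t) = 0 := by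
  constructor
  · rintro ⟨σ, a, ha, hz⟩
    have hx : ∀ t, x (t, σ t) = a t := fun t => funext fun b => by simpa [dualRail] using hz t b
    exact ⟨σ, by simp only [hx, ha]⟩
  · rintro ⟨σ, h⟩
    exact ⟨σ, fun t => x (t, σ t), h, fun t b => by simp [dualRail]⟩

section KSumAdversary

variable {k n r : ℕ}

/-- The weight of the set `T` of positions for the choice `σ` of one word in each block. It
decreases slowly from `1` to `0` over `T.card ≤ r`, and is cut off once `T` contains the chosen
positions. -/
noncomputable def kSumCoef (r : ℕ) (σ : Fin k → Fin n) (T : Finset (Fin k × Fin n)) : ℝ :=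
  if ∀ t, (t, σ t) ∈ T then 0 else max (1 - (T.card : ℝ) / r) 0

lemma exists_notMem_of_kSumCoef_ne_zero [NeZero k] (r : ℕ) (σ : Fin k → Fin n)
    (T : Finset (Fin k × Fin n)) : ∃ t, kSumCoef r σ T ≠ 0 → (t, σ t) ∉ T := by
  by_cases h : ∀ t, (t, σ t) ∈ T
  · exact ⟨0, fun h0 => (h0 (if_pos h)).elim⟩
  · obtain ⟨t, ht⟩ := not_forall.1 h
    exact ⟨t, fun _ => ht⟩

lemma kSumCoef_empty [NeZero k] (r : ℕ) (σ : Fin k → Fin n) : kSumCoef r σ ∅ = 1 := by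
  simp [kSumCoef]

/-- A choice that is completed by `i` uses `i` in its own block and elements of `T` elsewhere. -/
lemma card_filter_forall_mem_insert_le (i : Fin k × Fin n) (T : Finset (Fin k × Fin n)) :
    (Finset.univ.filter fun σ : Fin k → Fin n =>
      (∀ t, (t, σ t) ∈ insert i T) ∧ ¬∀ t, (t, σ t) ∈ T).card ≤ T.card ^ (k - 1) := by
  have hsub : (Finset.univ.filter fun σ : Fin k → Fin n =>
      (∀ t, (t, σ t) ∈ insert i T) ∧ ¬∀ t, (t, σ t) ∈ T) ⊆
      Fintype.piFinset fun t => if t = i.1 then {i.2} else T.image Prod.snd := by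
    intro σ hσ
    simp only [Finset.mem_filter, Finset.mem_univ, true_and, not_forall] at hσ
    obtain ⟨hins, t', ht'⟩ := hσ
    have hi : (t', σ t') = i := (Finset.mem_insert.1 (hins t')).resolve_right ht'
    refine Fintype.mem_piFinset.2 fun t => ?_
    split_ifs with ht
    · rw [Finset.mem_singleton, ht, ← hi]
    · exact Finset.mem_image.2
        ⟨_, (Finset.mem_insert.1 (hins t)).resolve_left fun h => ht (congrArg Prod.fst h), rfl⟩
  refine (Finset.card_le_card hsub).trans ?_
  rw [Fintype.card_piFinset, ← Finset.mul_prod_erase _ _ (Finset.mem_univ i.1), if_pos rfl,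
    Finset.card_singleton, one_mul]
  refine (Finset.prod_le_pow_card _ _ T.card fun t ht => ?_).trans ?_
  · rw [if_neg (Finset.ne_of_mem_erase ht)]
    exact Finset.card_image_le
  · rw [Finset.card_erase_of_mem (Finset.mem_univ _), Finset.card_univ, Fintype.card_fin]

lemma max_one_sub_div_sq_le (hr : 0 < r) (c : ℕ) :
    max (1 - (c : ℝ) / r) 0 ^ 2 ≤ if c ≤ r then 1 else 0 := by
  have hr' : (0 : ℝ) < r := Nat.cast_pos.2 hr
  split_ifs with hc
  · refine pow_le_one₀ (le_max_right _ _) (max_le ?_ zero_le_one)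
    exact sub_le_self _ (by positivity)
  · have hcr : (r : ℝ) ≤ c := mod_cast (not_le.1 hc).le
    rw [max_eq_right (sub_nonpos.2 ((one_le_div hr').2 hcr)), zero_pow two_ne_zero]

lemma sub_max_one_sub_div_sq_le (r c : ℕ) :
    (max (1 - (c : ℝ) / r) 0 - max (1 - ((c + 1 : ℕ) : ℝ) / r) 0) ^ 2 ≤ 1 / (r : ℝ) ^ 2 := by
  rw [← one_div_pow, sq_le_sq, abs_of_nonneg (by positivity : (0 : ℝ) ≤ 1 / r)]
  refine (abs_max_sub_max_le_abs _ _ _).trans_eq ?_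
  rw [show 1 - (c : ℝ) / r - (1 - ((c + 1 : ℕ) : ℝ) / r) = 1 / r by push_cast; ring,
    abs_of_nonneg (by positivity)]

lemma diffCoef_kSumCoef_sq_le (hr : 0 < r) {i : Fin k × Fin n} {T : Finset (Fin k × Fin n)}
    (hi : i ∉ T) (σ : Fin k → Fin n) : diffCoef (kSumCoef r) i σ T ^ 2 ≤
      (if (∀ t, (t, σ t) ∈ insert i T) ∧ ¬∀ t, (t, σ t) ∈ T then
        (if T.card ≤ r then 1 else 0) else 0) + 1 / (r : ℝ) ^ 2 := by
  have hpos : (0 : ℝ) ≤ 1 / (r : ℝ) ^ 2 := by positivity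
  simp only [diffCoef, if_neg hi, kSumCoef]
  by_cases hT : ∀ t, (t, σ t) ∈ T
  · have hins : ∀ t, (t, σ t) ∈ insert i T := fun t => Finset.mem_insert_of_mem (hT t)
    rw [if_pos hT, if_pos hins, if_neg fun h => h.2 hT]
    simp
  by_cases hins : ∀ t, (t, σ t) ∈ insert i T
  · rw [if_neg hT, if_pos hins, if_pos ⟨hins, hT⟩, sub_zero]
    exact le_add_of_le_of_nonneg (max_one_sub_div_sq_le hr _) hpos
  · rw [if_neg hT, if_neg hins, if_neg fun h => hins h.1, Finset.card_insert_of_notMem hi,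
      zero_add]
    exact sub_max_one_sub_div_sq_le _ _

lemma sum_diffCoef_kSumCoef_sq_le (hr : 0 < r) (i : Fin k × Fin n)
    (T : Finset (Fin k × Fin n)) :
    ∑ σ, diffCoef (kSumCoef r) i σ T ^ 2 ≤ (r : ℝ) ^ (k - 1) + (n : ℝ) ^ k / (r : ℝ) ^ 2 := by
  by_cases hi : i ∈ T
  · simp only [diffCoef, if_pos hi, zero_pow two_ne_zero, Finset.sum_const_zero]
    positivity
  refine (Finset.sum_le_sum fun σ _ => diffCoef_kSumCoef_sq_le hr hi σ).trans ?_
  rw [Finset.sum_add_distrib]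
  refine add_le_add ?_ ?_
  · rw [← Finset.sum_filter, Finset.sum_const, nsmul_eq_mul]
    split_ifs with h
    · rw [mul_one]
      exact_mod_cast (card_filter_forall_mem_insert_le i T).trans (Nat.pow_le_pow_left h (k - 1))
    · rw [mul_zero]
      positivity
  · simp [div_eq_mul_inv]

lemma sum_add_single_choice {Λ : Type*} [AddCommGroup Λ] (σ : Fin k → Fin n) (t : Fin k)
    (x : Fin k × Fin n → Λ) (c : Λ) :
    ∑ t', (x + Pi.single (t, σ t) c : Fin k × Fin n → Λ) (t', σ t') = ∑ t', x (t', σ t') + c := by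
  simp only [Pi.add_apply, Finset.sum_add_distrib]
  congr 1
  rw [Fintype.sum_eq_single t fun t' ht' => ?_, Pi.single_eq_same]
  exact Pi.single_eq_of_ne (M := fun _ => Λ) (fun h => ht' (congrArg Prod.fst h)) _

lemma hasAdversary_noKSum {w : ℕ} (hk : 0 < k) (hn : 0 < n) (hr : 0 < r)
    (hw : 2 * n ^ k ≤ 2 ^ w) : HasAdversary (noKSum k n w)
      (√((n : ℝ) ^ k / 2) / √(k * ((r : ℝ) ^ (k - 1) + (n : ℝ) ^ k / (r : ℝ) ^ 2))) := by
  have : NeZero k := ⟨hk.ne'⟩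
  have : NeZero n := ⟨hn.ne'⟩
  have h := HasAdversary.of_constraints (F := noKSum k n w)
    (s := fun (σ : Fin k → Fin n) x => ∑ t, x (t, σ t)) (pos := fun σ t => (t, σ t))
    (fun x => by simp [noKSum, ofProp_eq_true_iff, kSum_dualRail])
    sum_add_single_choice (exists_notMem_of_kSumCoef_ne_zero r) (kSumCoef_empty r)
    (by positivity) (sum_diffCoef_kSumCoef_sq_le hr) (by simpa using hw)
  simpa using h

/-- With `n = m ^ (k + 1)`, the choice `r = m ^ k` balances the two terms of the bound. -/
lemma hasAdversary_noKSum_pow {m w : ℕ} (hk : 0 < k) (hm : 0 < m)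
    (hw : 2 * m ^ ((k + 1) * k) ≤ 2 ^ w) :
    HasAdversary (noKSum k (m ^ (k + 1)) w) ((m : ℝ) ^ k / (2 * k)) := by
  refine (hasAdversary_noKSum (r := m ^ k) hk (Nat.pow_pos hm) (Nat.pow_pos hm)
    (by rwa [← pow_mul])).mono (by positivity) ?_
  have : (0 : ℝ) < m := Nat.cast_pos.2 hm
  obtain ⟨j, rfl⟩ : ∃ j, k = j + 1 := ⟨k - 1, by omega⟩
  push_cast
  set a := (m : ℝ) ^ (j + 1)
  have ha₀ : 0 < a := by positivity
  have hpow : ((m : ℝ) ^ (j + 1 + 1)) ^ (j + 1) = a ^ j * a ^ 2 := by ring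
  rw [hpow, le_div_iff₀ (by positivity)]
  refine Real.le_sqrt_of_sq_le ?_
  rw [mul_pow, Real.sq_sqrt (by positivity)]
  calc (a / (2 * (j + 1))) ^ 2 * ((j + 1) * (a ^ j + a ^ j * a ^ 2 / a ^ 2))
      = a ^ j * a ^ 2 / 2 / (j + 1) := by field_simp; ring
    _ ≤ a ^ j * a ^ 2 / 2 := div_le_self (by positivity) (by linarith [j.cast_nonneg (α := ℝ)])

end KSumAdversary

/-! ### Degree of real functions on the Boolean cube -/

/-- The real number `0` or `1` given by a Boolean value. -/
def bit (b : Bool) : ℝ := if b then 1 else 0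

/-- `f` is given on the Boolean cube by a polynomial of degree at most `d`. -/
def CubeDegreeLE {I : Type*} (f : (I → Bool) → ℝ) (d : ℕ) : Prop :=
  ∃ p : MvPolynomial I ℝ, p.totalDegree ≤ d ∧ ∀ z, MvPolynomial.eval (fun i => bit (z i)) p = f z

namespace CubeDegreeLE

variable {I J : Type*} {f g : (I → Bool) → ℝ} {d e : ℕ}

lemma mono (h : CubeDegreeLE f d) (hde : d ≤ e) : CubeDegreeLE f e := by
  obtain ⟨p, hp, h⟩ := h
  exact ⟨p, hp.trans hde, h⟩

lemma const (c : ℝ) : CubeDegreeLE (fun _ : I → Bool => c) 0 :=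
  ⟨MvPolynomial.C c, by simp, by simp⟩

lemma var (i : I) : CubeDegreeLE (fun z => bit (z i)) 1 :=
  ⟨MvPolynomial.X i, by simp, by simp⟩

lemma add (hf : CubeDegreeLE f d) (hg : CubeDegreeLE g d) :
    CubeDegreeLE (fun z => f z + g z) d := by
  obtain ⟨p, hp, hf⟩ := hf
  obtain ⟨q, hq, hg⟩ := hg
  exact ⟨p + q, (MvPolynomial.totalDegree_add _ _).trans (max_le hp hq), by simp [hf, hg]⟩

lemma mul (hf : CubeDegreeLE f d) (hg : CubeDegreeLE g e) :
    CubeDegreeLE (fun z => f z * g z) (d + e) := by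
  obtain ⟨p, hp, hf⟩ := hf
  obtain ⟨q, hq, hg⟩ := hg
  exact ⟨p * q, (MvPolynomial.totalDegree_mul _ _).trans (add_le_add hp hq), by simp [hf, hg]⟩

lemma sum {T : Type*} (s : Finset T) {f : T → (I → Bool) → ℝ}
    (h : ∀ t ∈ s, CubeDegreeLE (f t) d) : CubeDegreeLE (fun z => ∑ t ∈ s, f t z) d := by
  classical
  induction s using Finset.induction_on with
  | empty => simpa using (const (I := I) 0).mono (Nat.zero_le d)
  | insert a s ha ih =>
    simp only [Finset.sum_insert ha]
    exact (h a (Finset.mem_insert_self _ _)).add (ih fun t ht => h t (Finset.mem_insert_of_mem ht))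

lemma prod {T : Type*} (s : Finset T) {f : T → (I → Bool) → ℝ}
    (h : ∀ t ∈ s, CubeDegreeLE (f t) d) :
    CubeDegreeLE (fun z => ∏ t ∈ s, f t z) (s.card * d) := by
  classical
  induction s using Finset.induction_on with
  | empty => simpa using const (I := I) 1
  | insert a s ha ih =>
    simp only [Finset.prod_insert ha]
    rw [Finset.card_insert_of_notMem ha, add_one_mul, add_comm]
    exact (h a (Finset.mem_insert_self _ _)).mul (ih fun t ht => h t (Finset.mem_insert_of_mem ht))

lemma pow (hf : CubeDegreeLE f d) (n : ℕ) : CubeDegreeLE (fun z => f z ^ n) (n * d) := by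
  simpa using prod (Finset.range n) fun _ _ => hf

lemma polynomial_eval (hf : CubeDegreeLE f d) (r : Polynomial ℝ) :
    CubeDegreeLE (fun z => r.eval (f z)) (r.natDegree * d) := by
  simp only [Polynomial.eval_eq_sum_range]
  refine sum _ fun i hi => ((const (r.coeff i)).mul (hf.pow i)).mono ?_
  rw [zero_add]
  exact Nat.mul_le_mul_right _ (Nat.lt_succ_iff.1 (Finset.mem_range.1 hi))

lemma comap (hf : CubeDegreeLE f d) (ι : I → J) :
    CubeDegreeLE (fun z : J → Bool => f fun i => z (ι i)) d := by
  obtain ⟨p, hp, hf⟩ := hf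
  refine ⟨MvPolynomial.rename ι p, (MvPolynomial.totalDegree_rename_le _ _).trans hp, fun z => ?_⟩
  rw [MvPolynomial.eval_rename]
  exact hf _

lemma literal (i : I) (b : Bool) : CubeDegreeLE (fun z => if z i = b then 1 else 0) 1 := by
  cases b
  · convert ((const (I := I) 1).mono zero_le_one).add ((const (-1)).mul (var i)) using 2 with z
    cases z i <;> simp [bit]
  · exact var i

lemma case_distinction {A : Type*} [Fintype A] (ι : A → I)
    {f : (A → Bool) → (I → Bool) → ℝ} (h : ∀ g, CubeDegreeLE (f g) d) :
    CubeDegreeLE (fun z => f (fun a => z (ι a)) z) (Fintype.card A + d) := by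
  classical
  have hcase : ∀ g : A → Bool, CubeDegreeLE
      (fun z => (∏ a, if z (ι a) = g a then (1 : ℝ) else 0) * f g z) (Fintype.card A + d) := by
    intro g
    simpa using (prod Finset.univ fun a _ => literal (ι a) (g a)).mul (h g)
  convert sum Finset.univ fun g _ => hcase g using 2 with z
  rw [Fintype.sum_eq_single fun a => z (ι a)]
  · simp
  · intro g hg
    obtain ⟨a, ha⟩ := Function.ne_iff.1 hg
    rw [Finset.prod_eq_zero (Finset.mem_univ a) (if_neg ha.symm), zero_mul]

end CubeDegreeLE

/-! ### Certificates checked by polynomials of low degree -/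

/-- The inputs with `F x = b` are those having a certificate `y` that passes at most `M` checks,
each of which has degree at most `s` in the bits of `x` and of `y`. -/
def HasCert {I : Type*} (F : (I → Bool) → Bool) (b : Bool) (M s : ℕ) : Prop :=
  ∃ (Y P : Type) (_ : Fintype Y) (_ : Fintype P) (_ : Nonempty P)
    (chk : P → (I ⊕ Y → Bool) → Bool), Fintype.card P ≤ M ∧
      (∀ p, CubeDegreeLE (fun z => bit (chk p z)) s) ∧
      ∀ x, F x = b ↔ ∃ y : Y → Bool, ∀ p, chk p (Sum.elim x y) = true

lemma HasCert.mono {I : Type*} {F : (I → Bool) → Bool} {b : Bool} {M M' s s' : ℕ}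
    (h : HasCert F b M s) (hM : M ≤ M') (hs : s ≤ s') : HasCert F b M' s' := by
  obtain ⟨Y, P, _, _, _, chk, hcard, hdeg, hcert⟩ := h
  exact ⟨Y, P, ‹_›, ‹_›, ‹_›, chk, hcard.trans hM, fun p => (hdeg p).mono hs, hcert⟩

lemma hasCert_eval (b : Bool) : HasCert (fun z : Unit → Bool => z ()) b 1 1 := by
  refine ⟨Empty, Unit, inferInstance, inferInstance, inferInstance,
    fun _ z => decide (z (Sum.inl ()) = b), by simp, fun _ => ?_, fun x =>
    ⟨fun h => ⟨Empty.elim, fun _ => decide_eq_true h⟩, fun ⟨_, hy⟩ => of_decide_eq_true (hy ())⟩⟩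
  simpa [bit] using CubeDegreeLE.literal (Sum.inl () : Unit ⊕ Empty) b

section ComposeCheck

variable {E I A P₀ Y P : Type*} {ok : (A → Bool) → Prop} {sel : (A → Bool) → P₀ → Option E}
  {chk : P → (I ⊕ Y → Bool) → Bool}

/-- The place of the inner input and of the inner certificate number `e` in the composed input and
certificate. -/
def innerPos (A : Type*) (e : E) : I ⊕ Y → (E × I) ⊕ (A ⊕ E × Y) :=
  Sum.map (fun i => (e, i)) fun y => Sum.inr (e, y)

lemma elim_comp_innerPos (e : E) (x : E × I → Bool) (y : A ⊕ E × Y → Bool) :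
    (fun i => Sum.elim x y (innerPos A e i)) =
      Sum.elim (fun i => x (e, i)) fun i => y (Sum.inr (e, i)) := by
  funext i
  rcases i with i | i <;> rfl

/-- Check number `(p₀, p)` of a composed certificate: the outer certificate `g` must be acceptable,
and check `p` must pass at the position that `g` selects under number `p₀`. -/
noncomputable def composeCheck (ok : (A → Bool) → Prop) (sel : (A → Bool) → P₀ → Option E)
    (chk : P → (I ⊕ Y → Bool) → Bool) (q : P₀ × P) (z : (E × I) ⊕ (A ⊕ E × Y) → Bool) : Bool :=
  ofProp (ok fun a => z (Sum.inr (Sum.inl a))) &&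
    (sel (fun a => z (Sum.inr (Sum.inl a))) q.1).elim true
      fun e => chk q.2 fun i => z (innerPos A e i)

lemma cubeDegreeLE_composeCheck [Fintype A] {s : ℕ}
    (hs : ∀ p, CubeDegreeLE (fun z => bit (chk p z)) s) (q : P₀ × P) :
    CubeDegreeLE (fun z => bit (composeCheck ok sel chk q z)) (Fintype.card A + s) := by
  refine CubeDegreeLE.case_distinction (fun a => Sum.inr (Sum.inl a)) (f := fun g z =>
    bit (ofProp (ok g) && (sel g q.1).elim true fun e => chk q.2 fun i => z (innerPos A e i)))
    fun g => ?_
  cases ofProp (ok g)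
  · exact (CubeDegreeLE.const 0).mono (Nat.zero_le _)
  rcases sel g q.1 with _ | e
  · exact (CubeDegreeLE.const 1).mono (Nat.zero_le _)
  · exact (hs q.2).comap (innerPos A e)

lemma forall_composeCheck_iff [Nonempty P₀] [Nonempty P] (x : E × I → Bool)
    (y : A ⊕ E × Y → Bool) :
    (∀ q, composeCheck ok sel chk q (Sum.elim x y) = true) ↔ ok (fun a => y (Sum.inl a)) ∧
      ∀ p₀ e, sel (fun a => y (Sum.inl a)) p₀ = some e → ∀ p,
        chk p (Sum.elim (fun i => x (e, i)) fun i => y (Sum.inr (e, i))) = true := by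
  simp only [composeCheck, Sum.elim_inr, elim_comp_innerPos, Bool.and_eq_true, ofProp_eq_true_iff,
    forall_and, forall_const, Prod.forall]
  refine and_congr_right fun _ => forall_congr' fun p₀ => ?_
  rcases sel (fun a => y (Sum.inl a)) p₀ with _ | e <;> simp

end ComposeCheck

/-- An outer certificate for the value `b` selects positions that must carry the value `!b`; it is
completed by an inner certificate for each of them. -/
lemma HasCert.blockCompose {E A P₀ : Type} {I : Type*} [Finite E] [Fintype A] [Fintype P₀]
    [Nonempty P₀] {H : (E → Bool) → Bool} {F : (I → Bool) → Bool} {b : Bool} {M s : ℕ}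
    {ok : (A → Bool) → Prop} {sel : (A → Bool) → P₀ → Option E}
    (hH : ∀ w, H w = b ↔ ∃ g, ok g ∧ ∀ p e, sel g p = some e → w e = !b)
    (hF : HasCert F (!b) M s) :
    HasCert (blockCompose H F) b (Fintype.card P₀ * M) (Fintype.card A + s) := by
  have := Fintype.ofFinite E
  obtain ⟨Y, P, _, _, _, chk, hM, hs, hcert⟩ := hF
  refine ⟨A ⊕ E × Y, P₀ × P, inferInstance, inferInstance, inferInstance, composeCheck ok sel chk,
    ?_, cubeDegreeLE_composeCheck hs, fun x => ?_⟩
  · rw [Fintype.card_prod]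
    exact Nat.mul_le_mul_left _ hM
  simp only [QC.blockCompose, hH, forall_composeCheck_iff, hcert]
  constructor
  · rintro ⟨g, hok, hg⟩
    have hinner : ∀ e, ∃ y : Y → Bool, (∃ p₀, sel g p₀ = some e) →
        ∀ p, chk p (Sum.elim (fun i => x (e, i)) y) = true := fun e => by
      by_cases he : ∃ p₀, sel g p₀ = some e
      · obtain ⟨p₀, hp₀⟩ := he
        exact (hg p₀ e hp₀).imp fun y hy _ => hy
      · exact ⟨fun _ => false, fun h => (he h).elim⟩
    choose y hy using hinner
    exact ⟨Sum.elim g fun q => y q.1 q.2, hok, fun p₀ e he => hy e ⟨p₀, he⟩⟩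
  · rintro ⟨y, hok, hy⟩
    exact ⟨_, hok, fun p₀ e he => ⟨_, hy p₀ e he⟩⟩

section KSumCert

variable {k n w : ℕ}

lemma KSum.mono {z z' : KSumIdx k n w → Bool} (h : KSum z)
    (hz : ∀ e, z e = true → z' e = true) : KSum z' := by
  obtain ⟨σ, a, ha, h⟩ := h
  exact ⟨σ, a, ha, fun t b => hz _ (h t b)⟩

/-- The value `true` is certified by a set of positions with entry `false`. -/
lemma noKSum_eq_true_iff (z : KSumIdx k n w → Bool) :
    noKSum k n w z = true ↔ ∃ g : KSumIdx k n w → Bool, (¬KSum fun e => !g e) ∧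
      ∀ p e, (if g p then some p else none) = some e → z e = !true := by
  rw [noKSum, ofProp_eq_true_iff]
  constructor
  · exact fun h => ⟨fun e => !z e, by simpa using h, by simp⟩
  · rintro ⟨g, hg, h⟩ hz
    refine hg (hz.mono fun e he => ?_)
    by_contra hge
    have hze := h e e (if_pos (by simpa using hge))
    simp [he] at hze

/-- Reads `g (p, ·)` as the indicator function of the entry number `p` of a table. -/
noncomputable def oneHot {P E : Type*} (g : P × E → Bool) (p : P) : Option E :=
  open Classical in if h : ∃ e, g (p, e) = true then some h.choose else none

lemma oneHot_decide {P E : Type*} [DecidableEq E] (t : P → E) (p : P) :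
    oneHot (fun q => decide (q.2 = t q.1)) p = some (t p) := by
  simp [oneHot]

/-- The value `false` is certified by a table of the chosen words. -/
lemma noKSum_eq_false_iff (z : KSumIdx k n w → Bool) :
    noKSum k n w z = false ↔ ∃ g : (Fin k × Fin w) × KSumIdx k n w → Bool,
      (∃ (σ : Fin k → Fin n) (a : Fin k → Fin w → ZMod 2), ∑ t, a t = 0 ∧
        ∀ t b, oneHot g (t, b) = some ((t, σ t), b, a t b)) ∧
      ∀ p e, oneHot g p = some e → z e = !false := by
  rw [noKSum, ofProp_eq_false_iff, not_not]
  constructor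
  · rintro ⟨σ, a, ha, h⟩
    have hg := oneHot_decide fun p : Fin k × Fin w =>
      (((p.1, σ p.1), p.2, a p.1 p.2) : KSumIdx k n w)
    refine ⟨_, ⟨σ, a, ha, fun t b => hg (t, b)⟩, fun p e hpe => ?_⟩
    rw [hg, Option.some_inj] at hpe
    exact hpe ▸ h _ _
  · rintro ⟨g, ⟨σ, a, ha, h⟩, hz⟩
    exact ⟨σ, a, ha, fun t b => hz _ _ (h t b)⟩

variable {I : Type*} {F : (I → Bool) → Bool} {M s : ℕ}

lemma HasCert.noKSum_true (hk : 0 < k) (hn : 0 < n) (hw : 0 < w) (h : HasCert F false M s) :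
    HasCert (QC.blockCompose (noKSum k n w) F) true ((2 * k * w * n) * M)
      (2 * k * w * n + s) := by
  have : Nonempty (KSumIdx k n w) := ⟨(⟨0, hk⟩, ⟨0, hn⟩), ⟨0, hw⟩, 0⟩
  have hcard : Fintype.card (KSumIdx k n w) = 2 * k * w * n := by
    simp [ZMod.card]
    ring
  rw [← hcard]
  exact HasCert.blockCompose noKSum_eq_true_iff h

lemma HasCert.noKSum_false (hk : 0 < k) (hw : 0 < w) (h : HasCert F true M s) :
    HasCert (QC.blockCompose (noKSum k n w) F) false ((k * w) * M)
      (2 * k ^ 2 * w ^ 2 * n + s) := by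
  have : Nonempty (Fin k × Fin w) := ⟨⟨0, hk⟩, ⟨0, hw⟩⟩
  have hcard : Fintype.card ((Fin k × Fin w) × KSumIdx k n w) = 2 * k ^ 2 * w ^ 2 * n := by
    simp [ZMod.card]
    ring
  have hcomp := HasCert.blockCompose (noKSum_eq_false_iff (k := k) (n := n) (w := w)) h
  rwa [hcard, Fintype.card_prod, Fintype.card_fin, Fintype.card_fin] at hcomp

end KSumCert

/-- Iterate the negated block `k`-sum function `2 * d` times. -/
lemma exists_hasAdversary_hasCert {k m w : ℕ} (hk : 0 < k) (hm : 0 < m) (hw₀ : 0 < w)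
    (hw : 2 * m ^ ((k + 1) * k) ≤ 2 ^ w) (d : ℕ) :
    ∃ (I : Type) (_ : Fintype I) (F : (I → Bool) → Bool),
      HasAdversary F (((m : ℝ) ^ k / (2 * k)) ^ (2 * d)) ∧
      ∀ b, HasCert F b ((2 * k ^ 2 * w ^ 2 * m ^ (k + 1)) ^ d)
        (1 + 2 * d * (2 * k ^ 2 * w ^ 2 * m ^ (k + 1))) := by
  have hn : 0 < m ^ (k + 1) := Nat.pow_pos hm
  have hcost : 2 * k * w * m ^ (k + 1) ≤ 2 * k ^ 2 * w ^ 2 * m ^ (k + 1) := by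
    gcongr <;> exact Nat.le_self_pow two_ne_zero _
  have hH := hasAdversary_noKSum_pow hk hm hw
  induction d with
  | zero =>
    exact ⟨Unit, inferInstance, fun z => z (), by simpa using hasAdversary_eval, fun b => by
      simpa using hasCert_eval b⟩
  | succ d ih =>
    obtain ⟨I, _, F, hA, hC⟩ := ih
    refine ⟨_, inferInstance, blockCompose (noKSum k (m ^ (k + 1)) w)
      (blockCompose (noKSum k (m ^ (k + 1)) w) F), ?_, Bool.rec ?_ ?_⟩
    · convert hH.blockCompose (hH.blockCompose hA (by positivity)) (by positivity) using 1
      ring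
    · refine (((hC false).noKSum_true hk hn hw₀).noKSum_false hk hw₀).mono (by ring_nf; rfl) ?_
      linarith
    · refine (((hC true).noKSum_false hk hw₀).noKSum_true hk hn hw₀).mono (by ring_nf; rfl) ?_
      linarith

/-! ### Approximate degree -/

section SeparatingPolynomial

open Polynomial

lemma one_add_sq_mul_le_eval_chebyshev {δ : ℝ} (hδ : 0 ≤ δ) (n : ℕ) :
    1 + (n : ℝ) ^ 2 * δ ≤ (Chebyshev.T ℝ n).eval (1 + δ) ∧
      (2 * (n : ℝ) + 1) * δ ≤
        (Chebyshev.T ℝ (n + 1)).eval (1 + δ) - (Chebyshev.T ℝ n).eval (1 + δ) := by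
  induction n with
  | zero => simp
  | succ n ih =>
    obtain ⟨hT, hdiff⟩ := ih
    have hT_succ : 1 + ((n + 1 : ℕ) : ℝ) ^ 2 * δ ≤ (Chebyshev.T ℝ (n + 1 : ℕ)).eval (1 + δ) := by
      push_cast
      linarith
    refine ⟨hT_succ, ?_⟩
    have hrec : (Chebyshev.T ℝ ((n + 1 : ℕ) + 1)).eval (1 + δ) =
        2 * (1 + δ) * (Chebyshev.T ℝ (n + 1)).eval (1 + δ) - (Chebyshev.T ℝ n).eval (1 + δ) := by
      rw [Nat.cast_succ, add_assoc, one_add_one_eq_two, Chebyshev.T_add_two]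
      simp
    have hmul : δ ≤ δ * (Chebyshev.T ℝ (n + 1)).eval (1 + δ) := by
      refine le_mul_of_one_le_right hδ (le_trans ?_ hT_succ)
      exact le_add_of_nonneg_right (by positivity)
    rw [hrec]
    push_cast
    linarith

/-- A Chebyshev polynomial, rescaled so that `{1, …, M}` lies in `[-1, 1]` and `0` at distance
`1 / M` outside of it. -/
lemma exists_polynomial_abs_eval_le_half {M : ℕ} (hM : 0 < M) : ∃ r : ℝ[X],
    r.natDegree ≤ Nat.sqrt M + 1 ∧ r.eval 0 = 1 ∧
      ∀ j : ℕ, 1 ≤ j → j ≤ M → |r.eval (j : ℝ)| ≤ 1 / 2 := by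
  have hM' : (0 : ℝ) < M := Nat.cast_pos.2 hM
  set D := Nat.sqrt M + 1
  set u : ℝ[X] := C (1 + 1 / (M : ℝ)) - C (1 / (M : ℝ)) * X with hu
  set c := (Chebyshev.T ℝ D).eval (1 + 1 / (M : ℝ))
  have hc : 2 ≤ c := by
    have hD : (M : ℝ) ≤ (D : ℝ) ^ 2 := by exact_mod_cast (Nat.lt_succ_sqrt' M).le
    have hDM : 1 ≤ (D : ℝ) ^ 2 * (1 / M) := by rwa [mul_one_div, one_le_div hM']
    linarith [(one_add_sq_mul_le_eval_chebyshev (δ := 1 / (M : ℝ)) (by positivity) D).1]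
  refine ⟨C (1 / c) * (Chebyshev.T ℝ D).comp u, ?_, ?_, fun j hj hjM => ?_⟩
  · calc (C (1 / c) * (Chebyshev.T ℝ D).comp u).natDegree
        ≤ (Chebyshev.T ℝ D).natDegree * u.natDegree :=
          (natDegree_C_mul_le _ _).trans natDegree_comp_le
      _ ≤ D * 1 := by
        gcongr
        · rw [Chebyshev.natDegree_T, Int.natAbs_natCast]
        · rw [hu]
          compute_degree
      _ = D := mul_one D
  · have hu₀ : u.eval 0 = 1 + 1 / (M : ℝ) := by simp [hu]
    rw [eval_mul, eval_C, eval_comp, hu₀, one_div, inv_mul_cancel₀ (by linarith)]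
  · have huj : u.eval (j : ℝ) = 1 - (j - 1) / M := by
      simp only [hu, eval_sub, eval_mul, eval_C, eval_X]
      ring
    have habs : |u.eval (j : ℝ)| ≤ 1 := by
      have hj' : (1 : ℝ) ≤ j := by exact_mod_cast hj
      have hle : ((j : ℝ) - 1) / M ≤ 1 := by
        rw [div_le_one hM']
        linarith [(Nat.cast_le (α := ℝ)).2 hjM]
      have hnonneg : 0 ≤ ((j : ℝ) - 1) / M := div_nonneg (by linarith) hM'.le
      rw [huj, abs_le]
      constructor <;> linarith
    rw [eval_mul, eval_C, eval_comp, abs_mul, abs_of_pos (by positivity), ← mul_one (1 / 2)]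
    exact mul_le_mul (one_div_le_one_div_of_le two_pos hc)
      (Chebyshev.abs_eval_T_real_le_one _ habs) (abs_nonneg _) (by norm_num)

end SeparatingPolynomial

/-- `F` is approximated up to `ε` by a function of degree at most `d` on the Boolean cube. -/
def ApproxDegreeLE {I : Type*} (F : (I → Bool) → Bool) (ε : ℝ) (d : ℕ) : Prop :=
  ∃ h : (I → Bool) → ℝ, CubeDegreeLE h d ∧ ∀ z, |h z - bit (F z)| ≤ ε

section ApproxDegreeLE

variable {I : Type*}

lemma approxDegreeLE_forall {P : Type*} [Fintype P] {chk : P → (I → Bool) → Bool} {M s : ℕ}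
    (hM : 0 < M) (hP : Fintype.card P ≤ M) (hs : ∀ p, CubeDegreeLE (fun z => bit (chk p z)) s)
    (e : ℕ) :
    ApproxDegreeLE (fun z => ofProp (∀ p, chk p z = true)) ((1 / 2) ^ e)
      (e * ((Nat.sqrt M + 1) * s)) := by
  classical
  obtain ⟨r, hrdeg, hr₀, hr⟩ := exists_polynomial_abs_eval_le_half hM
  have hfail : ∀ z, ∑ p, (1 + (-1) * bit (chk p z)) = ((Finset.univ.filter
      fun p => ¬chk p z = true).card : ℝ) := fun z => by
    rw [← Finset.sum_boole]
    refine Finset.sum_congr rfl fun p _ => ?_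
    cases chk p z <;> simp [bit]
  have hdeg : CubeDegreeLE (fun z => ∑ p, (1 + (-1) * bit (chk p z))) s := by
    refine CubeDegreeLE.sum _ fun p _ => ((CubeDegreeLE.const 1).mono (Nat.zero_le _)).add ?_
    simpa using (CubeDegreeLE.const (-1)).mul (hs p)
  refine ⟨fun z => r.eval (∑ p, (1 + (-1) * bit (chk p z))) ^ e,
    ((hdeg.polynomial_eval r).mono (Nat.mul_le_mul_right _ hrdeg)).pow e, fun z => ?_⟩
  beta_reduce
  by_cases hz : ∀ p, chk p z = true
  · rw [ofProp_eq_true_iff.2 hz]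
    simp [hz, bit, hr₀]
  · have hcard : 1 ≤ (Finset.univ.filter fun p => ¬chk p z = true).card := by
      obtain ⟨p, hp⟩ := not_forall.1 hz
      exact Finset.card_pos.2 ⟨p, by simpa using hp⟩
    rw [ofProp_eq_false_iff.2 hz, hfail, bit, if_neg Bool.false_ne_true, sub_zero, abs_pow]
    exact pow_le_pow_left₀ (abs_nonneg _) (hr _ hcard ((Finset.card_le_univ _).trans hP)) e

lemma bit_exists_of_unique {S : Type*} [Fintype S] {Q : S → Prop}
    (hQ : ∀ σ σ', Q σ → Q σ' → σ = σ') : bit (ofProp (∃ σ, Q σ)) = ∑ σ, bit (ofProp (Q σ)) := by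
  by_cases hex : ∃ σ, Q σ
  · obtain ⟨σ, hσ⟩ := hex
    rw [Fintype.sum_eq_single σ fun σ' hne => ?_, ofProp_eq_true_iff.2 hσ,
      ofProp_eq_true_iff.2 ⟨σ, hσ⟩]
    rw [ofProp_eq_false_iff.2 fun h => hne (hQ _ _ h hσ)]
    rfl
  · rw [ofProp_eq_false_iff.2 hex, Finset.sum_eq_zero fun σ _ => ?_]
    · rfl
    · rw [ofProp_eq_false_iff.2 fun h => hex ⟨σ, h⟩]
      rfl

lemma approxDegreeLE_exists_of_unique {S : Type*} [Fintype S] {Q : S → (I → Bool) → Prop}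
    {ε : ℝ} {d : ℕ} (hQ : ∀ σ, ApproxDegreeLE (fun z => ofProp (Q σ z)) ε d)
    (huniq : ∀ z σ σ', Q σ z → Q σ' z → σ = σ') :
    ApproxDegreeLE (fun z => ofProp (∃ σ, Q σ z)) (Fintype.card S * ε) d := by
  choose h hd hε using hQ
  refine ⟨fun z => ∑ σ, h σ z, CubeDegreeLE.sum _ fun σ _ => hd σ, fun z => ?_⟩
  rw [bit_exists_of_unique (huniq z), ← Finset.sum_sub_distrib]
  refine (Finset.abs_sum_le_sum_abs _ _).trans ((Finset.sum_le_sum fun σ _ => hε σ z).trans ?_)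
  rw [Finset.sum_const, nsmul_eq_mul, Finset.card_univ]

lemma ApproxDegreeLE.mono_error {F : (I → Bool) → Bool} {ε ε' : ℝ} {d : ℕ}
    (h : ApproxDegreeLE F ε d) (hε : ε ≤ ε') : ApproxDegreeLE F ε' d :=
  h.imp fun _ hF => ⟨hF.1, fun z => (hF.2 z).trans hε⟩

end ApproxDegreeLE

/-! ### Functions on many bits with a prescribed lower bound on the degree -/

section Parity

variable {J : Type*}

/-- The parity of the bits in `T`. -/
def parity (T : Finset J) (z : J → Bool) : Bool := decide (Odd (T.filter fun i => z i = true).card)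

lemma one_sub_two_mul_bit_parity (T : Finset J) (z : J → Bool) :
    1 - 2 * bit (parity T z) = ∏ i ∈ T, (1 - 2 * bit (z i)) := by
  have hprod : ∏ i ∈ T, (1 - 2 * bit (z i)) = (-1) ^ (T.filter fun i => z i = true).card := by
    rw [← Finset.prod_const, Finset.prod_filter]
    refine Finset.prod_congr rfl fun i _ => ?_
    cases z i <;> norm_num [bit]
  rw [hprod, parity]
  rcases Nat.even_or_odd (T.filter fun i => z i = true).card with h | h
  · simp [bit, h, Nat.not_odd_iff_even.2 h]
  · norm_num [bit, h]

lemma one_sub_two_mul_bit_xor (a b : Bool) :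
    1 - 2 * bit (xor a b) = (1 - 2 * bit a) * (1 - 2 * bit b) := by
  cases a <;> cases b <;> norm_num [bit]

lemma abs_one_sub_two_mul_bit (b : Bool) : |1 - 2 * bit b| = 1 := by
  cases b <;> norm_num [bit]

/-- Multiplying by a sign does not change the error of an approximation of `1 - 2 * bit (F z)`. -/
lemma ApproxDegreeLE.xor_parity {I : Type*} {F : (I → Bool) → Bool} {ε : ℝ} {d : ℕ}
    (hF : ApproxDegreeLE F ε d) (ι : I → J) (T : Finset J) :
    ApproxDegreeLE (fun z => xor (F fun i => z (ι i)) (parity T z)) ε (d + T.card) := by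
  obtain ⟨h, hd, hε⟩ := hF
  refine ⟨fun z => 1 / 2 + (-1 / 2) * ((1 + (-2) * h fun i => z (ι i)) *
    ∏ i ∈ T, (1 + (-2) * bit (z i))), ?_, fun z => ?_⟩
  · have hleft : CubeDegreeLE (fun z : J → Bool => 1 + (-2) * h fun i => z (ι i)) d :=
      ((CubeDegreeLE.const 1).mono (Nat.zero_le _)).add (by
        simpa using (CubeDegreeLE.const (-2)).mul (hd.comap ι))
    have hright : CubeDegreeLE (fun z : J → Bool => ∏ i ∈ T, (1 + (-2) * bit (z i))) T.card := by
      simpa using CubeDegreeLE.prod T fun i _ => ((CubeDegreeLE.const 1).mono zero_le_one).add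
        ((CubeDegreeLE.const (-2)).mul (CubeDegreeLE.var i))
    exact ((CubeDegreeLE.const _).mono (Nat.zero_le _)).add (by
      simpa using (CubeDegreeLE.const (-1 / 2)).mul (hleft.mul hright))
  · have hprod : ∏ i ∈ T, (1 + (-2) * bit (z i)) = 1 - 2 * bit (parity T z) := by
      rw [one_sub_two_mul_bit_parity]
      exact Finset.prod_congr rfl fun i _ => by ring
    have hxor := one_sub_two_mul_bit_xor (F fun i => z (ι i)) (parity T z)
    calc |1 / 2 + (-1 / 2) * ((1 + (-2) * h fun i => z (ι i)) *
            ∏ i ∈ T, (1 + (-2) * bit (z i))) - bit (xor (F fun i => z (ι i)) (parity T z))|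
        = |((h fun i => z (ι i)) - bit (F fun i => z (ι i))) * (1 - 2 * bit (parity T z))| := by
          rw [hprod]
          congr 1
          linear_combination hxor / 2
      _ ≤ ε := by
          rw [abs_mul, abs_one_sub_two_mul_bit, mul_one]
          exact hε _

variable [DecidableEq J]

lemma parity_update_not {T : Finset J} {i : J} (hi : i ∈ T) (z : J → Bool) :
    parity T (Function.update z i !z i) = !parity T z := by
  have hsign : 1 - 2 * bit (parity T (Function.update z i !z i)) =
      -(1 - 2 * bit (parity T z)) := by
    rw [one_sub_two_mul_bit_parity, one_sub_two_mul_bit_parity, ← Finset.mul_prod_erase _ _ hi,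
      ← Finset.mul_prod_erase T (fun i => 1 - 2 * bit (z i)) hi, ← neg_mul]
    refine congrArg₂ (· * ·) ?_ (Finset.prod_congr rfl fun j hj => ?_)
    · rw [Function.update_self]
      cases z i <;> norm_num [bit]
    · rw [Function.update_of_ne (Finset.ne_of_mem_erase hj)]
  revert hsign
  cases parity T (Function.update z i !z i) <;> cases parity T z <;> norm_num [bit]

end Parity

section Sensitive

variable {J : Type*} [Fintype J] [DecidableEq J]

lemma sum_eq_zero_of_update_not {G : (J → Bool) → ℝ} (i : J)
    (hG : ∀ z, G (Function.update z i !z i) = -G z) : ∑ z, G z = 0 := by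
  have hinv : Function.Involutive fun z : J → Bool => Function.update z i !z i := fun z => by simp
  have hsum : ∑ z, G (Function.update z i !z i) = ∑ z, G z := Equiv.sum_comp hinv.toPerm G
  simp only [hG, Finset.sum_neg_distrib] at hsum
  linarith

/-- Every monomial of `p` misses some coordinate in `T`. -/
lemma sum_sign_mul_eval_eq_zero {g : (J → Bool) → Bool} {T : Finset J}
    (hT : ∀ i ∈ T, ∀ z, g (Function.update z i !z i) = !g z) {p : MvPolynomial J ℝ}
    (hp : p.totalDegree < T.card) :
    ∑ z, (1 - 2 * bit (g z)) * MvPolynomial.eval (fun i => bit (z i)) p = 0 := by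
  simp only [MvPolynomial.eval_eq, Finset.mul_sum]
  rw [Finset.sum_comm]
  refine Finset.sum_eq_zero fun m hm => ?_
  have hcard : m.support.card < T.card := by
    refine lt_of_le_of_lt ?_ ((MvPolynomial.le_totalDegree hm).trans_lt hp)
    rw [Finsupp.sum, Finset.card_eq_sum_ones]
    exact Finset.sum_le_sum fun i hi => Nat.one_le_iff_ne_zero.2 (Finsupp.mem_support_iff.1 hi)
  obtain ⟨i, hiT, him⟩ := Finset.exists_mem_notMem_of_card_lt_card hcard
  refine sum_eq_zero_of_update_not i fun z => ?_
  have hmonomial : ∏ j ∈ m.support, bit (Function.update z i (!z i) j) ^ m j =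
      ∏ j ∈ m.support, bit (z j) ^ m j :=
    Finset.prod_congr rfl fun j hj => by
      rw [Function.update_of_ne (ne_of_mem_of_not_mem hj him)]
  rw [hmonomial, hT i hiT]
  cases g z <;> simp [bit] <;> ring

end Sensitive

lemma card_le_totalDegree_of_approx {J : Type*} [Finite J] [DecidableEq J]
    {g : (J → Bool) → Bool} {T : Finset J}
    (hT : ∀ i ∈ T, ∀ z, g (Function.update z i !z i) = !g z) {p : MvPolynomial J ℝ}
    (hp : ∀ z, |MvPolynomial.eval (fun i => bit (z i)) p - bit (g z)| ≤ 1 / 3) :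
    T.card ≤ p.totalDegree := by
  have := Fintype.ofFinite J
  by_contra! hlt
  have hzero := sum_sign_mul_eval_eq_zero hT (p := 1 - 2 * p) ?_
  · refine (Finset.sum_pos (fun z _ => ?_) Finset.univ_nonempty).ne' hzero
    have hz := abs_le.1 (hp z)
    simp only [map_sub, map_mul, map_one, map_ofNat]
    cases hg : g z
    · simp only [hg, bit, Bool.false_eq_true, if_false] at hz ⊢
      linarith [hz.1, hz.2]
    · simp only [hg, bit, if_true] at hz ⊢
      linarith [hz.1, hz.2]
  · have hdeg := MvPolynomial.totalDegree_sub (1 : MvPolynomial J ℝ) (2 * p)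
    have hmul := MvPolynomial.totalDegree_mul (MvPolynomial.C 2) p
    rw [MvPolynomial.totalDegree_C, zero_add, map_ofNat] at hmul
    rw [MvPolynomial.totalDegree_one, max_eq_right (Nat.zero_le _)] at hdeg
    omega

/-- The total function on `n` bits given by a Boolean function. -/
def lift {n : ℕ} (g : (Fin n → Bool) → Bool) : PartialFn (Fin n) fun _ => 2 :=
  fun x => some (g fun i => decide (x i = 1))

section Lift

variable {n : ℕ} {g : (Fin n → Bool) → Bool}

lemma decide_ite_eq_one (b : Bool) : decide ((if b then (1 : Fin 2) else 0) = 1) = b := by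
  cases b <;> rfl

lemma lift_ite (g : (Fin n → Bool) → Bool) (z : Fin n → Bool) :
    lift g (fun i => if z i then 1 else 0) = some (g z) := by
  simp only [lift, decide_ite_eq_one]

lemma natCast_eq_bit (a : Fin 2) : ((a : ℕ) : ℝ) = bit (decide (a = 1)) := by
  fin_cases a <;> simp [bit]

lemma approx_lift_iff {p : MvPolynomial (Fin n) ℝ} :
    (∀ (x : Input (Fin n) fun _ => 2) b, lift g x = some b →
        |MvPolynomial.eval (fun i => ((x i : ℕ) : ℝ)) p - if b then 1 else 0| ≤ 1 / 3) ↔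
      ∀ z, |MvPolynomial.eval (fun i => bit (z i)) p - bit (g z)| ≤ 1 / 3 := by
  simp only [natCast_eq_bit]
  constructor
  · intro h z
    simpa only [decide_ite_eq_one, bit] using h _ _ (lift_ite g z)
  · intro h x b hb
    obtain rfl : g (fun i => decide (x i = 1)) = b := Option.some.inj hb
    exact h _

lemma adegq_lift_le {d : ℕ} (hg : ApproxDegreeLE g (1 / 3) d) : adegq (lift g) ≤ d := by
  obtain ⟨h, ⟨p, hp, hph⟩, hε⟩ := hg
  exact Nat.sInf_le ⟨p, hp, approx_lift_iff.2 fun z => hph z ▸ hε z⟩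

lemma card_le_adegq_lift {T : Finset (Fin n)}
    (hT : ∀ i ∈ T, ∀ z, g (Function.update z i !z i) = !g z) : T.card ≤ adegq (lift g) := by
  obtain ⟨q, -, hq⟩ := CubeDegreeLE.case_distinction (id : Fin n → Fin n)
    (f := fun z _ => bit (g z)) fun z => CubeDegreeLE.const (bit (g z))
  obtain ⟨p, hpd, hp⟩ : adegq (lift g) ∈ {d | ∃ p : MvPolynomial (Fin n) ℝ, p.totalDegree ≤ d ∧
      ∀ (x : Input (Fin n) fun _ => 2) b, lift g x = some b →
        |MvPolynomial.eval (fun i => ((x i : ℕ) : ℝ)) p - if b then 1 else 0| ≤ 1 / 3} := by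
    refine Nat.sInf_mem ⟨_, q, le_rfl, approx_lift_iff.2 fun z => ?_⟩
    simp only [hq, id_eq, sub_self, abs_zero]
    norm_num
  exact (card_le_totalDegree_of_approx hT (approx_lift_iff.1 hp)).trans hpd

lemma HasAdversary.le_mul_qq_lift {L : ℝ} (hg : HasAdversary g L) (hL : 0 < L) :
    L ≤ 40 * Qq (lift g) := by
  obtain ⟨A, _, X, K, w, hK, hX⟩ := hg
  let enc : (Fin n → Bool) → Input (Fin n) fun _ => 2 := fun z i => if z i then 1 else 0
  have henc : ∀ i, diffPart (fun r => enc (X true r)) (fun c => enc (X false c)) K i =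
      diffPart (X true) (X false) K i := fun i => by
    ext r c
    have hiff : ∀ a b : Bool, ((if a then (1 : Fin 2) else 0) = if b then 1 else 0) ↔ a = b := by
      decide
    simp only [diffPart, Matrix.of_apply, enc, hiff]
  have hadv : IsAdversary (fun r => enc (X true r)) (fun c => enc (X false c)) K (w true)
      (w false) (1 / L) := { hK with diffPart_le := fun i => henc i ▸ hK.diffPart_le i }
  have hle := hadv.one_le_mul_qq (f := lift g) (fun r => (lift_ite g _).trans (by rw [hX]))
    fun c => (lift_ite g _).trans (by rw [hX])
  rwa [mul_one_div, div_mul_eq_mul_div, one_le_div hL] at hle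

end Lift

lemma HasAdversary.extend {I J : Type*} {F : (I → Bool) → Bool} {G : (J → Bool) → Bool} {L : ℝ}
    (hF : HasAdversary F L) (hL : 0 ≤ L) {ι : I → J} (hι : Function.Injective ι)
    (hG : ∀ z, G (Function.extend ι z fun _ => false) = F z) : HasAdversary G L := by
  obtain ⟨A, _, X, K, w, hK, hX⟩ := hF
  refine ⟨A, inferInstance, fun b a => Function.extend ι (X b a) fun _ => false, K, w,
    { hK with diffPart_le := fun j => ?_ }, fun b a => (hG _).trans (hX b a)⟩
  by_cases hj : ∃ i, ι i = j
  · obtain ⟨i, rfl⟩ := hj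
    convert hK.diffPart_le i using 1
    ext r c
    simp only [diffPart, Matrix.of_apply, hι.extend_apply]
  · have hzero : diffPart (fun r => Function.extend ι (X true r) fun _ => false)
        (fun c => Function.extend ι (X false c) fun _ => false) K j = 0 := by
      ext r c
      simp [diffPart, Function.extend_apply' _ _ _ hj]
    rw [hzero]
    exact OpNormLE.zero (one_div_nonneg.2 hL)

/-- Take the exclusive or of `F` with the parity of `t` fresh bits. -/
lemma exists_le_adegq_lift {I : Type*} [Fintype I] {F : (I → Bool) → Bool} {L : ℝ} {d : ℕ}
    (hA : HasAdversary F L) (hL : 0 < L) (hF : ApproxDegreeLE F (1 / 3) d) {n t : ℕ}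
    (hn : Fintype.card I + t ≤ n) : ∃ g : (Fin n → Bool) → Bool,
      t ≤ adegq (lift g) ∧ adegq (lift g) ≤ d + t ∧ L ≤ 40 * Qq (lift g) := by
  obtain ⟨ι⟩ : Nonempty (I ↪ Fin n) := by
    rw [Function.Embedding.nonempty_iff_card_le, Fintype.card_fin]
    omega
  obtain ⟨T, hT, rfl⟩ : ∃ T ⊆ (Finset.univ.map ι)ᶜ, T.card = t := by
    refine Finset.exists_subset_card_eq ?_
    rw [Finset.card_compl, Finset.card_map, Finset.card_univ, Fintype.card_fin]
    omega
  have hιT : ∀ j ∈ T, ∀ i, ι i ≠ j := fun j hj => by simpa using hT hj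
  refine ⟨fun z => xor (F fun i => z (ι i)) (parity T z), card_le_adegq_lift fun j hj z => ?_,
    adegq_lift_le (hF.xor_parity ι T), (hA.extend hL.le ι.injective fun z => ?_).le_mul_qq_lift hL⟩
  · simp only [parity_update_not hj, Function.update_of_ne (hιT j hj _), Bool.xor_not]
  · have hpar : parity T (Function.extend ι z fun _ => false) = false := by
      have hempty : T.filter (fun j => Function.extend ι z (fun _ => false) j = true) = ∅ :=
        Finset.filter_false_of_mem fun j hj => by
          rw [Function.extend_apply' _ _ _ fun ⟨i, hi⟩ => hιT j hj i hi]
          exact Bool.false_ne_true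
      simp [parity, hempty]
    simp only [ι.injective.extend_apply, hpar, Bool.xor_false]

/-! ### Cheat sheets -/

section ConstantAdversary

variable {R C : Type*} [Fintype R] [Fintype C] {A : Matrix R C ℝ} {b : ℝ}

lemma OpNormLE.of_sum_sq_le (hb : 0 < b) (h : ∑ r, ∑ c, A r c ^ 2 ≤ b ^ 2) : OpNormLE A b := by
  refine of_sum_sq_mulVec_le hb fun v => (Finset.sum_le_sum fun r _ =>
    Finset.sum_mul_sq_le_sq_mul_sq Finset.univ (A r) v).trans ?_
  rw [← Finset.sum_mul]
  gcongr

lemma isAdversary_const {I : Type*} {β : I → Type*} [∀ i, DecidableEq (β i)] (X Y : R → ∀ i, β i)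
    (hb : Fintype.card R * b ^ 2 = 1) :
    IsAdversary X Y (Matrix.of fun _ _ => b ^ 2) (fun _ => b) (fun _ => b) 1 := by
  have hsq : ∑ _r : R, ∑ _c : R, (b ^ 2) ^ 2 = 1 := by
    simp only [Finset.sum_const, Finset.card_univ, nsmul_eq_mul]
    linear_combination (Fintype.card R * b ^ 2 + 1) * hb
  have hunit : ∑ _r : R, b ^ 2 = 1 := by simpa using hb
  refine ⟨OpNormLE.of_sum_sq_le one_pos ?_, hunit, hunit, ?_, fun i =>
    OpNormLE.of_sum_sq_le one_pos ?_⟩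
  · simp only [Matrix.of_apply, hsq, one_pow, le_refl]
  · simpa only [Matrix.of_apply, ← pow_two] using hsq
  · rw [one_pow, ← hsq]
    refine Finset.sum_le_sum fun r _ => Finset.sum_le_sum fun c _ => ?_
    simp only [diffPart, Matrix.of_apply]
    split_ifs
    · rw [zero_pow two_ne_zero]
      positivity
    · exact le_rfl

lemma opNormLE_single_row_const [DecidableEq R] (hb : 0 < b) (hbR : Fintype.card R * b ^ 2 = 1)
    (r₀ : R) : OpNormLE (Matrix.of fun r (_ : R) => if r = r₀ then b ^ 2 else 0) b := by
  refine OpNormLE.of_sum_sq_le hb (le_of_eq ?_)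
  simp only [Matrix.of_apply, Finset.sum_const, Finset.card_univ, nsmul_eq_mul]
  rw [Fintype.sum_eq_single r₀ fun r hr => by simp [hr], if_pos rfl]
  linear_combination b ^ 2 * hbR

lemma IsAdversary.sumElim {I J : Type*} {X : R → I → Bool} {Y : C → I → Bool} {K : Matrix R C ℝ}
    {u : R → ℝ} {v : C → ℝ} {μ : ℝ} (hK : IsAdversary X Y K u v μ) {X' : R → J → Bool}
    {Y' : C → J → Bool} (h : ∀ j, OpNormLE (diffPart X' Y' K j) μ) :
    IsAdversary (fun r => Sum.elim (X r) (X' r)) (fun c => Sum.elim (Y c) (Y' c)) K u v μ :=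
  { hK with diffPart_le := Sum.rec hK.diffPart_le h }

lemma opNormLE_diffPart_composeMatrix_of_single_row {A : Bool → Type*} [∀ b, Fintype (A b)]
    [∀ b, DecidableEq (A b)] {J N : Type*} [Fintype J] [DecidableEq J] [DecidableEq R]
    {X : R → J → Bool} {Y : C → J → Bool} {K : Matrix R C ℝ} {L : Matrix (A true) (A false) ℝ}
    (hL : OpNormLE L 1) (hb : 0 ≤ b) {r₀ : R}
    (hK : OpNormLE (Matrix.of fun r c => if r = r₀ then K r c else 0) b)
    {X' : (Σ r, ∀ j, A (X r j)) → N → Bool} {i : N} (hi : ∀ r, X' r i = true → r.1 = r₀) :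
    OpNormLE (diffPart X' (fun _ _ => false) (composeMatrix K X Y fun _ => L) i) b := by
  convert (hK.composeMatrix X Y fun _ => hL).restrict_rows hb (X' · i) using 1
  ext r c
  cases hr : X' r i
  · simp [diffPart, hr]
  · simp [diffPart, composeMatrix, hr, hi r hr]

end ConstantAdversary

section CheatSheet

variable {I : Type*} {Y P : Bool → Type} {c : ℕ}

/-- The input bits of the cheat sheet function: `c` inputs, and for each address in `Fin c → Bool`
a cell consisting of a flag and of room for certificates of either value at each of the `c`
inputs. -/
abbrev CheatSheetIdx (I : Type*) (Y : Bool → Type) (c : ℕ) : Type _ :=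
  (Fin c × I) ⊕ (Fin c → Bool) × (Unit ⊕ Fin c × Σ b, Y b)

/-- The positions of the `j`-th input and of the `j`-th certificate in the cell of address `ℓ`. -/
def certPos (ℓ : Fin c → Bool) (j : Fin c) : I ⊕ Y (ℓ j) → CheatSheetIdx I Y c :=
  Sum.elim (fun i => Sum.inl (j, i)) fun y => Sum.inr (ℓ, Sum.inr (j, ⟨ℓ j, y⟩))

/-- The checks of the cell of address `ℓ`: `none` tests its flag, and `some ⟨j, p⟩` performs the
check `p` of its certificate for the value `ℓ j` of the `j`-th input. -/
def cellCheck (chk : ∀ b, P b → (I ⊕ Y b → Bool) → Bool) (ℓ : Fin c → Bool) :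
    Option (Σ j, P (ℓ j)) → (CheatSheetIdx I Y c → Bool) → Bool
  | none, z => z (Sum.inr (ℓ, Sum.inl ()))
  | some q, z => chk (ℓ q.1) q.2 fun i => z (certPos ℓ q.1 i)

/-- The cheat sheet function: some cell passes all its checks. When only the inputs with value `b`
have certificates for `b`, the address of that cell is the sequence of values of the `c` inputs. -/
noncomputable def certCheatSheet (chk : ∀ b, P b → (I ⊕ Y b → Bool) → Bool)
    (z : CheatSheetIdx I Y c → Bool) : Bool :=
  ofProp (∃ ℓ, ∀ q, cellCheck chk ℓ q z = true)

variable {chk : ∀ b, P b → (I ⊕ Y b → Bool) → Bool} {F : (I → Bool) → Bool}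

lemma cellCheck_some (ℓ : Fin c → Bool) (j : Fin c) (p : P (ℓ j))
    (z : CheatSheetIdx I Y c → Bool) : cellCheck chk ℓ (some ⟨j, p⟩) z = chk (ℓ j) p
      (Sum.elim (fun i => z (Sum.inl (j, i))) fun y => z (Sum.inr (ℓ, Sum.inr (j, ⟨ℓ j, y⟩)))) :=
  congrArg (chk (ℓ j) p) (funext (Sum.rec (fun _ => rfl) fun _ => rfl))

lemma eq_of_forall_cellCheck (hchk : ∀ b x y, (∀ p, chk b p (Sum.elim x y) = true) → F x = b)
    {z : CheatSheetIdx I Y c → Bool} {ℓ : Fin c → Bool} (hz : ∀ q, cellCheck chk ℓ q z = true)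
    (j : Fin c) : F (fun i => z (Sum.inl (j, i))) = ℓ j :=
  hchk (ℓ j) _ _ fun p => cellCheck_some ℓ j p z ▸ hz (some ⟨j, p⟩)

lemma approxDegreeLE_certCheatSheet [∀ b, Fintype (P b)] {M s : ℕ}
    (hM : ∀ b, Fintype.card (P b) ≤ M) (hs : 0 < s)
    (hdeg : ∀ b p, CubeDegreeLE (fun z => bit (chk b p z)) s)
    (hchk : ∀ b x y, (∀ p, chk b p (Sum.elim x y) = true) → F x = b) :
    ApproxDegreeLE (certCheatSheet (c := c) chk) (1 / 3)
      ((c + 2) * ((Nat.sqrt (c * M + 1) + 1) * s)) := by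
  have hcard : ∀ ℓ : Fin c → Bool, Fintype.card (Option (Σ j, P (ℓ j))) ≤ c * M + 1 := fun ℓ => by
    rw [Fintype.card_option, Fintype.card_sigma]
    gcongr
    simpa using Finset.sum_le_card_nsmul Finset.univ _ M fun j _ => hM (ℓ j)
  have hdeg_cell : ∀ (ℓ : Fin c → Bool) q, CubeDegreeLE (fun z => bit (cellCheck chk ℓ q z)) s := by
    rintro ℓ (_ | ⟨j, p⟩)
    · exact (CubeDegreeLE.var _).mono hs
    · exact (hdeg (ℓ j) p).comap (certPos ℓ j)
  refine (approxDegreeLE_exists_of_unique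
    (fun ℓ => approxDegreeLE_forall (Nat.succ_pos _) (hcard ℓ) (hdeg_cell ℓ) (c + 2))
    fun z ℓ ℓ' hℓ hℓ' => funext fun j => ?_).mono_error ?_
  · rw [← eq_of_forall_cellCheck hchk hℓ j, ← eq_of_forall_cellCheck hchk hℓ' j]
  · rw [Fintype.card_fun, Fintype.card_bool, Fintype.card_fin, Nat.cast_pow, Nat.cast_ofNat,
      pow_add, ← mul_assoc, ← mul_pow]
    norm_num

/-- The cells of a cheat sheet input whose `c` inputs of `F` are `x`: only the cell of address `ℓ`
is filled, with the certificates that `cert` provides for these inputs. -/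
def writeCell (cert : ∀ b, (I → Bool) → Y b → Bool) (ℓ : Fin c → Bool) (x : Fin c × I → Bool)
    (q : (Fin c → Bool) × (Unit ⊕ Fin c × Σ b, Y b)) : Bool :=
  if q.1 = ℓ then
    Sum.elim (fun _ => true) (fun q => cert q.2.1 (fun i => x (q.1, i)) q.2.2) q.2
  else false

lemma eq_of_writeCell_eq_true {cert : ∀ b, (I → Bool) → Y b → Bool} {ℓ : Fin c → Bool}
    {x : Fin c × I → Bool} {q : (Fin c → Bool) × (Unit ⊕ Fin c × Σ b, Y b)}
    (h : writeCell cert ℓ x q = true) : ℓ = q.1 := by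
  by_contra hne
  simp [writeCell, Ne.symm hne] at h

lemma certCheatSheet_writeCell {cert : ∀ b, (I → Bool) → Y b → Bool}
    (hcert : ∀ b x, F x = b → ∀ p, chk b p (Sum.elim x (cert b x)) = true) {ℓ : Fin c → Bool}
    {x : Fin c × I → Bool} (hx : ∀ j, F (fun i => x (j, i)) = ℓ j) :
    certCheatSheet chk (Sum.elim x (writeCell cert ℓ x)) = true := by
  refine ofProp_eq_true_iff.2 ⟨ℓ, ?_⟩
  rintro (_ | ⟨j, p⟩)
  · simp [cellCheck, writeCell]
  · rw [cellCheck_some]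
    simpa [writeCell] using hcert (ℓ j) _ (hx j) p

lemma certCheatSheet_of_empty_cells (x : Fin c × I → Bool) :
    certCheatSheet chk (Sum.elim x fun _ => false) = false :=
  ofProp_eq_false_iff.2 fun ⟨_, hℓ⟩ => Bool.false_ne_true (hℓ none)

/-- Compose the constant adversary matrix on the addresses with that of `F`, between inputs whose
correct cell is filled and inputs whose cells are all empty. A bit in the cell of address `ℓ` only
distinguishes the inputs in the row `ℓ`, which has weight `2 ^ (-h)`. -/
theorem HasAdversary.certCheatSheet {L : ℝ} (hF : HasAdversary F L) (hL : 0 < L)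
    {cert : ∀ b, (I → Bool) → Y b → Bool}
    (hcert : ∀ b x, F x = b → ∀ p, chk b p (Sum.elim x (cert b x)) = true) {h : ℕ}
    (hLh : L ≤ 2 ^ h) :
    HasAdversary (certCheatSheet (c := 2 * h) chk) L := by
  classical
  obtain ⟨A, _, X, K, w, hK, hX⟩ := hF
  set b : ℝ := (1 / 2) ^ h with hb_def
  have hb : 0 < b := by positivity
  have hb_sq : (Fintype.card (Fin (2 * h) → Bool) : ℝ) * b ^ 2 = 1 := by
    rw [Fintype.card_fun, Fintype.card_bool, Fintype.card_fin, hb_def, ← pow_mul, mul_comm h,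
      Nat.cast_pow, ← mul_pow]
    norm_num
  have hbL : b ≤ 1 / L := by
    rw [hb_def, one_div_pow]
    exact one_div_le_one_div_of_le hL hLh
  have hbase := (isAdversary_const (fun ℓ : Fin (2 * h) → Bool => ℓ) (fun ℓ => ℓ) hb_sq).compose hK
    (one_div_pos.2 hL)
  rw [one_mul] at hbase
  have hadv := hbase.sumElim
    (X' := fun r => writeCell cert r.1 fun ji => X (r.1 ji.1) (r.2 ji.1) ji.2)
    (Y' := fun _ _ => false) fun q => (opNormLE_diffPart_composeMatrix_of_single_row hK.opNormLE
      hb.le (opNormLE_single_row_const hb hb_sq q.1) fun r => eq_of_writeCell_eq_true).mono hbL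
  refine ⟨fun _ => Σ ℓ : Fin (2 * h) → Bool, ∀ j, A (ℓ j), fun _ => inferInstance,
    Bool.rec _ _, _, Bool.rec _ _, hadv, Bool.rec (fun _ => certCheatSheet_of_empty_cells _)
      fun r => certCheatSheet_writeCell hcert fun j => hX (r.1 j) (r.2 j)⟩

lemma exists_lift_of_hasCert [Finite I] {L : ℝ} (hF : HasAdversary F L) (hL : 0 < L) {M s : ℕ}
    (hC : ∀ b, HasCert F b M s) (hs : 0 < s) {h : ℕ} (hLh : L ≤ 2 ^ h) (t : ℕ) :
    ∃ N, ∀ n ≥ N, ∃ g : (Fin n → Bool) → Bool, t ≤ adegq (lift g) ∧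
      adegq (lift g) ≤ (2 * h + 2) * ((Nat.sqrt (2 * h * M + 1) + 1) * s) + t ∧
      L ≤ 40 * Qq (lift g) := by
  have := Fintype.ofFinite I
  choose Y P hY hP _ chk hM hdeg hchk using hC
  have hcert : ∀ b x, ∃ y : Y b → Bool, F x = b → ∀ p, chk b p (Sum.elim x y) = true := by
    intro b x
    by_cases hx : F x = b
    · exact ((hchk b x).1 hx).imp fun _ hy _ => hy
    · exact ⟨fun _ => false, fun h => absurd h hx⟩
  choose cert hcert using hcert
  exact ⟨_, fun n hn => exists_le_adegq_lift (hF.certCheatSheet hL hcert hLh) hL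
    (approxDegreeLE_certCheatSheet hM hs hdeg fun b x y hy => (hchk b x).2 ⟨y, hy⟩) hn⟩

end CheatSheet

/-! ### Choice of parameters -/

lemma eventually_eval_le_two_pow (p : Polynomial ℕ) : ∀ᶠ a : ℕ in Filter.atTop,
    p.eval a ≤ 2 ^ a := by
  have hmonomial (i : ℕ) :
      (fun a : ℕ => (p.coeff i : ℝ) * (a : ℝ) ^ i) =o[Filter.atTop] fun a => (2 : ℝ) ^ a :=
    (isLittleO_pow_const_const_pow_of_one_lt i one_lt_two).const_mul_left _
  have hp : (fun a : ℕ => ((p.eval a : ℕ) : ℝ)) =o[Filter.atTop] fun a : ℕ => (2 : ℝ) ^ a := by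
    simp only [Polynomial.eval_eq_sum_range, Nat.cast_sum, Nat.cast_mul, Nat.cast_pow]
    exact Asymptotics.IsLittleO.fun_sum fun i _ => hmonomial i
  filter_upwards [hp.def one_pos] with a ha
  rw [one_mul, Real.norm_natCast, norm_pow, Real.norm_ofNat] at ha
  exact_mod_cast ha

lemma sqrt_mul_sq_add_one_le {c x y : ℕ} (hc : c + 2 ≤ x) (hy : 0 < y) :
    Nat.sqrt (c * y ^ 2 + 1) + 1 ≤ x ^ 2 * y := by
  have hsq : c * y ^ 2 + 1 ≤ (x * y) ^ 2 :=
    calc c * y ^ 2 + 1 ≤ (c + 1) * y ^ 2 := by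
          rw [add_one_mul]
          gcongr
          exact Nat.one_le_pow _ _ hy
      _ ≤ x ^ 2 * y ^ 2 := by
          gcongr
          exact (Nat.le_of_succ_le hc).trans (Nat.le_self_pow two_ne_zero x)
      _ = (x * y) ^ 2 := (mul_pow x y 2).symm
  calc Nat.sqrt (c * y ^ 2 + 1) + 1 ≤ x * y + x * y := by
        gcongr
        · exact (Nat.sqrt_le_sqrt hsq).trans (Nat.sqrt_eq' _).le
        · exact Nat.mul_pos (by omega) hy
    _ = 2 * (x * y) := (two_mul _).symm
    _ ≤ x * (x * y) := by gcongr; omega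
    _ = x ^ 2 * y := by ring

lemma degree_le_pow {κ h u t x : ℕ} (hκ : 1 + 4 * κ ≤ x) (hh : 2 * h + 2 ≤ x) (hu : u ≤ x)
    (ht : t ≤ x) :
    (2 * h + 2) * ((Nat.sqrt (2 * h * (u * x ^ (2 * κ + 1)) ^ (2 * κ) + 1) + 1) *
      (1 + 2 * (2 * κ) * (u * x ^ (2 * κ + 1)))) + t ≤ x ^ (2 * κ ^ 2 + 4 * κ + 7) := by
  have hx : 0 < x := by omega
  have hux : u * x ^ (2 * κ + 1) ≤ x ^ (2 * κ + 2) := by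
    rw [pow_succ' x (2 * κ + 1)]
    gcongr
  have hsqrt : Nat.sqrt (2 * h * (u * x ^ (2 * κ + 1)) ^ (2 * κ) + 1) + 1 ≤
      x ^ 2 * x ^ ((2 * κ + 2) * κ) := by
    have hM : (u * x ^ (2 * κ + 1)) ^ (2 * κ) ≤ (x ^ ((2 * κ + 2) * κ)) ^ 2 :=
      (Nat.pow_le_pow_left hux _).trans_eq (by ring)
    refine le_trans ?_ (sqrt_mul_sq_add_one_le hh (pow_pos hx _))
    exact Nat.succ_le_succ (Nat.sqrt_le_sqrt (Nat.succ_le_succ (Nat.mul_le_mul_left _ hM)))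
  have hcheck : 1 + 2 * (2 * κ) * (u * x ^ (2 * κ + 1)) ≤ x * x ^ (2 * κ + 2) :=
    calc 1 + 2 * (2 * κ) * (u * x ^ (2 * κ + 1))
        ≤ x ^ (2 * κ + 2) + 2 * (2 * κ) * x ^ (2 * κ + 2) := by
          gcongr
          exact Nat.one_le_pow _ _ hx
      _ = (1 + 4 * κ) * x ^ (2 * κ + 2) := by ring
      _ ≤ x * x ^ (2 * κ + 2) := by gcongr
  calc _ ≤ x * (x ^ 2 * x ^ ((2 * κ + 2) * κ) * (x * x ^ (2 * κ + 2))) + x := by gcongr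
    _ = x ^ (2 * κ ^ 2 + 4 * κ + 6) + x := by ring
    _ ≤ x ^ (2 * κ ^ 2 + 4 * κ + 6) + x ^ (2 * κ ^ 2 + 4 * κ + 6) := by
        gcongr
        exact Nat.le_self_pow (by omega) x
    _ = 2 * x ^ (2 * κ ^ 2 + 4 * κ + 6) := (two_mul _).symm
    _ ≤ x * x ^ (2 * κ ^ 2 + 4 * κ + 6) := by gcongr; omega
    _ = x ^ (2 * κ ^ 2 + 4 * κ + 7) := (pow_succ' x _).symm

lemma exists_lift_pow_le_qq {κ : ℕ} (hκ : 0 < κ) (t : ℕ) :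
    ∃ x > 0, ∃ N, ∀ n ≥ N, ∃ g : (Fin n → Bool) → Bool, t ≤ adegq (lift g) ∧
      adegq (lift g) ≤ x ^ (2 * κ ^ 2 + 4 * κ + 7) ∧ x ^ (8 * κ ^ 2 - 1) ≤ Qq (lift g) := by
  obtain ⟨a, ha⟩ : ∃ a : ℕ, (1 + 4 * κ) + (2 * (8 * κ ^ 2 * a) + 2) +
      2 * (2 * κ) ^ 2 * (1 + a * ((2 * κ + 1) * (2 * κ))) ^ 2 + t +
      40 * (4 * κ) ^ (4 * κ) ≤ 2 ^ a := by
    let p (κ' t' X : Polynomial ℕ) : Polynomial ℕ :=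
      (1 + 4 * κ') + (2 * (8 * κ' ^ 2 * X) + 2) +
        2 * (2 * κ') ^ 2 * (1 + X * ((2 * κ' + 1) * (2 * κ'))) ^ 2 + t' +
        40 * (4 * κ') ^ (4 * κ)
    simpa [p] using (eventually_eval_le_two_pow (p κ t Polynomial.X)).exists
  set x := 2 ^ a with hx_def
  have hx : 0 < x := Nat.two_pow_pos a
  have hκ' : (1 : ℝ) ≤ 4 * κ := by exact_mod_cast (by omega : 1 ≤ 4 * κ)
  obtain ⟨I, _, F, hF, hC⟩ := exists_hasAdversary_hasCert (k := 2 * κ) (m := x)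
    (w := 1 + a * ((2 * κ + 1) * (2 * κ))) (by omega) hx (by omega)
    (by rw [hx_def, ← pow_mul, pow_add, pow_one]) (2 * κ)
  have hL : ((x : ℝ) ^ (2 * κ) / (2 * (2 * κ : ℕ))) ^ (2 * (2 * κ)) =
      (x : ℝ) ^ (8 * κ ^ 2) / (4 * κ) ^ (4 * κ) := by
    rw [div_pow, ← pow_mul]
    push_cast
    ring_nf
  rw [hL] at hF
  have hLh : (x : ℝ) ^ (8 * κ ^ 2) / (4 * κ) ^ (4 * κ) ≤ 2 ^ (8 * κ ^ 2 * a) := by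
    refine (div_le_self (by positivity) (one_le_pow₀ hκ')).trans (le_of_eq ?_)
    rw [hx_def, Nat.cast_pow, Nat.cast_ofNat, ← pow_mul, mul_comm a]
  obtain ⟨N, hN⟩ := exists_lift_of_hasCert hF (by positivity) hC (by omega) hLh t
  refine ⟨x, hx, N, fun n hn => ?_⟩
  obtain ⟨g, ht, hdeg, hQ⟩ := hN n hn
  refine ⟨g, ht, hdeg.trans (degree_le_pow (by omega) (by omega) (by omega) (by omega)), ?_⟩
  rw [div_le_iff₀ (by positivity)] at hQ
  have hQ' : x ^ (8 * κ ^ 2) ≤ 40 * Qq (lift g) * (4 * κ) ^ (4 * κ) := by exact_mod_cast hQ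
  refine Nat.le_of_mul_le_mul_right ?_ hx
  calc x ^ (8 * κ ^ 2 - 1) * x = x ^ (8 * κ ^ 2) := pow_sub_one_mul (by positivity) x
    _ ≤ Qq (lift g) * (40 * (4 * κ) ^ (4 * κ)) := hQ'.trans_eq (by ring)
    _ ≤ Qq (lift g) * x := by gcongr; omega

lemma exists_lift_rpow_le_qq {δ : ℝ} (hδ : 0 < δ) (hδ' : δ ≤ 4) (t : ℕ) :
    ∃ N, ∀ n ≥ N, ∃ g : (Fin n → Bool) → Bool, t ≤ adegq (lift g) ∧
      (adegq (lift g) : ℝ) ^ (4 - δ) ≤ Qq (lift g) := by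
  obtain ⟨κ, hκ⟩ := exists_nat_gt (45 / (2 * δ))
  have hκ₀ : 0 < κ := by
    have : (0 : ℝ) < κ := lt_trans (by positivity) hκ
    exact_mod_cast this
  obtain ⟨x, hx, N, hN⟩ := exists_lift_pow_le_qq hκ₀ t
  refine ⟨N, fun n hn => ?_⟩
  obtain ⟨g, ht, hdeg, hQ⟩ := hN n hn
  have hexp : ((2 * κ ^ 2 + 4 * κ + 7 : ℕ) : ℝ) * (4 - δ) ≤ (8 * κ ^ 2 - 1 : ℕ) := by
    have hκ₁ : (1 : ℝ) ≤ κ := by exact_mod_cast hκ₀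
    rw [div_lt_iff₀ (by positivity)] at hκ
    rw [Nat.cast_sub (by nlinarith)]
    push_cast
    nlinarith
  refine ⟨g, ht, ?_⟩
  calc (adegq (lift g) : ℝ) ^ (4 - δ)
      ≤ ((x : ℝ) ^ (2 * κ ^ 2 + 4 * κ + 7)) ^ (4 - δ) :=
        Real.rpow_le_rpow (Nat.cast_nonneg _) (by exact_mod_cast hdeg) (by linarith)
    _ = (x : ℝ) ^ (((2 * κ ^ 2 + 4 * κ + 7 : ℕ) : ℝ) * (4 - δ)) := by
        rw [Real.rpow_mul (Nat.cast_nonneg _), Real.rpow_natCast]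
    _ ≤ (x : ℝ) ^ (((8 * κ ^ 2 - 1 : ℕ) : ℝ)) :=
        Real.rpow_le_rpow_of_exponent_le (by exact_mod_cast hx) hexp
    _ = ((x ^ (8 * κ ^ 2 - 1) : ℕ) : ℝ) := by rw [Real.rpow_natCast, Nat.cast_pow]
    _ ≤ Qq (lift g) := by exact_mod_cast hQ

lemma adegq_lift_false (n : ℕ) : adegq (lift fun _ : Fin n → Bool => false) = 0 :=
  Nat.le_zero.1 (adegq_lift_le ⟨_, CubeDegreeLE.const 0, fun z => by norm_num [bit]⟩)

lemma exists_tendsto_atTop_le (N : ℕ → ℕ) : ∃ J : ℕ → ℕ,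
    Filter.Tendsto J Filter.atTop Filter.atTop ∧ ∀ n ≥ N 0, N (J n) ≤ n := by
  refine ⟨fun n => Nat.findGreatest (fun j => N j ≤ n) n, Filter.tendsto_atTop.2 fun j => ?_,
    fun n hn => Nat.findGreatest_spec (P := fun j => N j ≤ n) (Nat.zero_le n) hn⟩
  filter_upwards [Filter.eventually_ge_atTop (max j (N j))] with n hn
  exact Nat.le_findGreatest (le_of_max_le_left hn) (le_of_max_le_right hn)

end QC

/-- There is a family of total Boolean functions with
`Q(f) ≥ adeg(f)^{4 - o(1)}`. -/
theorem quantum_vs_approx_degree_power_four :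
    ∃ f : ∀ n : ℕ, QC.PartialFn (Fin n) (fun _ => 2),
      (∀ n, QC.TotalFn (f n)) ∧
      Filter.Tendsto (fun n => QC.adegq (f n)) Filter.atTop Filter.atTop ∧
      ∃ ε : ℕ → ℝ, Filter.Tendsto ε Filter.atTop (nhds 0) ∧
        ∀ n : ℕ, (QC.adegq (f n) : ℝ) ^ ((4 : ℝ) - ε n) ≤ (QC.Qq (f n) : ℝ) := by
  have hδ : ∀ j : ℕ, (1 : ℝ) / (j + 1) ≤ 1 := fun j =>
    div_le_one_of_le₀ (by simp) (by positivity)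
  choose N hN using fun j : ℕ => QC.exists_lift_rpow_le_qq (δ := 1 / ((j : ℝ) + 1))
    Nat.one_div_pos_of_nat (by linarith [hδ j]) j
  obtain ⟨J, hJ, hNJ⟩ := QC.exists_tendsto_atTop_le N
  have hg : ∀ n, ∃ g : (Fin n → Bool) → Bool, (N 0 ≤ n → J n ≤ QC.adegq (QC.lift g)) ∧
      (QC.adegq (QC.lift g) : ℝ) ^ ((4 : ℝ) - 1 / ((J n : ℝ) + 1)) ≤ QC.Qq (QC.lift g) := by
    intro n
    by_cases hn : N 0 ≤ n
    · exact (hN (J n) n (hNJ n hn)).imp fun g hg => ⟨fun _ => hg.1, hg.2⟩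
    · refine ⟨fun _ => false, fun h => absurd h hn, ?_⟩
      rw [QC.adegq_lift_false, Nat.cast_zero, Real.zero_rpow (by linarith [hδ (J n)])]
      exact Nat.cast_nonneg _
  choose g hdeg hQ using hg
  exact ⟨fun n => QC.lift (g n), fun _ _ => Option.some_ne_none _,
    Filter.tendsto_atTop_mono' _ (Filter.eventually_atTop.2 ⟨N 0, hdeg⟩) hJ,
    fun n => 1 / ((J n : ℝ) + 1), tendsto_one_div_add_atTop_nhds_zero_nat.comp hJ, hQ⟩
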